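/- arXiv:1209.1237 — 2 statements merged into one kernel-verified Lean document; each statement's English description precedes it below -/
import Mathlib

section
/- Let k be an algebraically closed field of characteristic 0. The nullcone N_8 of the space V_8 of binary octavics equals the common zero set of J_2, J_3, J_4, J_5, J_6, J_7: a binary octavic f lies in N_8 (i.e. every homogeneous SL_2(k)-invariant of positive degree vanishes at f) if and only if J_2(f) = J_3(f) = J_4(f) = J_5(f) = J_6(f) = J_7(f) = 0. -/
noncomputable section

open MvPolynomial


/-- the generic binary form of degree d, with coefficients the variables A_0, ..., A_d -/
def genForm (k : Type*) [Field k] (d : ℕ) :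
    MvPolynomial (Fin 2) (MvPolynomial (Fin (d + 1)) k) :=
  ∑ i : Fin (d + 1), C (X i) * X 0 ^ (i : ℕ) * X 1 ^ (d - (i : ℕ))

/-- the generic binary form after the substitution (X,Y) ↦ (aX+bY, cX+dY) -/
def substGen (k : Type*) [Field k] (d : ℕ) (g : Matrix (Fin 2) (Fin 2) k) :
    MvPolynomial (Fin 2) (MvPolynomial (Fin (d + 1)) k) :=
  aeval (fun i : Fin 2 => C (C (g i 0)) * X 0 + C (C (g i 1)) * X 1) (genForm k d)

/-- the i-th coefficient of the transformed generic binary form, as a polynomial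
in the coefficients A_0, ..., A_d -/
def actPoly (k : Type*) [Field k] (d : ℕ) (g : Matrix (Fin 2) (Fin 2) k) :
    Fin (d + 1) → MvPolynomial (Fin (d + 1)) k := fun i =>
  coeff (Finsupp.single (0 : Fin 2) (i : ℕ) + Finsupp.single (1 : Fin 2) (d - (i : ℕ)))
    (substGen k d g)

/-- the action I ↦ I^g on the coordinate ring k[A_0,...,A_d], given by
(I^g)(f) = I(g(f)) -/
def actHom (k : Type*) [Field k] (d : ℕ) (g : Matrix (Fin 2) (Fin 2) k) :
    MvPolynomial (Fin (d + 1)) k →ₐ[k] MvPolynomial (Fin (d + 1)) k :=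
  aeval (actPoly k d g)

/-- the ring R_d of SL_2(k)-invariants in k[A_0,...,A_d] -/
def invariantRing (k : Type*) [Field k] (d : ℕ) :
    Subalgebra k (MvPolynomial (Fin (d + 1)) k) :=
  ⨅ g : Matrix.SpecialLinearGroup (Fin 2) k,
    AlgHom.equalizer (actHom k d (g : Matrix (Fin 2) (Fin 2) k)) (AlgHom.id k _)

/-- the nullcone N_d: the common zero set of all homogeneous invariants of positive degree -/
def nullcone (k : Type*) [Field k] (d : ℕ) : Set (Fin (d + 1) → k) :=
  {a | ∀ I ∈ invariantRing k d, ∀ n : ℕ, 0 < n → I.IsHomogeneous n → eval a I = 0}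


variable {k : Type*} [Field k]

/-- char k not in {2,3,5,7} -/
def CharOK (k : Type*) [Field k] : Prop :=
  ringChar k ≠ 2 ∧ ringChar k ≠ 3 ∧ ringChar k ≠ 5 ∧ ringChar k ≠ 7

/-- the r-th transvectant of binary forms f, g of degrees n and m -/
def transvectant (n m r : ℕ) (f g : MvPolynomial (Fin 2) k) : MvPolynomial (Fin 2) k :=
  C ((((m - r).factorial * (n - r).factorial : ℕ) : k) /
      ((n.factorial * m.factorial : ℕ) : k)) *
    ∑ j ∈ Finset.range (r + 1),
      C ((-1 : k) ^ j * (r.choose j : k)) *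
        ((fun p => pderiv (0 : Fin 2) p)^[r - j] ((fun p => pderiv (1 : Fin 2) p)^[j] f)) *
        ((fun p => pderiv (0 : Fin 2) p)^[j] ((fun p => pderiv (1 : Fin 2) p)^[r - j] g))

/-- the binary octavic with coefficient vector a -/
def octForm (a : Fin 9 → k) : MvPolynomial (Fin 2) k :=
  ∑ i : Fin 9, C (a i) * X 0 ^ (i : ℕ) * X 1 ^ (8 - (i : ℕ))

def covg (a : Fin 9 → k) := transvectant 8 8 4 (octForm a) (octForm a)
def covk (a : Fin 9 → k) := transvectant 8 8 6 (octForm a) (octForm a)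
def covh (a : Fin 9 → k) := transvectant 4 4 2 (covk a) (covk a)
def covm (a : Fin 9 → k) := transvectant 8 4 4 (octForm a) (covk a)
def covn (a : Fin 9 → k) := transvectant 8 4 4 (octForm a) (covh a)
def covp (a : Fin 9 → k) := transvectant 8 4 4 (covg a) (covk a)
def covq (a : Fin 9 → k) := transvectant 8 4 4 (covg a) (covh a)

def J2 (a : Fin 9 → k) : k :=
  (2 ^ 2 * 5 * 7 : k) * constantCoeff (transvectant 8 8 8 (octForm a) (octForm a))
def J3 (a : Fin 9 → k) : k :=
  ((2 ^ 4 * 5 ^ 2 * 7 ^ 3 : k) / 3) * constantCoeff (transvectant 8 8 8 (octForm a) (covg a))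
def J4 (a : Fin 9 → k) : k :=
  (2 ^ 9 * 3 * 7 ^ 4 : k) * constantCoeff (transvectant 4 4 4 (covk a) (covk a))
def J5 (a : Fin 9 → k) : k :=
  (2 ^ 9 * 5 * 7 ^ 5 : k) * constantCoeff (transvectant 4 4 4 (covm a) (covk a))
def J6 (a : Fin 9 → k) : k :=
  (2 ^ 14 * 3 ^ 2 * 7 ^ 6 : k) * constantCoeff (transvectant 4 4 4 (covk a) (covh a))
def J7 (a : Fin 9 → k) : k :=
  (2 ^ 14 * 3 * 5 * 7 ^ 7 : k) * constantCoeff (transvectant 4 4 4 (covm a) (covh a))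
def J8 (a : Fin 9 → k) : k :=
  (2 ^ 17 * 3 * 5 ^ 2 * 7 ^ 9 : k) * constantCoeff (transvectant 4 4 4 (covp a) (covh a))
def J9 (a : Fin 9 → k) : k :=
  (2 ^ 19 * 3 ^ 2 * 5 * 7 ^ 9 : k) * constantCoeff (transvectant 4 4 4 (covn a) (covh a))
def J10 (a : Fin 9 → k) : k :=
  (2 ^ 22 * 3 ^ 2 * 5 ^ 2 * 7 ^ 11 : k) * constantCoeff (transvectant 4 4 4 (covq a) (covh a))

def Jinv : ℕ → (Fin 9 → k) → k
  | 2 => J2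
  | 3 => J3
  | 4 => J4
  | 5 => J5
  | 6 => J6
  | 7 => J7
  | 8 => J8
  | 9 => J9
  | 10 => J10
  | _ => fun _ => 0

/-- action of a 2x2 matrix on binary forms by substitution (X,Y) ↦ (aX+bY, cX+dY) -/
def substForm (g : Matrix (Fin 2) (Fin 2) k) (p : MvPolynomial (Fin 2) k) :
    MvPolynomial (Fin 2) k :=
  aeval (fun i : Fin 2 => C (g i 0) * X 0 + C (g i 1) * X 1) p

/-- coefficients of the transformed octavic -/
def octAct (g : Matrix (Fin 2) (Fin 2) k) (a : Fin 9 → k) : Fin 9 → k := fun i =>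
  coeff (Finsupp.single (0 : Fin 2) (i : ℕ) + Finsupp.single (1 : Fin 2) (8 - (i : ℕ)))
    (substForm g (octForm a))

/-- binary form with binomially normalised coefficients -/
def bf (n : ℕ) (c : ℕ → k) : MvPolynomial (Fin 2) k :=
  ∑ i ∈ Finset.range (n + 1), C (c i * (n.choose i : k)) * X 0 ^ i * X 1 ^ (n - i)

lemma pderiv0_bf (n : ℕ) (c : ℕ → k) :
    pderiv (0 : Fin 2) (bf (n + 1) c) = C ((n + 1 : ℕ) : k) * bf n (fun i => c (i + 1)) := by
  unfold bf
  rw [map_sum, Finset.sum_range_succ', Finset.mul_sum]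
  have h0 : pderiv (0 : Fin 2) (C (c 0 * ((n + 1).choose 0 : k)) * X 0 ^ 0 * X 1 ^ (n + 1 - 0) :
      MvPolynomial (Fin 2) k) = 0 := by
    simp [pderiv_X]
  rw [h0, add_zero]
  refine Finset.sum_congr rfl fun i hi => ?_
  have h1 : ((n + 1).choose (i + 1) : k) * ((i + 1 : ℕ) : k) = ((n + 1 : ℕ) : k) * (n.choose i : k) := by
    rw [← Nat.cast_mul, ← Nat.cast_mul, Nat.add_one_mul_choose_eq n i]
  have h2 : n + 1 - (i + 1) = n - i := by omega
  rw [h2]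
  have h3 : pderiv (0 : Fin 2) (C (c (i + 1) * ((n + 1).choose (i + 1) : k)) * X 0 ^ (i + 1)
      * X 1 ^ (n - i) : MvPolynomial (Fin 2) k) =
      C (c (i + 1) * (((n + 1).choose (i + 1) : k) * ((i + 1 : ℕ) : k))) * X 0 ^ i
      * X 1 ^ (n - i) := by
    simp [pderiv_X, Derivation.leibniz, Derivation.leibniz_pow]
    ring
  rw [h3, h1]
  simp only [map_mul]
  ring

lemma pderiv1_bf (n : ℕ) (c : ℕ → k) :
    pderiv (1 : Fin 2) (bf (n + 1) c) = C ((n + 1 : ℕ) : k) * bf n c := by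
  unfold bf
  rw [map_sum, Finset.sum_range_succ, Finset.mul_sum]
  have h0 : pderiv (1 : Fin 2) (C (c (n + 1) * ((n + 1).choose (n + 1) : k)) * X 0 ^ (n + 1)
      * X 1 ^ (n + 1 - (n + 1)) : MvPolynomial (Fin 2) k) = 0 := by
    simp [pderiv_X, Derivation.leibniz, Derivation.leibniz_pow]
  rw [h0, add_zero]
  refine Finset.sum_congr rfl fun i hi => ?_
  have hi' : i ≤ n := by simpa [Nat.lt_succ_iff] using hi
  have h2 : n + 1 - i = n - i + 1 := by omega
  have h1 : ((n + 1).choose i : k) * ((n - i + 1 : ℕ) : k) = ((n + 1 : ℕ) : k) * (n.choose i : k) := by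
    have := Nat.choose_mul_succ_eq n i
    rw [h2] at this
    rw [mul_comm ((n + 1 : ℕ) : k)]
    rw [← Nat.cast_mul, ← Nat.cast_mul, this]
  rw [h2]
  have h3 : pderiv (1 : Fin 2) (C (c i * ((n + 1).choose i : k)) * X 0 ^ i
      * X 1 ^ (n - i + 1) : MvPolynomial (Fin 2) k) =
      C (c i * (((n + 1).choose i : k) * ((n - i + 1 : ℕ) : k))) * X 0 ^ i
      * X 1 ^ (n - i) := by
    simp [pderiv_X, Derivation.leibniz, Derivation.leibniz_pow]
    ring
  rw [h3, h1]
  simp only [map_mul]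
  ring

lemma iter0_bf (p n : ℕ) (hp : p ≤ n) (c : ℕ → k) (u : k) :
    (fun q => pderiv (0 : Fin 2) q)^[p] (C u * bf n c) =
      C (u * (n.descFactorial p : k)) * bf (n - p) (fun i => c (i + p)) := by
  induction p with
  | zero => simp
  | succ p ih =>
    rw [Function.iterate_succ_apply', ih (by omega)]
    obtain ⟨m, hm⟩ : ∃ m, n - p = m + 1 := ⟨n - p - 1, by omega⟩
    have hm' : n - (p + 1) = m := by omega
    rw [hm, hm', Nat.descFactorial_succ, hm]
    simp only [Derivation.leibniz, pderiv_C, smul_eq_mul, pderiv0_bf]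
    rw [show (fun i => c (i + 1 + p)) = (fun i => c (i + (p + 1))) by
      funext i; congr 1; omega]
    push_cast
    simp only [map_mul]
    ring

lemma iter1_bf (p n : ℕ) (hp : p ≤ n) (c : ℕ → k) (u : k) :
    (fun q => pderiv (1 : Fin 2) q)^[p] (C u * bf n c) =
      C (u * (n.descFactorial p : k)) * bf (n - p) c := by
  induction p with
  | zero => simp
  | succ p ih =>
    rw [Function.iterate_succ_apply', ih (by omega)]
    obtain ⟨m, hm⟩ : ∃ m, n - p = m + 1 := ⟨n - p - 1, by omega⟩
    have hm' : n - (p + 1) = m := by omega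
    rw [hm, hm', Nat.descFactorial_succ, hm]
    simp only [Derivation.leibniz, pderiv_C, smul_eq_mul, pderiv1_bf]
    push_cast
    simp only [map_mul]
    ring

lemma iter01_bf (p q n : ℕ) (hp : p + q ≤ n) (c : ℕ → k) :
    (fun q => pderiv (0 : Fin 2) q)^[p] ((fun q => pderiv (1 : Fin 2) q)^[q] (bf n c)) =
      C (n.descFactorial (p + q) : k) * bf (n - (p + q)) (fun i => c (i + p)) := by
  have h1 := iter1_bf q n (by omega) c 1
  rw [map_one, one_mul, one_mul] at h1
  rw [h1, iter0_bf p (n - q) (by omega), Nat.sub_sub, add_comm q p]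
  congr 2
  rw [add_comm p q, ← Nat.cast_mul]
  congr 1
  rw [← Nat.descFactorial_mul_descFactorial (n := n) (k := q) (m := q + p) (by omega)]
  rw [mul_comm]; simp

lemma transvectant_bf [CharZero k] (n m r : ℕ) (hn : r ≤ n) (hm : r ≤ m) (c e : ℕ → k) :
    transvectant n m r (bf n c) (bf m e) =
      ∑ j ∈ Finset.range (r + 1), C ((-1 : k) ^ j * (r.choose j : k)) *
        bf (n - r) (fun i => c (i + (r - j))) * bf (m - r) (fun i => e (i + j)) := by
  unfold transvectant
  rw [Finset.mul_sum]
  refine Finset.sum_congr rfl fun j hj => ?_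
  have hj' : j ≤ r := by simpa [Nat.lt_succ_iff] using hj
  rw [iter01_bf (r - j) j n (by omega), iter01_bf j (r - j) m (by omega)]
  rw [show r - j + j = r by omega, show j + (r - j) = r by omega]
  have h1 : ((((m - r).factorial * (n - r).factorial : ℕ) : k) /
      ((n.factorial * m.factorial : ℕ) : k)) * (n.descFactorial r : k) * (m.descFactorial r : k)
      = 1 := by
    rw [← Nat.factorial_mul_descFactorial hn, ← Nat.factorial_mul_descFactorial hm]
    have a1 : ((n - r).factorial : k) ≠ 0 := by exact_mod_cast Nat.factorial_ne_zero _
    have a2 : ((m - r).factorial : k) ≠ 0 := by exact_mod_cast Nat.factorial_ne_zero _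
    have a3 : (n.descFactorial r : k) ≠ 0 := by
      rw [Nat.cast_ne_zero]; intro h; rw [Nat.descFactorial_eq_zero_iff_lt] at h; omega
    have a4 : (m.descFactorial r : k) ≠ 0 := by
      rw [Nat.cast_ne_zero]; intro h; rw [Nat.descFactorial_eq_zero_iff_lt] at h; omega
    push_cast
    field_simp
  have h2 := congrArg (C : k → MvPolynomial (Fin 2) k) h1
  simp only [map_mul, map_one] at h2 ⊢
  linear_combination (C ((-1 : k) ^ j) * C (r.choose j : k) *
        bf (n - r) (fun i => c (i + (r - j))) * bf (m - r) (fun i => e (i + j))) * h2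

open TensorProduct in
/-- the omega operator on `k[X,Y] ⊗ k[X,Y]` -/
def omegaA (k : Type*) [Field k] : Module.End k (MvPolynomial (Fin 2) k ⊗[k] MvPolynomial (Fin 2) k) :=
  TensorProduct.map (pderiv (0 : Fin 2)).toLinearMap (pderiv (1 : Fin 2)).toLinearMap
open TensorProduct in
def omegaB (k : Type*) [Field k] : Module.End k (MvPolynomial (Fin 2) k ⊗[k] MvPolynomial (Fin 2) k) :=
  TensorProduct.map ((-1 : k) • (pderiv (1 : Fin 2)).toLinearMap) (pderiv (0 : Fin 2)).toLinearMap

lemma pd_comm (p : MvPolynomial (Fin 2) k) :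
    pderiv (0 : Fin 2) (pderiv (1 : Fin 2) p) = pderiv (1 : Fin 2) (pderiv (0 : Fin 2) p) := by
  have h : ⁅pderiv (R := k) (0 : Fin 2), pderiv (R := k) (1 : Fin 2)⁆ = 0 := by
    apply MvPolynomial.derivation_ext
    intro i
    rw [Derivation.commutator_apply]
    fin_cases i <;> simp [pderiv_X]
  have := congrArg (fun D => D p) h
  simp only [Derivation.commutator_apply, Derivation.coe_zero, Pi.zero_apply] at this
  exact sub_eq_zero.mp this

lemma omega_comm (k : Type*) [Field k] : Commute (omegaA k) (omegaB k) := by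
  unfold Commute SemiconjBy
  ext x y
  simp [omegaA, omegaB, pd_comm]

lemma omegaA_pow (r : ℕ) (f g : MvPolynomial (Fin 2) k) :
    (omegaA k ^ r) (f ⊗ₜ[k] g) = ((fun p => pderiv (0 : Fin 2) p)^[r] f) ⊗ₜ[k]
      ((fun p => pderiv (1 : Fin 2) p)^[r] g) := by
  induction r with
  | zero => simp
  | succ r ih =>
    rw [pow_succ', Module.End.mul_apply, ih, Function.iterate_succ_apply',
      Function.iterate_succ_apply']
    simp [omegaA]

lemma omegaB_pow (r : ℕ) (f g : MvPolynomial (Fin 2) k) :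
    (omegaB k ^ r) (f ⊗ₜ[k] g) = (-1 : k) ^ r • ((fun p => pderiv (1 : Fin 2) p)^[r] f) ⊗ₜ[k]
      ((fun p => pderiv (0 : Fin 2) p)^[r] g) := by
  induction r with
  | zero => simp
  | succ r ih =>
    rw [pow_succ', Module.End.mul_apply, ih, Function.iterate_succ_apply',
      Function.iterate_succ_apply']
    simp only [omegaB, map_smul, TensorProduct.map_tmul, LinearMap.smul_apply,
      Derivation.coeFn_coe, ← TensorProduct.smul_tmul', smul_smul, pow_succ]

lemma iter_comm (p q : ℕ) (f : MvPolynomial (Fin 2) k) :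
    (fun p => pderiv (0 : Fin 2) p)^[p] ((fun p => pderiv (1 : Fin 2) p)^[q] f) =
    (fun p => pderiv (1 : Fin 2) p)^[q] ((fun p => pderiv (0 : Fin 2) p)^[p] f) := by
  have h : Function.Commute (fun p : MvPolynomial (Fin 2) k => pderiv (0 : Fin 2) p)
    (fun p => pderiv (1 : Fin 2) p) := fun x => pd_comm x
  exact (h.iterate_iterate p q) f

lemma transvectant_omega (n m r : ℕ) (f g : MvPolynomial (Fin 2) k) :
    transvectant n m r f g = C ((((m - r).factorial * (n - r).factorial : ℕ) : k) /
      ((n.factorial * m.factorial : ℕ) : k)) *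
      LinearMap.mul' k _ (((omegaA k + omegaB k) ^ r) (f ⊗ₜ[k] g)) := by
  unfold transvectant
  congr 1
  rw [add_comm (omegaA k), (omega_comm k).symm.add_pow, LinearMap.sum_apply, map_sum]
  refine Finset.sum_congr rfl fun j hj => ?_
  rw [Module.End.mul_apply, Module.End.natCast_apply, map_nsmul, map_nsmul, Module.End.mul_apply,
    omegaA_pow, omegaB_pow, map_smul,
    LinearMap.mul'_apply, smul_eq_C_mul, iter_comm, nsmul_eq_mul, map_mul, map_natCast]
  ring

/-- substitution as an algebra hom -/
def sub (g : Matrix (Fin 2) (Fin 2) k) : MvPolynomial (Fin 2) k →ₐ[k] MvPolynomial (Fin 2) k :=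
  aeval (fun i : Fin 2 => C (g i 0) * X 0 + C (g i 1) * X 1)

lemma sub_eq (g : Matrix (Fin 2) (Fin 2) k) (p) : substForm g p = sub g p := rfl

lemma pd_sub (g : Matrix (Fin 2) (Fin 2) k) (i : Fin 2) (p : MvPolynomial (Fin 2) k) :
    pderiv i (sub g p) = C (g 0 i) * sub g (pderiv 0 p) + C (g 1 i) * sub g (pderiv 1 p) := by
  induction p using MvPolynomial.induction_on with
  | C a =>
    have : sub g (C a) = C a := by simp [sub, algebraMap_eq]
    rw [this]; simp
  | add p q hp hq => simp only [map_add, hp, hq]; ring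
  | mul_X p j hp =>
    have hx : sub g (X j) = C (g j 0) * X 0 + C (g j 1) * X 1 := by simp [sub]
    have hx' : pderiv i (sub g (X j)) = C (g j i) := by
      rw [hx]; fin_cases i <;> simp [pderiv_X]
    simp only [map_mul, Derivation.leibniz, smul_eq_mul, hp, hx', map_add]
    fin_cases j <;> simp [pderiv_X] <;> ring

lemma omega_sub (g : Matrix (Fin 2) (Fin 2) k) (hg : g.det = 1) :
    (omegaA k + omegaB k) ∘ₗ TensorProduct.map (sub g).toLinearMap (sub g).toLinearMap =
    TensorProduct.map (sub g).toLinearMap (sub g).toLinearMap ∘ₗ (omegaA k + omegaB k) := by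
  apply TensorProduct.ext'
  intro x y
  rw [Matrix.det_fin_two] at hg
  simp only [omegaA, omegaB, LinearMap.comp_apply, LinearMap.add_apply, LinearMap.smul_apply, TensorProduct.map_tmul,
    AlgHom.toLinearMap_apply, Derivation.coeFn_coe, map_add, map_smul, pd_sub]
  simp only [← smul_eq_C_mul, TensorProduct.add_tmul, TensorProduct.tmul_add,
    ← TensorProduct.smul_tmul', TensorProduct.tmul_smul]
  generalize (sub g (pderiv 0 x)) ⊗ₜ[k] (sub g (pderiv 0 y)) = v1
  generalize (sub g (pderiv 0 x)) ⊗ₜ[k] (sub g (pderiv 1 y)) = v2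
  generalize (sub g (pderiv 1 x)) ⊗ₜ[k] (sub g (pderiv 0 y)) = v3
  generalize (sub g (pderiv 1 x)) ⊗ₜ[k] (sub g (pderiv 1 y)) = v4
  linear_combination (norm := module) hg • (v2 - v3)

lemma omega_sub_pow (g : Matrix (Fin 2) (Fin 2) k) (hg : g.det = 1) (r : ℕ) (t) :
    ((omegaA k + omegaB k) ^ r) (TensorProduct.map (sub g).toLinearMap (sub g).toLinearMap t) =
    TensorProduct.map (sub g).toLinearMap (sub g).toLinearMap (((omegaA k + omegaB k) ^ r) t) := by
  induction r generalizing t with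
  | zero => simp
  | succ r ih =>
    rw [pow_succ, Module.End.mul_apply, Module.End.mul_apply, ← ih]
    congr 1
    exact LinearMap.congr_fun (omega_sub g hg) t

lemma transvectant_sub (g : Matrix (Fin 2) (Fin 2) k) (hg : g.det = 1) (n m r : ℕ)
    (p q : MvPolynomial (Fin 2) k) :
    transvectant n m r (sub g p) (sub g q) = sub g (transvectant n m r p q) := by
  rw [transvectant_omega, transvectant_omega, map_mul]
  have : sub g p ⊗ₜ[k] sub g q =
    TensorProduct.map (sub g).toLinearMap (sub g).toLinearMap (p ⊗ₜ[k] q) := by simp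
  rw [this, omega_sub_pow g hg]
  congr 1
  · simp [sub, algebraMap_eq]
  · generalize ((omegaA k + omegaB k) ^ r) (p ⊗ₜ[k] q) = t
    induction t using TensorProduct.induction_on with
    | zero => simp
    | tmul x y => simp
    | add x y hx hy => simp only [map_add, hx, hy]

lemma coeff_octForm (b : Fin 9 → k) (i : Fin 9) :
    coeff (Finsupp.single (0 : Fin 2) (i : ℕ) + Finsupp.single (1 : Fin 2) (8 - (i : ℕ)))
      (octForm b) = b i := by
  unfold octForm
  rw [coeff_sum]
  rw [Finset.sum_eq_single i]
  · rw [mul_assoc, coeff_C_mul]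
    have : (X 0 ^ (i : ℕ) * X 1 ^ (8 - (i : ℕ)) : MvPolynomial (Fin 2) k) =
      monomial (Finsupp.single (0 : Fin 2) (i : ℕ) + Finsupp.single (1 : Fin 2) (8 - (i : ℕ))) 1 := by
      rw [X_pow_eq_monomial, X_pow_eq_monomial, monomial_mul, one_mul]
    rw [this, coeff_monomial, if_pos rfl, mul_one]
  · intro j _ hj
    rw [mul_assoc, coeff_C_mul]
    have : (X 0 ^ (j : ℕ) * X 1 ^ (8 - (j : ℕ)) : MvPolynomial (Fin 2) k) =
      monomial (Finsupp.single (0 : Fin 2) (j : ℕ) + Finsupp.single (1 : Fin 2) (8 - (j : ℕ))) 1 := by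
      rw [X_pow_eq_monomial, X_pow_eq_monomial, monomial_mul, one_mul]
    rw [this, coeff_monomial, if_neg, mul_zero]
    intro h
    apply hj
    have := DFunLike.congr_fun h 0
    simp at this
    exact Fin.ext this
  · simp

lemma octForm_hom (b : Fin 9 → k) : (octForm b).IsHomogeneous 8 := by
  unfold octForm
  apply IsHomogeneous.sum
  intro i _
  have h := ((isHomogeneous_C (Fin 2) (b i)).mul (isHomogeneous_X_pow (R := k) (0 : Fin 2) (i : ℕ))).mul
    (isHomogeneous_X_pow (R := k) (1 : Fin 2) (8 - (i : ℕ)))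
  convert h using 1
  omega

lemma sub_hom (g : Matrix (Fin 2) (Fin 2) k) (p : MvPolynomial (Fin 2) k)
    (hp : p.IsHomogeneous 8) : (sub g p).IsHomogeneous 8 := by
  have := hp.aeval (fun i : Fin 2 => (C (g i 0) * X 0 + C (g i 1) * X 1 : MvPolynomial (Fin 2) k))
    (n := 1) (fun i => ((isHomogeneous_C_mul_X _ _).add (isHomogeneous_C_mul_X _ _)))
  simpa [sub] using this

lemma eq_octForm (p : MvPolynomial (Fin 2) k) (hp : p.IsHomogeneous 8) :
    p = octForm (fun i : Fin 9 => coeff (Finsupp.single (0 : Fin 2) (i : ℕ) +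
      Finsupp.single (1 : Fin 2) (8 - (i : ℕ))) p) := by
  ext m
  by_cases hm : m.degree = 8
  · have h2 : m 0 + m 1 = 8 := by
      rw [← hm, Finsupp.degree_eq_sum]; simp
    have e : m = Finsupp.single (0 : Fin 2) (m 0) + Finsupp.single (1 : Fin 2) (8 - m 0) := by
      ext i
      fin_cases i
      · simp
      · simp; omega
    have := coeff_octForm (fun i : Fin 9 => coeff (Finsupp.single (0 : Fin 2) (i : ℕ) +
      Finsupp.single (1 : Fin 2) (8 - (i : ℕ))) p) ⟨m 0, by omega⟩
    simp only [← e] at this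
    exact this.symm
  · rw [hp.coeff_eq_zero hm, (octForm_hom _).coeff_eq_zero hm]

lemma sub_octForm (g : Matrix (Fin 2) (Fin 2) k) (a : Fin 9 → k) :
    sub g (octForm a) = octForm (octAct g a) :=
  eq_octForm _ (sub_hom g _ (octForm_hom a))

lemma eval_actPoly (g : Matrix (Fin 2) (Fin 2) k) (a : Fin 9 → k) (i : Fin 9) :
    eval a (actPoly k 8 g i) = octAct g a i := by
  unfold actPoly octAct
  rw [← coeff_map]
  congr 1
  simp [substGen, genForm, substForm, octForm, map_sum, algebraMap_eq]

lemma eval_actHom (g : Matrix (Fin 2) (Fin 2) k) (a : Fin 9 → k) (I : MvPolynomial (Fin 9) k) :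
    eval a (actHom k 8 g I) = eval (octAct g a) I := by
  unfold actHom
  rw [← coe_aeval_eq_eval, ← coe_aeval_eq_eval, AlgHom.coe_toRingHom, AlgHom.coe_toRingHom, 
    ← AlgHom.comp_apply, comp_aeval]
  congr 2
  funext i
  exact eval_actPoly g a i

lemma mem_inv (I : MvPolynomial (Fin 9) k) : I ∈ invariantRing k 8 ↔
    ∀ g : Matrix.SpecialLinearGroup (Fin 2) k, actHom k 8 (g : Matrix (Fin 2) (Fin 2) k) I = I := by
  simp [invariantRing, Algebra.mem_iInf, AlgHom.mem_equalizer]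

lemma nullcone_of_act (g : Matrix (Fin 2) (Fin 2) k) (hg : g.det = 1) (a : Fin 9 → k)
    (h : octAct g a ∈ nullcone k 8) : a ∈ nullcone k 8 := by
  intro I hI n hn hom
  have h1 := (mem_inv I).1 hI ⟨g, hg⟩
  rw [← h1]
  have h2 := eval_actHom g a I
  simp only at h2 ⊢
  rw [h2]
  exact h I hI n hn hom

lemma const_sub (g : Matrix (Fin 2) (Fin 2) k) (p : MvPolynomial (Fin 2) k) :
    constantCoeff (sub g p) = constantCoeff p := by
  induction p using MvPolynomial.induction_on with
  | C a => simp [sub, algebraMap_eq]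
  | add p q hp hq => simp only [map_add, hp, hq]
  | mul_X p j hp => simp [sub]

section inv
variable (g : Matrix (Fin 2) (Fin 2) k) (hg : g.det = 1) (a : Fin 9 → k)

lemma covg_act (hg : g.det = 1) : covg (octAct g a) = sub g (covg a) := by
  unfold covg; rw [← sub_octForm, transvectant_sub g hg]
lemma covk_act (hg : g.det = 1) : covk (octAct g a) = sub g (covk a) := by
  unfold covk; rw [← sub_octForm, transvectant_sub g hg]
lemma covh_act (hg : g.det = 1) : covh (octAct g a) = sub g (covh a) := by
  unfold covh; rw [covk_act g a hg, transvectant_sub g hg]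
lemma covm_act (hg : g.det = 1) : covm (octAct g a) = sub g (covm a) := by
  unfold covm; rw [← sub_octForm, covk_act g a hg, transvectant_sub g hg]

lemma J2_act (hg : g.det = 1) : J2 (octAct g a) = J2 a := by
  unfold J2; rw [← sub_octForm, transvectant_sub g hg, const_sub]
lemma J3_act (hg : g.det = 1) : J3 (octAct g a) = J3 a := by
  unfold J3; rw [← sub_octForm, covg_act g a hg, transvectant_sub g hg, const_sub]
lemma J4_act (hg : g.det = 1) : J4 (octAct g a) = J4 a := by
  unfold J4; rw [covk_act g a hg, transvectant_sub g hg, const_sub]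
lemma J5_act (hg : g.det = 1) : J5 (octAct g a) = J5 a := by
  unfold J5; rw [covm_act g a hg, covk_act g a hg, transvectant_sub g hg, const_sub]
lemma J6_act (hg : g.det = 1) : J6 (octAct g a) = J6 a := by
  unfold J6; rw [covk_act g a hg, covh_act g a hg, transvectant_sub g hg, const_sub]
lemma J7_act (hg : g.det = 1) : J7 (octAct g a) = J7 a := by
  unfold J7; rw [covm_act g a hg, covh_act g a hg, transvectant_sub g hg, const_sub]
end inv

/-- functions given by homogeneous polynomials -/
def HP (n : ℕ) (F : (Fin 9 → k) → k) : Prop :=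
  ∃ P : MvPolynomial (Fin 9) k, P.IsHomogeneous n ∧ ∀ a, eval a P = F a

/-- forms whose coefficients are given by homogeneous polynomials -/
def HF (n : ℕ) (F : (Fin 9 → k) → MvPolynomial (Fin 2) k) : Prop :=
  ∀ m, HP n (fun a => coeff m (F a))

lemma HP.add {n : ℕ} {F G : (Fin 9 → k) → k} (hF : HP n F) (hG : HP n G) :
    HP n (fun a => F a + G a) := by
  obtain ⟨P, hP, hP'⟩ := hF
  obtain ⟨Q, hQ, hQ'⟩ := hG
  exact ⟨P + Q, hP.add hQ, fun a => by simp [hP', hQ']⟩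

lemma HP.mul {n m : ℕ} {F G : (Fin 9 → k) → k} (hF : HP n F) (hG : HP m G) :
    HP (n + m) (fun a => F a * G a) := by
  obtain ⟨P, hP, hP'⟩ := hF
  obtain ⟨Q, hQ, hQ'⟩ := hG
  exact ⟨P * Q, hP.mul hQ, fun a => by simp [hP', hQ']⟩

lemma HP.const (c : k) : HP 0 (fun _ => c) :=
  ⟨C c, isHomogeneous_C _ _, fun a => by simp⟩

lemma HP.smul {n : ℕ} {F : (Fin 9 → k) → k} (c : k) (hF : HP n F) : HP n (fun a => c * F a) := by
  simpa using (HP.const c).mul hF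

lemma HP.sum {ι : Type*} {n : ℕ} (s : Finset ι) {F : ι → (Fin 9 → k) → k}
    (hF : ∀ i ∈ s, HP n (F i)) : HP n (fun a => ∑ i ∈ s, F i a) := by
  classical
  induction s using Finset.induction_on with
  | empty => exact ⟨0, isHomogeneous_zero _ _ _, fun a => by simp⟩
  | insert i s hi ih =>
    simp only [Finset.sum_insert hi]
    exact (hF i (Finset.mem_insert_self _ _)).add
      (ih fun j hj => hF j (Finset.mem_insert_of_mem hj))

lemma HF.sum {ι : Type*} {n : ℕ} (s : Finset ι) {F : ι → (Fin 9 → k) → MvPolynomial (Fin 2) k}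
    (hF : ∀ i ∈ s, HF n (F i)) : HF n (fun a => ∑ i ∈ s, F i a) := by
  intro m
  simp only [coeff_sum]
  exact HP.sum s fun i hi => hF i hi m

lemma HF.mul {n m : ℕ} {F G : (Fin 9 → k) → MvPolynomial (Fin 2) k} (hF : HF n F) (hG : HF m G) :
    HF (n + m) (fun a => F a * G a) := by
  classical
  intro d
  simp only [coeff_mul]
  exact HP.sum _ fun i _ => (hF i.1).mul (hG i.2)

lemma HF.smul {n : ℕ} {F : (Fin 9 → k) → MvPolynomial (Fin 2) k} (c : k) (hF : HF n F) :
    HF n (fun a => C c * F a) := by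
  intro d
  simp only [coeff_C_mul]
  exact (hF d).smul c

lemma HF.pd {n : ℕ} {F : (Fin 9 → k) → MvPolynomial (Fin 2) k} (i : Fin 2) (hF : HF n F) :
    HF n (fun a => pderiv i (F a)) := by
  intro d
  simp only [coeff_pderiv]
  have h := (hF (d + Finsupp.single i 1)).smul ((d i : k) + 1)
  simpa only [mul_comm] using h

lemma HF.iter {n : ℕ} {F : (Fin 9 → k) → MvPolynomial (Fin 2) k} (i : Fin 2) (r : ℕ) (hF : HF n F) :
    HF n (fun a => (fun p => pderiv i p)^[r] (F a)) := by
  induction r with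
  | zero => simpa using hF
  | succ r ih =>
    simp only [Function.iterate_succ_apply']
    exact ih.pd i

lemma HF.trans {n m : ℕ} {F G : (Fin 9 → k) → MvPolynomial (Fin 2) k} (u v r : ℕ)
    (hF : HF n F) (hG : HF m G) :
    HF (n + m) (fun a => transvectant u v r (F a) (G a)) := by
  unfold transvectant
  refine HF.smul _ (HF.sum _ fun j _ => HF.mul (HF.smul _ ?_) ?_)
  · exact (hF.iter _ _).iter _ _
  · exact (hG.iter _ _).iter _ _

lemma HF.oct : HF (k := k) 1 octForm := by
  unfold octForm
  refine HF.sum _ fun i _ => ?_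
  intro d
  refine ⟨C (coeff d (X 0 ^ (i : ℕ) * X 1 ^ (8 - (i : ℕ)) : MvPolynomial (Fin 2) k)) * X i,
    isHomogeneous_C_mul_X _ _, fun a => ?_⟩
  simp only
  rw [mul_assoc, coeff_C_mul]
  simp [mul_comm]

lemma HF.const {n : ℕ} {F : (Fin 9 → k) → MvPolynomial (Fin 2) k} (c : k) (hF : HF n F) :
    HP n (fun a => c * constantCoeff (F a)) := by
  simp only [constantCoeff_eq]
  exact (hF 0).smul c

lemma HF.g : HF (k := k) 2 covg := HF.oct.trans _ _ _ HF.oct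
lemma HF.kap : HF (k := k) 2 covk := HF.oct.trans _ _ _ HF.oct
lemma HF.h : HF (k := k) 4 covh := HF.kap.trans _ _ _ HF.kap
lemma HF.m : HF (k := k) 3 covm := HF.oct.trans _ _ _ HF.kap

lemma null_of [CharZero k] (n : ℕ) (hn : 0 < n) (F : (Fin 9 → k) → k) (hF : HP n F)
    (hinv : ∀ g : Matrix (Fin 2) (Fin 2) k, ∀ a, g.det = 1 → F (octAct g a) = F a)
    (a : Fin 9 → k) (ha : a ∈ nullcone k 8) : F a = 0 := by
  obtain ⟨P, hP, hP'⟩ := hF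
  rw [← hP' a]
  refine ha P ?_ n hn hP
  rw [mem_inv]
  intro g
  apply MvPolynomial.funext
  intro b
  have h2 := eval_actHom (g : Matrix (Fin 2) (Fin 2) k) b P
  refine h2.trans ?_
  rw [hP', hP']
  exact hinv _ _ g.2

lemma easy_dir [CharZero k] (a : Fin 9 → k) (ha : a ∈ nullcone k 8) :
    J2 a = 0 ∧ J3 a = 0 ∧ J4 a = 0 ∧ J5 a = 0 ∧ J6 a = 0 ∧ J7 a = 0 := by
  refine ⟨?_, ?_, ?_, ?_, ?_, ?_⟩
  · exact null_of 2 (by norm_num) J2 ((HF.oct.trans _ _ _ HF.oct).const _) (fun g a => J2_act g a) a ha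
  · exact null_of 3 (by norm_num) J3 ((HF.oct.trans _ _ _ HF.g).const _) (fun g a => J3_act g a) a ha
  · exact null_of 4 (by norm_num) J4 ((HF.kap.trans _ _ _ HF.kap).const _) (fun g a => J4_act g a) a ha
  · exact null_of 5 (by norm_num) J5 ((HF.m.trans _ _ _ HF.kap).const _) (fun g a => J5_act g a) a ha
  · exact null_of 6 (by norm_num) J6 ((HF.kap.trans _ _ _ HF.h).const _) (fun g a => J6_act g a) a ha
  · exact null_of 7 (by norm_num) J7 ((HF.m.trans _ _ _ HF.h).const _) (fun g a => J7_act g a) a ha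

lemma C_mul_bf (n : ℕ) (s : k) (c : ℕ → k) : C s * bf n c = bf n (fun i => s * c i) := by
  unfold bf
  rw [Finset.mul_sum]
  refine Finset.sum_congr rfl fun i _ => ?_
  simp only [map_mul]; ring

lemma sum_bf (n : ℕ) {ι : Type*} (s : Finset ι) (c : ι → ℕ → k) :
    ∑ j ∈ s, bf n (c j) = bf n (fun i => ∑ j ∈ s, c j i) := by
  unfold bf
  rw [Finset.sum_comm]
  refine Finset.sum_congr rfl fun i _ => ?_
  rw [← Finset.sum_mul, ← Finset.sum_mul, ← map_sum, ← Finset.sum_mul]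

lemma bf_congr (n : ℕ) (c e : ℕ → k) (h : ∀ i ≤ n, c i = e i) : bf n c = bf n e := by
  unfold bf
  refine Finset.sum_congr rfl fun i hi => ?_
  rw [h i (by simpa [Nat.lt_succ_iff] using hi)]

/-- normalised coefficients of a product -/
def conv (n m : ℕ) (c e : ℕ → k) (t : ℕ) : k :=
  (∑ i ∈ Finset.range (n + 1), ∑ j ∈ Finset.range (m + 1),
    if i + j = t then c i * (n.choose i : k) * (e j * (m.choose j : k)) else 0) /
      ((n + m).choose t : k)

lemma bf_mul [CharZero k] (n m : ℕ) (c e : ℕ → k) :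
    bf n c * bf m e = bf (n + m) (conv n m c e) := by
  unfold bf
  rw [Finset.sum_mul_sum]
  have h : ∀ t ∈ Finset.range (n + m + 1),
      (C (conv n m c e t * ((n + m).choose t : k)) * X 0 ^ t * X 1 ^ (n + m - t) :
        MvPolynomial (Fin 2) k) =
      ∑ i ∈ Finset.range (n + 1), ∑ j ∈ Finset.range (m + 1),
        if i + j = t then C (c i * (n.choose i : k)) * X 0 ^ i * X 1 ^ (n - i) *
          (C (e j * (m.choose j : k)) * X 0 ^ j * X 1 ^ (m - j)) else 0 := by
    intro t ht
    have ht' : t ≤ n + m := by simpa [Nat.lt_succ_iff] using ht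
    have h0 : ((n + m).choose t : k) ≠ 0 := by
      exact_mod_cast (Nat.choose_pos ht').ne'
    unfold conv
    rw [div_mul_cancel₀ _ h0, map_sum, Finset.sum_mul, Finset.sum_mul]
    refine Finset.sum_congr rfl fun i hi => ?_
    rw [map_sum, Finset.sum_mul, Finset.sum_mul]
    refine Finset.sum_congr rfl fun j hj => ?_
    have hi' : i ≤ n := by simpa [Nat.lt_succ_iff] using hi
    have hj' : j ≤ m := by simpa [Nat.lt_succ_iff] using hj
    split_ifs with hij
    · rw [← hij, show n + m - (i + j) = (n - i) + (m - j) by omega, pow_add, pow_add]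
      simp only [map_mul]
      ring
    · simp
  symm
  rw [Finset.sum_congr rfl h, Finset.sum_comm]
  refine Finset.sum_congr rfl fun i hi => ?_
  rw [Finset.sum_comm]
  refine Finset.sum_congr rfl fun j hj => ?_
  have hi' : i ≤ n := by simpa [Nat.lt_succ_iff] using hi
  have hj' : j ≤ m := by simpa [Nat.lt_succ_iff] using hj
  rw [Finset.sum_ite_eq, if_pos]
  rw [Finset.mem_range]; omega

/-- normalised coefficients of the transvectant -/
def trc (n m r : ℕ) (c e : ℕ → k) (t : ℕ) : k :=
  ∑ j ∈ Finset.range (r + 1), ((-1 : k) ^ j * (r.choose j : k)) *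
    conv (n - r) (m - r) (fun i => c (i + (r - j))) (fun i => e (i + j)) t

lemma trans_bf [CharZero k] (n m r : ℕ) (hn : r ≤ n) (hm : r ≤ m) (c e : ℕ → k) :
    transvectant n m r (bf n c) (bf m e) = bf (n - r + (m - r)) (trc n m r c e) := by
  rw [transvectant_bf n m r hn hm]
  simp only [mul_assoc, bf_mul]
  simp only [C_mul_bf, sum_bf]
  rfl

lemma const_bf (c : ℕ → k) : constantCoeff (bf 0 c) = c 0 := by
  simp [bf]

/-- full transvectant -/
def pair (n : ℕ) (c e : ℕ → k) : k :=
  ∑ j ∈ Finset.range (n + 1), ((-1 : k) ^ j * (n.choose j : k)) * (c (n - j) * e j)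

lemma const_trans [CharZero k] (n : ℕ) (c e : ℕ → k) :
    constantCoeff (transvectant n n n (bf n c) (bf n e)) = pair n c e := by
  rw [transvectant_bf n n n le_rfl le_rfl, map_sum]
  simp only [map_mul, Nat.sub_self, const_bf, constantCoeff_C, pair]
  refine Finset.sum_congr rfl fun j hj => ?_
  simp; ring

/-- octavic with normalised coefficients c -/
def vecOf (c : ℕ → k) : Fin 9 → k := fun i => c i * (Nat.choose 8 i : k)

lemma octForm_vecOf (c : ℕ → k) : octForm (vecOf c) = bf 8 c := by
  unfold octForm bf
  rw [Finset.sum_range]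
  rfl

lemma exists_vecOf [CharZero k] (a : Fin 9 → k) : ∃ c, a = vecOf c := by
  refine ⟨fun i => if h : i < 9 then a ⟨i, h⟩ / (Nat.choose 8 i : k) else 0, ?_⟩
  funext i
  have : (Nat.choose 8 i : k) ≠ 0 := by
    exact_mod_cast (Nat.choose_pos (by omega)).ne'
  simp [vecOf, this]

/-- coefficients of kappa -/
def kap (c : ℕ → k) : ℕ → k
  | 0 => 2*c 0*c 6 - 12*c 1*c 5 + 30*c 2*c 4 - 20*c 3^2
  | 1 => -5*c 1*c 6 + c 0*c 7 + 9*c 2*c 5 - 5*c 3*c 4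
  | 2 => (-8*c 2*c 6 - 2*c 1*c 7 + c 0*c 8 + 34*c 3*c 5 - 25*c 4^2) / 3
  | 3 => -5*c 2*c 7 + c 1*c 8 + 9*c 3*c 6 - 5*c 4*c 5
  | 4 => 2*c 2*c 8 - 12*c 3*c 7 + 30*c 4*c 6 - 20*c 5^2
  | _ => 0

lemma covk_vec [CharZero k] (c : ℕ → k) : covk (vecOf c) = bf 4 (kap c) := by
  unfold covk
  rw [octForm_vecOf, trans_bf 8 8 6 (by norm_num) (by norm_num)]
  apply bf_congr
  intro i hi
  have c82 : Nat.choose 4 2 = 6 := rfl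
  have c63 : Nat.choose 6 3 = 20 := rfl
  have c62 : Nat.choose 6 2 = 15 := rfl
  have c64 : Nat.choose 6 4 = 15 := rfl
  have c65 : Nat.choose 6 5 = 6 := rfl
  have c43 : Nat.choose 4 3 = 4 := rfl
  interval_cases i <;>
  · simp [trc, conv, kap, Finset.sum_range_succ, c82, c62, c63, c64, c65, c43]
    field_simp
    ring

/-- coefficients of the hessian of a quartic -/
def hes (x : ℕ → k) : ℕ → k
  | 0 => 2*(x 0*x 2 - x 1^2)
  | 1 => x 0*x 3 - x 1*x 2
  | 2 => (x 0*x 4 + 2*x 1*x 3 - 3*x 2^2)/3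
  | 3 => x 1*x 4 - x 2*x 3
  | 4 => 2*(x 2*x 4 - x 3^2)
  | _ => 0

lemma covh_vec [CharZero k] (c : ℕ → k) : covh (vecOf c) = bf 4 (hes (kap c)) := by
  unfold covh
  rw [covk_vec, trans_bf 4 4 2 (by norm_num) (by norm_num)]
  apply bf_congr
  intro i hi
  generalize kap c = x
  have c82 : Nat.choose 4 2 = 6 := rfl
  have c43 : Nat.choose 4 3 = 4 := rfl
  interval_cases i <;>
  · simp [trc, conv, hes, Finset.sum_range_succ, c82, c43]
    field_simp
    ring

/-- coefficients of m -/
def mco (c x : ℕ → k) (t : ℕ) : k :=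
  c (t+4) * x 0 - 4 * c (t+3) * x 1 + 6 * c (t+2) * x 2 - 4 * c (t+1) * x 3 + c t * x 4

lemma covm_vec [CharZero k] (c : ℕ → k) : covm (vecOf c) = bf 4 (mco c (kap c)) := by
  unfold covm
  rw [octForm_vecOf, covk_vec, trans_bf 8 4 4 (by norm_num) (by norm_num)]
  apply bf_congr
  intro i hi
  generalize kap c = x
  have c82 : Nat.choose 4 2 = 6 := rfl
  have c43 : Nat.choose 4 3 = 4 := rfl
  interval_cases i <;>
  · simp [trc, conv, mco, Finset.sum_range_succ, c82, c43]
    try field_simp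
    try ring

def j2f (c : ℕ → k) : k :=
  c 0*c 8 - 8*c 1*c 7 + 28*c 2*c 6 - 56*c 3*c 5 + 35*c 4^2
def j3f (c : ℕ → k) : k :=
  c 0*c 4*c 8 - 4*c 1*c 3*c 8 + 3*c 2^2*c 8 + 12*c 1*c 4*c 7 - 4*c 0*c 5*c 7
   - 8*c 2*c 3*c 7 - 22*c 2*c 4*c 6 - 8*c 1*c 5*c 6 + 3*c 0*c 6^2 + 24*c 3^2*c 6
   - 36*c 3*c 4*c 5 + 24*c 2*c 5^2 + 15*c 4^3

lemma J2_vec [CharZero k] (c : ℕ → k) (h : J2 (vecOf c) = 0) : j2f c = 0 := by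
  unfold J2 at h
  rw [octForm_vecOf, const_trans] at h
  have h2 := (mul_eq_zero.1 h).resolve_left (by norm_num)
  have c2 : Nat.choose 8 2 = 28 := rfl
  have c3 : Nat.choose 8 3 = 56 := rfl
  have c4 : Nat.choose 8 4 = 70 := rfl
  have c5 : Nat.choose 8 5 = 56 := rfl
  have c6 : Nat.choose 8 6 = 28 := rfl
  have c7 : Nat.choose 8 7 = 8 := rfl
  simp [pair, Finset.sum_range_succ, c2, c3, c4, c5, c6, c7] at h2
  unfold j2f
  linear_combination (1/2) * h2

lemma J3_vec [CharZero k] (c : ℕ → k) (h : J3 (vecOf c) = 0) : j3f c = 0 := by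
  unfold J3 covg at h
  rw [octForm_vecOf, trans_bf 8 8 4 (by norm_num) (by norm_num), const_trans] at h
  have h2 := (mul_eq_zero.1 h).resolve_left (by norm_num)
  have d2 : Nat.choose 4 2 = 6 := rfl
  have d3 : Nat.choose 4 3 = 4 := rfl
  have c2 : Nat.choose 8 2 = 28 := rfl
  have c3 : Nat.choose 8 3 = 56 := rfl
  have c4 : Nat.choose 8 4 = 70 := rfl
  have c5 : Nat.choose 8 5 = 56 := rfl
  have c6 : Nat.choose 8 6 = 28 := rfl
  have c7 : Nat.choose 8 7 = 8 := rfl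
  simp [pair, trc, conv, Finset.sum_range_succ, c2, c3, c4, c5, c6, c7, d2, d3] at h2
  unfold j3f
  linear_combination (1/6) * h2

lemma choose42 : Nat.choose 4 2 = 6 := rfl
lemma choose43 : Nat.choose 4 3 = 4 := rfl

lemma pair4 (c e : ℕ → k) : pair 4 c e = c 4 * e 0 - 4 * c 3 * e 1 + 6 * c 2 * e 2
    - 4 * c 1 * e 3 + c 0 * e 4 := by
  simp [pair, Finset.sum_range_succ, choose42, choose43]
  ring

lemma J4_vec [CharZero k] (c : ℕ → k) (h : J4 (vecOf c) = 0) :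
    kap c 0 * kap c 4 - 4 * kap c 1 * kap c 3 + 3 * kap c 2 ^ 2 = 0 := by
  unfold J4 at h
  rw [covk_vec, const_trans, pair4] at h
  have h2 := (mul_eq_zero.1 h).resolve_left (by norm_num)
  linear_combination (1/2) * h2

lemma J5_vec [CharZero k] (c : ℕ → k) (h : J5 (vecOf c) = 0) :
    pair 4 (mco c (kap c)) (kap c) = 0 := by
  unfold J5 at h
  rw [covm_vec, covk_vec, const_trans] at h
  exact (mul_eq_zero.1 h).resolve_left (by norm_num)

lemma J6_vec [CharZero k] (c : ℕ → k) (h : J6 (vecOf c) = 0) :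
    pair 4 (kap c) (hes (kap c)) = 0 := by
  unfold J6 at h
  rw [covh_vec, covk_vec, const_trans] at h
  exact (mul_eq_zero.1 h).resolve_left (by norm_num)

lemma J7_vec [CharZero k] (c : ℕ → k) (h : J7 (vecOf c) = 0) :
    pair 4 (mco c (kap c)) (hes (kap c)) = 0 := by
  unfold J7 at h
  rw [covm_vec, covh_vec, const_trans] at h
  exact (mul_eq_zero.1 h).resolve_left (by norm_num)

lemma vecOf_of_sub (g : Matrix (Fin 2) (Fin 2) k) (c c' : ℕ → k)
    (h : sub g (bf 8 c) = bf 8 c') : octAct g (vecOf c) = vecOf c' := by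
  rw [← octForm_vecOf, ← octForm_vecOf, sub_octForm] at h
  funext i
  rw [← coeff_octForm (octAct g (vecOf c)) i, h, coeff_octForm]

/-- shift Y to Y + s X -/
def tsh (s : k) (c : ℕ → k) (i : ℕ) : k :=
  ∑ j ∈ Finset.range (i + 1), (i.choose j : k) * s ^ (i - j) * c j

/-- X to Y, Y to -X -/
def wsh (n : ℕ) (c : ℕ → k) (i : ℕ) : k := (-1) ^ i * c (n - i)

lemma det_T (s : k) : (!![1, 0; s, 1] : Matrix (Fin 2) (Fin 2) k).det = 1 := by
  simp [Matrix.det_fin_two]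
lemma det_W : (!![0, 1; -1, 0] : Matrix (Fin 2) (Fin 2) k).det = 1 := by
  simp [Matrix.det_fin_two]

lemma sub_T (s : k) (c : ℕ → k) : sub !![1, 0; s, 1] (bf 8 c) = bf 8 (tsh s c) := by
  simp only [bf, tsh, Finset.sum_range_succ, Finset.sum_range_zero, zero_add, map_add, map_mul,
    map_pow]
  have hC : ∀ u : k, sub !![1, 0; s, 1] (C u) = C u := by intro u; simp [sub, algebraMap_eq]
  have h0 : sub !![1, 0; s, 1] (X 0) = X 0 := by simp [sub]
  have h1 : sub !![1, 0; s, 1] (X 1) = C s * X 0 + X 1 := by simp [sub]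
  simp only [hC, h0, h1, map_natCast]
  simp [Nat.choose]
  ring

lemma sub_W (c : ℕ → k) : sub !![0, 1; -1, 0] (bf 8 c) = bf 8 (wsh 8 c) := by
  simp only [bf, wsh, Finset.sum_range_succ, Finset.sum_range_zero, zero_add, map_add, map_mul,
    map_pow]
  have hC : ∀ u : k, sub !![0, 1; -1, 0] (C u) = C u := by intro u; simp [sub, algebraMap_eq]
  have h0 : sub (k := k) !![0, 1; -1, 0] (X 0) = X 1 := by simp [sub]
  have h1 : sub (k := k) !![0, 1; -1, 0] (X 1) = - X 0 := by simp [sub]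
  simp only [hC, h0, h1, map_natCast]
  simp [Nat.choose]
  ring

lemma kap_T [CharZero k] (s : k) (c : ℕ → k) (i : ℕ) (hi : i ≤ 4) :
    kap (tsh s c) i = tsh s (kap c) i := by
  interval_cases i <;>
  · simp [kap, tsh, Finset.sum_range_succ, Nat.choose]
    ring

lemma kap_W [CharZero k] (c : ℕ → k) (i : ℕ) (hi : i ≤ 4) :
    kap (wsh 8 c) i = wsh 4 (kap c) i := by
  interval_cases i <;>
  · simp [kap, wsh]
    ring

/-- all J vanish -/
def HJ (c : ℕ → k) : Prop := J2 (vecOf c) = 0 ∧ J3 (vecOf c) = 0 ∧ J4 (vecOf c) = 0 ∧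
  J5 (vecOf c) = 0 ∧ J6 (vecOf c) = 0 ∧ J7 (vecOf c) = 0

lemma HJ_sub (g : Matrix (Fin 2) (Fin 2) k) (hg : g.det = 1) (c c' : ℕ → k)
    (h : sub g (bf 8 c) = bf 8 c') (H : HJ c) : HJ c' := by
  unfold HJ
  rw [← vecOf_of_sub g c c' h, J2_act g _ hg, J3_act g _ hg, J4_act g _ hg, J5_act g _ hg,
    J6_act g _ hg, J7_act g _ hg]
  exact H

/-- being a nullform -/
def NN (c : ℕ → k) : Prop := vecOf c ∈ nullcone k 8

lemma HJ_T (s : k) (c : ℕ → k) (H : HJ c) : HJ (tsh s c) := HJ_sub _ (det_T s) _ _ (sub_T s c) H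
lemma HJ_W (c : ℕ → k) (H : HJ c) : HJ (wsh 8 c) := HJ_sub _ det_W _ _ (sub_W c) H

lemma NN_T (s : k) (c : ℕ → k) (H : NN (tsh s c)) : NN c := by
  apply nullcone_of_act _ (det_T s)
  rw [vecOf_of_sub _ _ _ (sub_T s c)]; exact H
lemma NN_W (c : ℕ → k) (H : NN (wsh 8 c)) : NN c := by
  apply nullcone_of_act _ det_W
  rw [vecOf_of_sub _ _ _ (sub_W c)]; exact H

lemma sub_D (t : k) (ht : t ≠ 0) (c : ℕ → k) (h0 : c 0 = 0) (h1 : c 1 = 0) (h2 : c 2 = 0)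
    (h3 : c 3 = 0) (h4 : c 4 = 0) :
    sub !![t, 0; 0, t⁻¹] (bf 8 c) = bf 8 (fun i => t ^ (2 * i - 8) * c i) := by
  simp only [bf, Finset.sum_range_succ, Finset.sum_range_zero, zero_add, map_add, map_mul,
    map_pow]
  have hC : ∀ u : k, sub !![t, 0; 0, t⁻¹] (C u) = C u := by intro u; simp [sub, algebraMap_eq]
  have hX0 : sub !![t, 0; 0, t⁻¹] (X 0) = C t * X 0 := by simp [sub]
  have hX1 : sub !![t, 0; 0, t⁻¹] (X 1) = C t⁻¹ * X 1 := by simp [sub]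
  have ht' : (C t * C t⁻¹ : MvPolynomial (Fin 2) k) = 1 := by
    rw [← map_mul, mul_inv_cancel₀ ht, map_one]
  simp only [hC, hX0, hX1, h0, h1, h2, h3, h4, map_natCast]
  generalize (C t : MvPolynomial (Fin 2) k) = T at *
  generalize (C t⁻¹ : MvPolynomial (Fin 2) k) = U at *
  have e5 : T ^ 5 * U ^ 3 = T ^ 2 := by
    calc T ^ 5 * U ^ 3 = T ^ 2 * (T * U) ^ 3 := by ring
      _ = _ := by rw [ht']; ring
  have e6 : T ^ 6 * U ^ 2 = T ^ 4 := by
    calc T ^ 6 * U ^ 2 = T ^ 4 * (T * U) ^ 2 := by ring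
      _ = _ := by rw [ht']; ring
  have e7 : T ^ 7 * U = T ^ 6 := by
    calc T ^ 7 * U = T ^ 6 * (T * U) := by ring
      _ = _ := by rw [ht']; ring
  simp [Nat.choose]
  linear_combination (C (c 5) * 56 * X 0 ^ 5 * X 1 ^ 3) * e5 + (C (c 6) * 28 * X 0 ^ 6 * X 1 ^ 2) * e6
    + (C (c 7) * 8 * X 0 ^ 7 * X 1) * e7

lemma NN_high [CharZero k] (c : ℕ → k) (h0 : c 0 = 0) (h1 : c 1 = 0) (h2 : c 2 = 0)
    (h3 : c 3 = 0) (h4 : c 4 = 0) : NN c := by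
  intro I hI n hn hom
  let q : Polynomial k := aeval (fun i : Fin 9 =>
    Polynomial.C (vecOf c i) * Polynomial.X ^ (2 * (i : ℕ) - 8)) I
  have hq : ∀ t : k, q.eval t = eval (fun i : Fin 9 => vecOf c i * t ^ (2 * (i : ℕ) - 8)) I := by
    intro t
    have : q.eval t = Polynomial.aeval t q := by simp [Polynomial.aeval_def]
    rw [this, ← AlgHom.comp_apply, comp_aeval, ← coe_aeval_eq_eval]
    simp
  have h5 : ∀ t : k, t ≠ 0 → q.eval t = eval (vecOf c) I := by
    intro t ht
    have hdet : (!![t, 0; 0, t⁻¹] : Matrix (Fin 2) (Fin 2) k).det = 1 := by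
      simp [Matrix.det_fin_two, ht]
    have e1 := (mem_inv I).1 hI ⟨_, hdet⟩
    have e2 := eval_actHom !![t, 0; 0, t⁻¹] (vecOf c) I
    simp only at e1
    rw [e1, vecOf_of_sub _ _ _ (sub_D t ht c h0 h1 h2 h3 h4)] at e2
    rw [e2, hq]
    congr 2
    funext i
    simp only [vecOf]; ring
  have h6 : q = Polynomial.C (eval (vecOf c) I) := by
    apply Polynomial.eq_of_infinite_eval_eq
    apply Set.Infinite.mono (s := {t : k | t ≠ 0})
    · intro t ht
      simp [h5 t ht]
    · exact (Set.finite_singleton (0 : k)).infinite_compl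
  have h7 : q.eval 0 = 0 := by
    rw [hq]
    have : (fun i : Fin 9 => vecOf c i * (0 : k) ^ (2 * (i : ℕ) - 8)) = 0 := by
      funext i
      fin_cases i <;> simp [vecOf, h0, h1, h2, h3, h4]
    rw [this]
    have := hom.coeff_eq_zero (d := 0) (by simpa using hn.ne)
    rw [← constantCoeff_eq] at this
    rw [← this]
    exact congrFun (congrArg DFunLike.coe (eval_zero (R := k) (σ := Fin 9))) I
  rw [h6, Polynomial.eval_C] at h7
  exact h7

lemma NN_low [CharZero k] (c : ℕ → k) (h4 : c 4 = 0) (h5 : c 5 = 0) (h6 : c 6 = 0)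
    (h7 : c 7 = 0) (h8 : c 8 = 0) : NN c := by
  apply NN_W
  apply NN_high <;> simp [wsh, *]

lemma tsh0 (s : k) (c : ℕ → k) : tsh s c 0 = c 0 := by simp [tsh]
lemma tsh1 (s : k) (c : ℕ → k) : tsh s c 1 = s * c 0 + c 1 := by
  simp [tsh, Finset.sum_range_succ]
lemma tsh2 (s : k) (c : ℕ → k) : tsh s c 2 = s ^ 2 * c 0 + 2 * s * c 1 + c 2 := by
  simp [tsh, Finset.sum_range_succ]
lemma tsh3 (s : k) (c : ℕ → k) :
    tsh s c 3 = s ^ 3 * c 0 + 3 * s ^ 2 * c 1 + 3 * s * c 2 + c 3 := by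
  simp [tsh, Finset.sum_range_succ, Nat.choose]
lemma tsh4 (s : k) (c : ℕ → k) :
    tsh s c 4 = s ^ 4 * c 0 + 4 * s ^ 3 * c 1 + 6 * s ^ 2 * c 2 + 4 * s * c 3 + c 4 := by
  simp [tsh, Finset.sum_range_succ, Nat.choose]

/-- the conditions of the final step -/
def HA (c : ℕ → k) : Prop := HJ c ∧ c 0 = 0 ∧ kap c 0 = 0 ∧ kap c 1 = 0 ∧ kap c 2 = 0 ∧ kap c 3 = 0

lemma HA_T [CharZero k] (s : k) (c : ℕ → k) (H : HA c) : HA (tsh s c) := by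
  obtain ⟨hJ, h0, k0, k1, k2, k3⟩ := H
  refine ⟨HJ_T s c hJ, ?_, ?_, ?_, ?_, ?_⟩
  · rw [tsh0, h0]
  · rw [kap_T _ _ _ (by norm_num), tsh0, k0]
  · rw [kap_T _ _ _ (by norm_num), tsh1, k0, k1]; ring
  · rw [kap_T _ _ _ (by norm_num), tsh2, k0, k1, k2]; ring
  · rw [kap_T _ _ _ (by norm_num), tsh3, k0, k1, k2, k3]; ring

lemma A1 [CharZero k] (c : ℕ → k) (H : HA c) (h1 : c 1 ≠ 0) (h3 : c 3 = 0) (h4 : c 4 = 0) :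
    NN c := by
  obtain ⟨hJ, h0, k0, k1, k2, k3⟩ := H
  simp only [kap, h0, h3, h4] at k0 k1 k2 k3
  have h5 : c 5 = 0 := by
    apply (mul_eq_zero.1 (show c 1 * c 5 = 0 by linear_combination (-1/12) * k0)).resolve_left h1
  rw [h5] at k1 k2 k3
  have h6 : c 6 = 0 := by
    apply (mul_eq_zero.1 (show c 1 * c 6 = 0 by linear_combination (-1/5) * k1)).resolve_left h1
  rw [h6] at k2 k3
  have h7 : c 7 = 0 := by
    apply (mul_eq_zero.1 (show c 1 * c 7 = 0 by linear_combination (-3/2) * k2)).resolve_left h1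
  rw [h7] at k3
  have h8 : c 8 = 0 := by
    apply (mul_eq_zero.1 (show c 1 * c 8 = 0 by linear_combination k3)).resolve_left h1
  exact NN_low c h4 h5 h6 h7 h8

lemma A2 [CharZero k] (c : ℕ → k) (H : HA c) (h1 : c 1 ≠ 0) (h2 : c 2 = 0) : NN c := by
  have hJ2 := J2_vec c H.1.1
  have H' := H
  obtain ⟨hJ, h0, k0, k1, k2, k3⟩ := H
  simp only [kap, h0, h2] at k0 k1 k2 k3
  simp only [j2f, h0, h2] at hJ2
  have e : 64 * c 3 ^ 3 + 27 * c 1 * c 4 ^ 2 = 0 := by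
    linear_combination (c 1 / 5) * hJ2 - (12/5) * c 1 * k2 - (16/5) * c 3 * k0
  by_cases h3 : c 3 = 0
  · have h4 : c 4 = 0 := by
      rw [h3] at e
      have : c 1 * c 4 ^ 2 = 0 := by linear_combination (1/27) * e
      simpa [h1] using this
    exact A1 c H' h1 h3 h4
  · apply NN_T (-(3/8) * c 4 / c 3)
    apply A1 _ (HA_T _ _ H')
    · rw [tsh1, h0]; simpa using h1
    · rw [tsh3, h0, h2]
      field_simp
      linear_combination (8 * c 3) * e
    · rw [tsh4, h0, h2]
      field_simp
      linear_combination (-32 * c 3 * c 4) * e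

lemma A3 [CharZero k] (c : ℕ → k) (H : HA c) (h1 : c 1 = 0) (h2 : c 2 ≠ 0) (h3 : c 3 = 0) :
    NN c := by
  have hJ3 := J3_vec c H.1.2.1
  obtain ⟨hJ, h0, k0, k1, k2, k3⟩ := H
  simp only [kap, h0, h1, h3] at k0 k1 k2 k3
  have h4 : c 4 = 0 := by
    apply (mul_eq_zero.1 (show c 2 * c 4 = 0 by linear_combination (1/30) * k0)).resolve_left h2
  rw [h4] at k1 k2 k3
  have h5 : c 5 = 0 := by
    apply (mul_eq_zero.1 (show c 2 * c 5 = 0 by linear_combination (1/9) * k1)).resolve_left h2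
  rw [h5] at k2 k3
  have h6 : c 6 = 0 := by
    apply (mul_eq_zero.1 (show c 2 * c 6 = 0 by linear_combination (-3/8) * k2)).resolve_left h2
  have h7 : c 7 = 0 := by
    apply (mul_eq_zero.1 (show c 2 * c 7 = 0 by linear_combination (-1/5) * k3)).resolve_left h2
  simp only [j3f, h0, h1, h3, h4, h5, h6, h7] at hJ3
  have h8 : c 8 = 0 := by
    have : c 2 ^ 2 * c 8 = 0 := by linear_combination (1/3) * hJ3
    simpa [h2] using this
  exact NN_low c h4 h5 h6 h7 h8

lemma lemA [CharZero k] (c : ℕ → k) (H : HA c) : NN c := by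
  by_cases h1 : c 1 = 0
  · by_cases h2 : c 2 = 0
    · obtain ⟨hJ, h0, k0, k1, k2, k3⟩ := H
      simp only [kap, h0, h1, h2] at k0 k2
      have h3 : c 3 = 0 := by
        have : c 3 ^ 2 = 0 := by linear_combination (-1/20) * k0
        simpa using this
      rw [h3] at k2
      have h4 : c 4 = 0 := by
        have : c 4 ^ 2 = 0 := by linear_combination (-3/25) * k2
        simpa using this
      exact NN_high c h0 h1 h2 h3 h4
    · apply NN_T (-(c 3) / (3 * c 2))
      have h0 := H.2.1
      apply A3 _ (HA_T _ _ H)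
      · rw [tsh1, h0, h1]; ring
      · rw [tsh2, h0, h1]; simpa using h2
      · rw [tsh3, h0, h1]; field_simp; ring
  · apply NN_T (-(c 2) / (2 * c 1))
    have h0 := H.2.1
    apply A2 _ (HA_T _ _ H)
    · rw [tsh1, h0]; simpa using h1
    · rw [tsh2, h0]; field_simp; ring

lemma lemB [CharZero k] (c : ℕ → k) (H : HJ c) (x0 : kap c 0 = 0) (x1 : kap c 1 = 0)
    (x2 : kap c 2 = 0) (x3 : kap c 3 ≠ 0) (x4 : kap c 4 = 0) : False := by
  have j2 := J2_vec c H.1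
  have j3 := J3_vec c H.2.1
  have j5 := J5_vec c H.2.2.2.1
  have j7 := J7_vec c H.2.2.2.2.2
  have h1 : c 1 = 0 := by
    simp only [pair4, mco, hes, x0, x1, x2, x4] at j7
    have : kap c 3 ^ 3 * c 1 = 0 := by linear_combination (1/8) * j7
    simpa [x3] using this
  have h2 : c 2 = 0 := by
    simp only [pair4, mco, x0, x1, x2, x4] at j5
    have : kap c 3 ^ 2 * c 2 = 0 := by linear_combination (1/16) * j5
    simpa [x3] using this
  simp only [kap, h1, h2] at x0 x1 x2 x3 x4
  simp only [j2f, h1, h2] at j2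
  simp only [j3f, h1, h2] at j3
  by_cases h0 : c 0 = 0
  · simp only [h0] at x0 x2
    have h3 : c 3 = 0 := by
      have : c 3 ^ 2 = 0 := by linear_combination (-1/20) * x0
      simpa using this
    rw [h3] at x2
    have h4 : c 4 = 0 := by
      have : c 4 ^ 2 = 0 := by linear_combination (-3/25) * x2
      simpa using this
    apply x3
    rw [h3, h4]; ring
  · have e6 : c 0 * c 6 = 10 * c 3 ^ 2 := by linear_combination (1/2) * x0
    have e7 : c 0 * c 7 = 5 * c 3 * c 4 := by linear_combination x1
    have e35 : 3 * (c 3 * c 5) = 2 * c 4 ^ 2 := by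
      linear_combination (1/30) * (3 * x2 - j2)
    have e8 : 3 * (c 0 * c 8) = 7 * c 4 ^ 2 := by
      linear_combination 9 * x2 - 34 * e35
    have r3 : c 0 * c 4 ^ 3 = 27 * c 3 ^ 4 := by
      linear_combination (-1/20) * (c 0 * j3 - (c 0 * c 4 / 3) * e8 + 4 * c 0 * c 5 * e7
        - 3 * (c 0 * c 6 + 10 * c 3 ^ 2) * e6 - 24 * c 3 ^ 2 * e6 + (56/3) * c 0 * c 4 * e35)
    apply x3
    by_cases h3 : c 3 = 0
    · rw [h3] at e35
      have h4 : c 4 = 0 := by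
        have : c 4 ^ 2 = 0 := by linear_combination (-1/2) * e35
        simpa using this
      rw [h3, h4]; ring
    · have h03 : c 0 * c 3 ≠ 0 := mul_ne_zero h0 h3
      apply (mul_eq_zero.1 (?_ : (c 0 * c 3) * _ = 0)).resolve_left h03
      linear_combination 9 * c 3 ^ 2 * e6 - (5/3) * c 0 * c 4 * e35 - (10/3) * r3

lemma exists_rt [IsAlgClosed k] (n : ℕ) (hn : 0 < n) (d : ℕ → k) (hd : d n ≠ 0) :
    ∃ s : k, ∑ i ∈ Finset.range (n + 1), d i * s ^ i = 0 := by
  let p : Polynomial k := ∑ i ∈ Finset.range (n + 1), Polynomial.C (d i) * Polynomial.X ^ i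
  have hc : p.coeff n = d n := by
    simp [p, Polynomial.coeff_X_pow]
  obtain ⟨s, hs⟩ := IsAlgClosed.exists_root p (by
    intro h
    apply hd
    rw [← hc]
    apply Polynomial.coeff_eq_zero_of_degree_lt
    rw [h]
    exact_mod_cast hn)
  refine ⟨s, ?_⟩
  simpa [p, Polynomial.IsRoot.def, Polynomial.eval_finsetSum] using hs

lemma exists_tsh [IsAlgClosed k] (n : ℕ) (hn : 0 < n) (c : ℕ → k) (h : c 0 ≠ 0) :
    ∃ s, tsh s c n = 0 := by
  obtain ⟨s, hs⟩ := exists_rt n hn (fun i => (n.choose (n - i) : k) * c (n - i)) (by simpa using h)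
  refine ⟨s, ?_⟩
  rw [← hs, tsh, ← Finset.sum_range_reflect]
  refine Finset.sum_congr rfl fun j hj => ?_
  have : j ≤ n := by simpa [Nat.lt_succ_iff] using hj
  rw [show n + 1 - 1 - j = n - j by omega, show n - (n - j) = j by omega]
  ring

lemma main_kap0 [IsAlgClosed k] [CharZero k] (c : ℕ → k) (H : HJ c) (x0 : kap c 0 = 0) : NN c := by
  have j4 := J4_vec c H.2.2.1
  have j6 := J6_vec c H.2.2.2.2.1
  by_cases x1 : kap c 1 = 0
  · rw [x0, x1] at j4
    have x2 : kap c 2 = 0 := by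
      have : kap c 2 ^ 2 = 0 := by linear_combination (1/3) * j4
      simpa using this
    by_cases x3 : kap c 3 = 0
    · by_cases x4 : kap c 4 = 0
      · by_cases h0 : c 0 = 0
        · exact lemA c ⟨H, h0, x0, x1, x2, x3⟩
        · obtain ⟨s, hs⟩ := exists_tsh 8 (by norm_num) c h0
          apply NN_T s
          apply NN_W
          apply lemA
          refine ⟨HJ_W _ (HJ_T _ _ H), ?_, ?_, ?_, ?_, ?_⟩
          · simp [wsh, hs]
          all_goals
            rw [kap_W _ _ (by norm_num), wsh, kap_T _ _ _ (by norm_num)]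
            simp [tsh1, tsh2, tsh3, tsh4, x0, x1, x2, x3, x4]
      · apply lemA c ⟨H, ?_, x0, x1, x2, x3⟩
        have j5 := J5_vec c H.2.2.2.1
        simp only [pair4, mco, x0, x1, x2, x3] at j5
        have : kap c 4 ^ 2 * c 0 = 0 := by linear_combination j5
        simpa [x4] using this
    · exfalso
      have T := fun i hi => kap_T (-(kap c 4) / (4 * kap c 3)) c i hi
      refine lemB _ (HJ_T (-(kap c 4) / (4 * kap c 3)) c H) ?_ ?_ ?_ ?_ ?_
      · rw [T _ (by norm_num), tsh0, x0]
      · rw [T _ (by norm_num), tsh1, x0, x1]; ring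
      · rw [T _ (by norm_num), tsh2, x0, x1, x2]; ring
      · rw [T _ (by norm_num), tsh3, x0, x1, x2]; simpa using x3
      · rw [T _ (by norm_num), tsh4, x0, x1, x2]; field_simp; ring
  · exfalso
    obtain ⟨s, hs⟩ : ∃ s, 2 * s * kap c 1 + kap c 2 = 0 :=
      ⟨-(kap c 2) / (2 * kap c 1), by field_simp; ring⟩
    have T := fun i hi => kap_T s c i hi
    have HT := HJ_T s c H
    have y0 : kap (tsh s c) 0 = 0 := by rw [T _ (by norm_num), tsh0, x0]
    have y1 : kap (tsh s c) 1 ≠ 0 := by rw [T _ (by norm_num), tsh1, x0]; simpa using x1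
    have y2 : kap (tsh s c) 2 = 0 := by
      rw [T _ (by norm_num), tsh2, x0]; linear_combination hs
    generalize tsh s c = e at *
    have j4 := J4_vec e HT.2.2.1
    have j6 := J6_vec e HT.2.2.2.2.1
    have y3 : kap e 3 = 0 := by
      rw [y0, y2] at j4
      have : kap e 1 * kap e 3 = 0 := by linear_combination (-1/4) * j4
      simpa [y1] using this
    have y4 : kap e 4 = 0 := by
      simp only [pair4, hes, y0, y2, y3] at j6
      have : kap e 1 ^ 2 * kap e 4 = 0 := by linear_combination (-1/6) * j6
      simpa [y1] using this
    refine lemB _ (HJ_W e HT) ?_ ?_ ?_ ?_ ?_ <;> rw [kap_W _ _ (by norm_num)] <;>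
      simp [wsh, y0, y1, y2, y3, y4]

lemma main_all [IsAlgClosed k] [CharZero k] (c : ℕ → k) (H : HJ c) : NN c := by
  by_cases x0 : kap c 0 = 0
  · exact main_kap0 c H x0
  · obtain ⟨s, hs⟩ := exists_tsh 4 (by norm_num) (kap c) x0
    apply NN_T s
    apply NN_W
    apply main_kap0 _ (HJ_W _ (HJ_T s c H))
    rw [kap_W _ _ (by norm_num), wsh, kap_T _ _ _ (by norm_num)]
    simp [hs]


/-- The nullcone of the space of binary octavics is the common zero set of
`J_2, J_3, J_4, J_5, J_6, J_7`. -/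
theorem nullcone_octavics (k : Type*) [Field k] [IsAlgClosed k] [CharZero k] :
    nullcone k 8 =
      {a : Fin 9 → k |
        J2 a = 0 ∧ J3 a = 0 ∧ J4 a = 0 ∧ J5 a = 0 ∧ J6 a = 0 ∧ J7 a = 0} := by
  ext a
  constructor
  · intro ha
    exact easy_dir a ha
  · intro ha
    obtain ⟨c, rfl⟩ := exists_vecOf a
    exact main_all c ha
end
end

section
/- Let k be an algebraically closed field of characteristic 0. The ring R_8 of SL_2(k)-invariants in k[A_0,...,A_8] is finitely generated as a module over its subalgebra k[J_2, J_3, J_4, J_5, J_6, J_7]. -/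
noncomputable section

open MvPolynomial


variable (k : Type*) [Field k]

/-- the r-th transvectant of binary forms over a k-algebra R, for forms of degrees n, m -/
def transvectantA (R : Type*) [CommRing R] [Algebra k R] (n m r : ℕ)
    (f g : MvPolynomial (Fin 2) R) : MvPolynomial (Fin 2) R :=
  C (algebraMap k R ((((m - r).factorial * (n - r).factorial : ℕ) : k) /
      ((n.factorial * m.factorial : ℕ) : k))) *
    ∑ j ∈ Finset.range (r + 1),
      C ((-1 : R) ^ j * (r.choose j : R)) *
        ((fun p => pderiv (0 : Fin 2) p)^[r - j] ((fun p => pderiv (1 : Fin 2) p)^[j] f)) *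
        ((fun p => pderiv (0 : Fin 2) p)^[j] ((fun p => pderiv (1 : Fin 2) p)^[r - j] g))

/-- the generic binary octavic, with coefficients the variables a_0, ..., a_8 -/
def genOct : MvPolynomial (Fin 2) (MvPolynomial (Fin 9) k) :=
  ∑ i : Fin 9, C (X i) * X 0 ^ (i : ℕ) * X 1 ^ (8 - (i : ℕ))

def covgP := transvectantA k (MvPolynomial (Fin 9) k) 8 8 4 (genOct k) (genOct k)
def covkP := transvectantA k (MvPolynomial (Fin 9) k) 8 8 6 (genOct k) (genOct k)
def covhP := transvectantA k (MvPolynomial (Fin 9) k) 4 4 2 (covkP k) (covkP k)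
def covmP := transvectantA k (MvPolynomial (Fin 9) k) 8 4 4 (genOct k) (covkP k)

/-- J_2 as a polynomial in the coefficients a_0, ..., a_8 -/
def JP2 : MvPolynomial (Fin 9) k :=
  (2 ^ 2 * 5 * 7 : MvPolynomial (Fin 9) k) *
    constantCoeff (transvectantA k (MvPolynomial (Fin 9) k) 8 8 8 (genOct k) (genOct k))
def JP3 : MvPolynomial (Fin 9) k :=
  C ((2 ^ 4 * 5 ^ 2 * 7 ^ 3 : k) / 3) *
    constantCoeff (transvectantA k (MvPolynomial (Fin 9) k) 8 8 8 (genOct k) (covgP k))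
def JP4 : MvPolynomial (Fin 9) k :=
  (2 ^ 9 * 3 * 7 ^ 4 : MvPolynomial (Fin 9) k) *
    constantCoeff (transvectantA k (MvPolynomial (Fin 9) k) 4 4 4 (covkP k) (covkP k))
def JP5 : MvPolynomial (Fin 9) k :=
  (2 ^ 9 * 5 * 7 ^ 5 : MvPolynomial (Fin 9) k) *
    constantCoeff (transvectantA k (MvPolynomial (Fin 9) k) 4 4 4 (covmP k) (covkP k))
def JP6 : MvPolynomial (Fin 9) k :=
  (2 ^ 14 * 3 ^ 2 * 7 ^ 6 : MvPolynomial (Fin 9) k) *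
    constantCoeff (transvectantA k (MvPolynomial (Fin 9) k) 4 4 4 (covkP k) (covhP k))
def JP7 : MvPolynomial (Fin 9) k :=
  (2 ^ 14 * 3 * 5 * 7 ^ 7 : MvPolynomial (Fin 9) k) *
    constantCoeff (transvectantA k (MvPolynomial (Fin 9) k) 4 4 4 (covmP k) (covhP k))

set_option linter.all false

theorem partA {k : Type*} [Field k] [IsAlgClosed k] (R : Subalgebra k (MvPolynomial (Fin 9) k))
    (hR : ∀ x ∈ R, ∀ n, homogeneousComponent n x ∈ R)
    (hsplit : ∀ G : Finset (MvPolynomial (Fin 9) k), (∀ g ∈ G, g ∈ R) → ∀ x ∈ R,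
      x ∈ Ideal.span (G : Set (MvPolynomial (Fin 9) k)) →
      ∃ c : MvPolynomial (Fin 9) k → MvPolynomial (Fin 9) k, (∀ g, c g ∈ R) ∧
        x = ∑ g ∈ G, c g * g)
    (J : Finset (MvPolynomial (Fin 9) k)) (hJR : ∀ j ∈ J, j ∈ R)
    (hJh : ∀ j ∈ J, ∃ n, 0 < n ∧ j.IsHomogeneous n)
    (hnull : ∀ a : Fin 9 → k, (∀ j ∈ J, eval a j = 0) → ∀ I ∈ R, ∀ n, 0 < n →
      I.IsHomogeneous n → eval a I = 0) :
    ∃ T : Finset (MvPolynomial (Fin 9) k), (T : Set (MvPolynomial (Fin 9) k)) ⊆ R ∧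
      ∀ x ∈ R, x ∈ Submodule.span (Algebra.adjoin k (J : Set (MvPolynomial (Fin 9) k)))
        (T : Set (MvPolynomial (Fin 9) k)) := by
  classical
  set P : Set (MvPolynomial (Fin 9) k) := {I | I ∈ R ∧ ∃ n, 0 < n ∧ I.IsHomogeneous n} with hP
  obtain ⟨G, hGP, hG⟩ : ∃ G : Finset (MvPolynomial (Fin 9) k), (G : Set _) ⊆ P ∧
      Ideal.span (G : Set (MvPolynomial (Fin 9) k)) = Ideal.span P := by
    have := (Submodule.fg_span_iff_fg_span_finset_subset P).1
      (IsNoetherian.noetherian (Ideal.span P))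
    obtain ⟨G, h1, h2⟩ := this
    exact ⟨G, h1, h2.symm⟩
  have hrad : Ideal.span P ≤ (Ideal.span (J : Set (MvPolynomial (Fin 9) k))).radical := by
    rw [← MvPolynomial.vanishingIdeal_zeroLocus_eq_radical (K := k), Ideal.span_le]
    rintro I ⟨hI, n, hn, hIn⟩
    simp only [SetLike.mem_coe, mem_vanishingIdeal_iff]
    intro a ha
    rw [MvPolynomial.mem_zeroLocus_iff] at ha
    have : eval a I = 0 := hnull a (fun j hj => by
      have := ha j (Ideal.subset_span hj)
      simpa only [MvPolynomial.aeval_eq_eval] using this) I hI n hn hIn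
    simpa only [MvPolynomial.aeval_eq_eval] using this
  obtain ⟨N, hN⟩ := Ideal.exists_pow_le_of_le_radical_of_fg hrad
    (IsNoetherian.noetherian (Ideal.span P))
  -- one step
  have step : ∀ x ∈ R, ∃ c : MvPolynomial (Fin 9) k → MvPolynomial (Fin 9) k, (∀ g, c g ∈ R) ∧
      x = C (coeff 0 x) + ∑ g ∈ G, c g * g := by
    intro x hx
    have h1 : x - C (coeff 0 x) ∈ Ideal.span (G : Set (MvPolynomial (Fin 9) k)) := by
      rw [hG]
      have : x - C (coeff 0 x) = ∑ i ∈ Finset.range x.totalDegree,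
          homogeneousComponent (i+1) x := by
        have h := sum_homogeneousComponent x
        rw [Finset.sum_range_succ', homogeneousComponent_zero] at h
        exact sub_eq_of_eq_add h.symm
      rw [this]
      exact Ideal.sum_mem _ fun i _ => Ideal.subset_span
        ⟨hR x hx _, i+1, Nat.succ_pos _, homogeneousComponent_isHomogeneous _ _⟩
    obtain ⟨c, hc, hx'⟩ := hsplit G (fun g hg => (hGP hg).1) (x - C (coeff 0 x))
      (R.sub_mem hx (R.algebraMap_mem _)) h1
    exact ⟨c, hc, by rw [← hx']; ring⟩
  obtain ⟨T, hT0, hT⟩ : ∃ T : ℕ → Finset (MvPolynomial (Fin 9) k), T 0 = ∅ ∧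
      ∀ j, T (j+1) = insert 1 (Finset.image₂ (· * ·) (T j) G) :=
    ⟨fun j => Nat.rec ∅ (fun _ t => insert 1 (Finset.image₂ (· * ·) t G)) j, rfl, fun _ => rfl⟩
  have hTR : ∀ j, ∀ t ∈ T j, t ∈ R ∧ ∃ n, t.IsHomogeneous n := by
    intro j
    induction j with
    | zero => intro t ht; simp [hT0] at ht
    | succ j ih =>
      intro t ht
      rw [hT, Finset.mem_insert, Finset.mem_image₂] at ht
      rcases ht with rfl | ⟨u, hu, g, hg, rfl⟩
      · exact ⟨R.one_mem, 0, isHomogeneous_one _ _⟩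
      · obtain ⟨h1, n, h2⟩ := ih u hu
        obtain ⟨h3, m, _, h4⟩ := hGP hg
        exact ⟨R.mul_mem h1 h3, n + m, h2.mul h4⟩
  have claim : ∀ j, ∀ x ∈ R, ∃ q ∈ Submodule.span k ((T j : Finset (MvPolynomial (Fin 9) k)) : Set (MvPolynomial (Fin 9) k)),
      x - q ∈ (Ideal.span P) ^ j := by
    intro j
    induction j with
    | zero => intro x hx; exact ⟨0, Submodule.zero_mem _, by simp⟩
    | succ j ih =>
      intro x hx
      obtain ⟨c, hc, hx'⟩ := step x hx
      choose q hq hq' using fun g => ih (c g) (hc g)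
      refine ⟨C (coeff 0 x) + ∑ g ∈ G, q g * g, ?_, ?_⟩
      · refine Submodule.add_mem _ ?_ (Submodule.sum_mem _ fun g hg => ?_)
        · have : C (coeff 0 x) = (coeff 0 x) • (1 : MvPolynomial (Fin 9) k) := by
            rw [smul_eq_C_mul, mul_one]
          rw [this]
          exact Submodule.smul_mem _ _ (Submodule.subset_span (by rw [hT]; simp))
        · have : q g * g ∈ Submodule.map (LinearMap.mulRight k g)
              (Submodule.span k ((T j : Finset (MvPolynomial (Fin 9) k)) : Set (MvPolynomial (Fin 9) k))) := ⟨q g, hq g, rfl⟩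
          rw [Submodule.map_span] at this
          refine Submodule.span_mono ?_ this
          rintro _ ⟨t, ht, rfl⟩
          rw [hT]
          refine Finset.mem_coe.2 (Finset.mem_insert_of_mem (Finset.mem_image₂.2 ⟨t, ht, g, hg, rfl⟩))
      · have : x - (C (coeff 0 x) + ∑ g ∈ G, q g * g) = ∑ g ∈ G, (c g - q g) * g := by
          conv_lhs => rw [hx']
          simp only [sub_mul, Finset.sum_sub_distrib]
          have : coeff 0 (C (coeff 0 x) + ∑ g ∈ G, c g * g) = coeff 0 x := by rw [← hx']
          rw [this]; ring
        rw [this]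
        refine Ideal.sum_mem _ fun g hg => ?_
        rw [pow_succ]
        exact Ideal.mul_mem_mul (hq' g) (Ideal.subset_span (hGP hg))
  refine ⟨T N, fun t ht => (hTR N t ht).1, ?_⟩
  set M := Submodule.span (Algebra.adjoin k (J : Set (MvPolynomial (Fin 9) k)))
        ((T N : Finset (MvPolynomial (Fin 9) k)) : Set (MvPolynomial (Fin 9) k)) with hM
  have hkM : ∀ q ∈ Submodule.span k ((T N : Finset (MvPolynomial (Fin 9) k)) : Set (MvPolynomial (Fin 9) k)), ∀ n,
      homogeneousComponent n q ∈ M := by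
    intro q hq n
    induction hq using Submodule.span_induction with
    | mem t ht =>
      obtain ⟨_, m, hm⟩ := hTR N t ht
      rw [homogeneousComponent_of_mem hm]
      split_ifs
      · exact Submodule.subset_span ht
      · exact Submodule.zero_mem _
    | zero => simp
    | add x y _ _ hx hy => rw [map_add]; exact Submodule.add_mem _ hx hy
    | smul c x _ hx =>
      rw [map_smul]
      have : c • (homogeneousComponent n) x =
        (algebraMap k (Algebra.adjoin k (J : Set (MvPolynomial (Fin 9) k))) c) •
          (homogeneousComponent n) x := by rw [algebraMap_smul]
      rw [this]
      exact Submodule.smul_mem _ _ hx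
  have main : ∀ n, ∀ x ∈ R, homogeneousComponent n x ∈ M := by
    intro n
    induction n using Nat.strong_induction_on with
    | _ n ih =>
      intro x hx
      obtain ⟨q, hq, hxq⟩ := claim N x hx
      have hqR : q ∈ R := by
        have : Submodule.span k ((T N : Finset (MvPolynomial (Fin 9) k)) : Set (MvPolynomial (Fin 9) k)) ≤ Subalgebra.toSubmodule R :=
          Submodule.span_le.2 fun t ht => (hTR N t ht).1
        exact this hq
      obtain ⟨c, hc, h⟩ := hsplit J hJR (x - q) (R.sub_mem hx hqR) (hN hxq)
      have : x = q + ∑ g ∈ J, c g * g := by rw [← h]; ring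
      rw [this, map_add, map_sum]
      refine Submodule.add_mem _ (hkM q hq n) (Submodule.sum_mem _ fun j hj => ?_)
      obtain ⟨m, hm, hjm⟩ := hJh j hj
      have hcomp : homogeneousComponent n (c j * j) =
          if m ≤ n then homogeneousComponent (n - m) (c j) * j else 0 := by
        conv_lhs => rw [← sum_homogeneousComponent (c j), Finset.sum_mul, map_sum]
        have : ∀ i, homogeneousComponent n (homogeneousComponent i (c j) * j) =
            if n = i + m then homogeneousComponent i (c j) * j else 0 := fun i =>
          homogeneousComponent_of_mem
            ((homogeneousComponent_isHomogeneous i (c j)).mul hjm)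
        simp only [this]
        split_ifs with hmn
        · rw [Finset.sum_eq_single (n - m)]
          · rw [if_pos (by omega)]
          · intro b _ hb; rw [if_neg (by omega)]
          · intro hb
            rw [if_pos (by omega), homogeneousComponent_eq_zero _ _ (by
              simp at hb; omega), zero_mul]
        · exact Finset.sum_eq_zero fun i _ => if_neg (by omega)
      rw [hcomp]
      split_ifs with hmn
      · have h1 := ih (n - m) (by omega) (c j) (hc j)
        have : homogeneousComponent (n - m) (c j) * j =
          (⟨j, Algebra.subset_adjoin hj⟩ : Algebra.adjoin k (J : Set (MvPolynomial (Fin 9) k))) •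
            homogeneousComponent (n - m) (c j) := by
          rw [Subalgebra.smul_def, smul_eq_mul, mul_comm]
        rw [this]
        exact Submodule.smul_mem _ _ h1
      · exact Submodule.zero_mem _
  intro x hx
  rw [← sum_homogeneousComponent x]
  exact Submodule.sum_mem _ fun i _ => main i x hx


namespace Oct

def dE (k : Type*) [Field k] : Derivation k (MvPolynomial (Fin 9) k) (MvPolynomial (Fin 9) k) :=
  mkDerivation k ![X 1, 2 * X 2, 3 * X 3, 4 * X 4, 5 * X 5, 6 * X 6, 7 * X 7, 8 * X 8, 0]

def dF (k : Type*) [Field k] : Derivation k (MvPolynomial (Fin 9) k) (MvPolynomial (Fin 9) k) :=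
  mkDerivation k ![0, 8 * X 0, 7 * X 1, 6 * X 2, 5 * X 3, 4 * X 4, 3 * X 5, 2 * X 6, X 7]

def wt (i : Fin 9) : ℤ := 2 * (i : ℤ) - 8

def dH (k : Type*) [Field k] : Derivation k (MvPolynomial (Fin 9) k) (MvPolynomial (Fin 9) k) :=
  mkDerivation k (fun i => (wt i : MvPolynomial (Fin 9) k) * X i)

section
variable {k : Type*} [Field k]

theorem derNum (D : Derivation k (MvPolynomial (Fin 9) k) (MvPolynomial (Fin 9) k)) (n : ℕ)
    [n.AtLeastTwo] : D (ofNat(n) : MvPolynomial (Fin 9) k) = 0 := by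
  have h := D.map_natCast (OfNat.ofNat n)
  rwa [Nat.cast_ofNat] at h

theorem derNumMul (D : Derivation k (MvPolynomial (Fin 9) k) (MvPolynomial (Fin 9) k)) (n : ℕ)
    [n.AtLeastTwo] (p : MvPolynomial (Fin 9) k) :
    D ((ofNat(n) : MvPolynomial (Fin 9) k) * p) = ofNat(n) * D p := by
  rw [Derivation.leibniz, derNum]; simp

theorem dn2 (D : Derivation k (MvPolynomial (Fin 9) k) (MvPolynomial (Fin 9) k)) (p : MvPolynomial (Fin 9) k) : D (2 * p) = 2 * D p := derNumMul D 2 p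
theorem dn3 (D : Derivation k (MvPolynomial (Fin 9) k) (MvPolynomial (Fin 9) k)) (p : MvPolynomial (Fin 9) k) : D (3 * p) = 3 * D p := derNumMul D 3 p
theorem dn4 (D : Derivation k (MvPolynomial (Fin 9) k) (MvPolynomial (Fin 9) k)) (p : MvPolynomial (Fin 9) k) : D (4 * p) = 4 * D p := derNumMul D 4 p
theorem dn5 (D : Derivation k (MvPolynomial (Fin 9) k) (MvPolynomial (Fin 9) k)) (p : MvPolynomial (Fin 9) k) : D (5 * p) = 5 * D p := derNumMul D 5 p
theorem dn6 (D : Derivation k (MvPolynomial (Fin 9) k) (MvPolynomial (Fin 9) k)) (p : MvPolynomial (Fin 9) k) : D (6 * p) = 6 * D p := derNumMul D 6 p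
theorem dn7 (D : Derivation k (MvPolynomial (Fin 9) k) (MvPolynomial (Fin 9) k)) (p : MvPolynomial (Fin 9) k) : D (7 * p) = 7 * D p := derNumMul D 7 p
theorem dn8 (D : Derivation k (MvPolynomial (Fin 9) k) (MvPolynomial (Fin 9) k)) (p : MvPolynomial (Fin 9) k) : D (8 * p) = 8 * D p := derNumMul D 8 p

theorem derInt (D : Derivation k (MvPolynomial (Fin 9) k) (MvPolynomial (Fin 9) k)) (n : ℤ) :
    D (n : MvPolynomial (Fin 9) k) = 0 := D.map_intCast n

theorem dE0 : dE k (X 0) = X 1 := by simp [dE, mkDerivation_X]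
theorem dF0 : dF k (X 0) = 0 := by simp [dF, mkDerivation_X]
theorem dH0 : dH k (X 0) = -8 * X 0 := by simp [dH, mkDerivation_X, wt] <;> ring
theorem dE1 : dE k (X 1) = 2 * X 2 := by simp [dE, mkDerivation_X]
theorem dF1 : dF k (X 1) = 8 * X 0 := by simp [dF, mkDerivation_X]
theorem dH1 : dH k (X 1) = -6 * X 1 := by simp [dH, mkDerivation_X, wt] <;> ring
theorem dE2 : dE k (X 2) = 3 * X 3 := by simp [dE, mkDerivation_X]
theorem dF2 : dF k (X 2) = 7 * X 1 := by simp [dF, mkDerivation_X]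
theorem dH2 : dH k (X 2) = -4 * X 2 := by simp [dH, mkDerivation_X, wt] <;> ring
theorem dE3 : dE k (X 3) = 4 * X 4 := by simp [dE, mkDerivation_X]
theorem dF3 : dF k (X 3) = 6 * X 2 := by simp [dF, mkDerivation_X]
theorem dH3 : dH k (X 3) = -2 * X 3 := by simp [dH, mkDerivation_X, wt] <;> ring
theorem dE4 : dE k (X 4) = 5 * X 5 := by simp [dE, mkDerivation_X]
theorem dF4 : dF k (X 4) = 5 * X 3 := by simp [dF, mkDerivation_X]
theorem dH4 : dH k (X 4) = 0 := by simp [dH, mkDerivation_X, wt] <;> ring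
theorem dE5 : dE k (X 5) = 6 * X 6 := by simp [dE, mkDerivation_X]
theorem dF5 : dF k (X 5) = 4 * X 4 := by simp [dF, mkDerivation_X]
theorem dH5 : dH k (X 5) = 2 * X 5 := by simp [dH, mkDerivation_X, wt] <;> ring
theorem dE6 : dE k (X 6) = 7 * X 7 := by simp [dE, mkDerivation_X]
theorem dF6 : dF k (X 6) = 3 * X 5 := by simp [dF, mkDerivation_X]
theorem dH6 : dH k (X 6) = 4 * X 6 := by simp [dH, mkDerivation_X, wt] <;> ring
theorem dE7 : dE k (X 7) = 8 * X 8 := by simp [dE, mkDerivation_X]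
theorem dF7 : dF k (X 7) = 2 * X 6 := by simp [dF, mkDerivation_X]
theorem dH7 : dH k (X 7) = 6 * X 7 := by simp [dH, mkDerivation_X, wt] <;> ring
theorem dE8 : dE k (X 8) = 0 := by simp [dE, mkDerivation_X]
theorem dF8 : dF k (X 8) = X 7 := by simp [dF, mkDerivation_X]
theorem dH8 : dH k (X 8) = 8 * X 8 := by simp [dH, mkDerivation_X, wt] <;> ring

theorem brEF (p : MvPolynomial (Fin 9) k) : dE k (dF k p) - dF k (dE k p) = dH k p := by
  have : ⁅dE k, dF k⁆ = dH k := by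
    apply MvPolynomial.derivation_ext
    intro i
    rw [Derivation.commutator_apply]
    fin_cases i <;> simp [dE0, dE1, dE2, dE3, dE4, dE5, dE6, dE7, dE8, dF0, dF1, dF2, dF3, dF4, dF5, dF6, dF7, dF8, dH0, dH1, dH2, dH3, dH4, dH5, dH6, dH7, dH8, neg_mul, map_neg, map_zero, -Derivation.leibniz, dn2, dn3, dn4, dn5, dn6, dn7, dn8] <;> ring
  rw [← this, Derivation.commutator_apply]

theorem brHE (p : MvPolynomial (Fin 9) k) : dH k (dE k p) - dE k (dH k p) = 2 * dE k p := by
  have : ⁅dH k, dE k⁆ = 2 • dE k := by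
    apply MvPolynomial.derivation_ext
    intro i
    rw [Derivation.commutator_apply]
    fin_cases i <;> simp [two_smul, dE0, dE1, dE2, dE3, dE4, dE5, dE6, dE7, dE8, dH0, dH1, dH2, dH3, dH4, dH5, dH6, dH7, dH8, neg_mul, map_neg, map_zero, -Derivation.leibniz, dn2, dn3, dn4, dn5, dn6, dn7, dn8] <;> ring
  have h := congrArg (fun D => D p) this
  simpa [Derivation.commutator_apply] using h

theorem brHF (p : MvPolynomial (Fin 9) k) : dH k (dF k p) - dF k (dH k p) = - (2 * dF k p) := by
  have : ⁅dH k, dF k⁆ = - (2 • dF k) := by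
    apply MvPolynomial.derivation_ext
    intro i
    rw [Derivation.commutator_apply]
    fin_cases i <;> simp [two_smul, dF0, dF1, dF2, dF3, dF4, dF5, dF6, dF7, dF8, dH0, dH1, dH2, dH3, dH4, dH5, dH6, dH7, dH8, neg_mul, map_neg, map_zero, -Derivation.leibniz, dn2, dn3, dn4, dn5, dn6, dn7, dn8] <;> ring
  have h := congrArg (fun D => D p) this
  simpa [Derivation.commutator_apply] using h

/-- local nilpotency -/
theorem nil_mul (D : Derivation k (MvPolynomial (Fin 9) k) (MvPolynomial (Fin 9) k)) :
    ∀ (N n m : ℕ) (p q : MvPolynomial (Fin 9) k), n + m ≤ N → D^[n] p = 0 → D^[m] q = 0 →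
      D^[N] (p * q) = 0 := by
  have hz : ∀ n, D^[n] (0 : MvPolynomial (Fin 9) k) = 0 := fun n =>
    Function.iterate_fixed (map_zero D) n
  intro N
  induction N with
  | zero =>
    intro n m p q h hp hq
    obtain rfl : n = 0 := by omega
    simp at hp
    simp [hp]
  | succ N ih =>
    intro n m p q h hp hq
    rcases n with _ | n
    · simp at hp; rw [hp, zero_mul, hz]
    rcases m with _ | m
    · simp at hq; rw [hq, mul_zero, hz]
    rw [Function.iterate_succ_apply, D.leibniz]
    have h1 := ih (n+1) m p (D q) (by omega) hp (by rwa [Function.iterate_succ_apply] at hq)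
    have h2 := ih n (m+1) (D p) q (by omega) (by rwa [Function.iterate_succ_apply] at hp) hq
    rw [iterate_map_add, smul_eq_mul, smul_eq_mul, h1, mul_comm q, h2, add_zero]

theorem nil_all (D : Derivation k (MvPolynomial (Fin 9) k) (MvPolynomial (Fin 9) k))
    (hX : ∀ i, D^[9] (X i) = 0) (p : MvPolynomial (Fin 9) k) : ∃ n, ∀ m, n ≤ m → D^[m] p = 0 := by
  have hz : ∀ n, D^[n] (0 : MvPolynomial (Fin 9) k) = 0 := fun n =>
    Function.iterate_fixed (map_zero D) n
  suffices h : ∃ n, D^[n] p = 0 by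
    obtain ⟨n, hn⟩ := h
    refine ⟨n, fun m hm => ?_⟩
    obtain ⟨c, rfl⟩ := Nat.exists_eq_add_of_le' hm
    rw [Function.iterate_add_apply, hn, hz]
  induction p using MvPolynomial.induction_on with
  | C a => exact ⟨1, by simp⟩
  | add p q hp hq =>
    obtain ⟨n, hn⟩ := hp
    obtain ⟨m, hm⟩ := hq
    refine ⟨n + m, ?_⟩
    rw [iterate_map_add, add_comm n m, Function.iterate_add_apply, hn, hz, add_comm m n,
      Function.iterate_add_apply, hm, hz, add_zero]
  | mul_X p i hp =>
    obtain ⟨n, hn⟩ := hp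
    exact ⟨n + 9, nil_mul D _ n 9 p (X i) le_rfl hn (hX i)⟩

theorem nilE (p : MvPolynomial (Fin 9) k) : ∃ n, ∀ m, n ≤ m → (dE k)^[m] p = 0 := by
  apply nil_all
  intro i
  fin_cases i <;> simp [Function.iterate_succ_apply, -Derivation.leibniz, dn2, dn3, dn4, dn5, dn6, dn7, dn8, dE0, dE1, dE2, dE3, dE4, dE5, dE6, dE7, dE8]

theorem nilF (p : MvPolynomial (Fin 9) k) : ∃ n, ∀ m, n ≤ m → (dF k)^[m] p = 0 := by
  apply nil_all
  intro i
  fin_cases i <;> simp [Function.iterate_succ_apply, -Derivation.leibniz, dn2, dn3, dn4, dn5, dn6, dn7, dn8, dF0, dF1, dF2, dF3, dF4, dF5, dF6, dF7, dF8]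

theorem H_iterE (v : MvPolynomial (Fin 9) k) (hv : dH k v = 0) (j : ℕ) :
    dH k ((dE k)^[j] v) = (2 * j : MvPolynomial (Fin 9) k) * (dE k)^[j] v := by
  induction j with
  | zero => simpa using hv
  | succ j ih =>
    rw [Function.iterate_succ_apply']
    have := brHE ((dE k)^[j] v)
    have h2 : dE k ((2 * j : MvPolynomial (Fin 9) k) * (dE k)^[j] v) =
        (2 * j : MvPolynomial (Fin 9) k) * dE k ((dE k)^[j] v) := by
      rw [mul_assoc, derNumMul, Derivation.leibniz]; simp [mul_assoc]
    rw [ih, h2] at this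
    push_cast
    linear_combination this

theorem H_iterF (w : MvPolynomial (Fin 9) k) (c : ℤ)
    (hw : dH k w = (c : MvPolynomial (Fin 9) k) * w) (j : ℕ) :
    dH k ((dF k)^[j] w) = ((c - 2 * j : ℤ) : MvPolynomial (Fin 9) k) * (dF k)^[j] w := by
  induction j with
  | zero => simpa using hw
  | succ j ih =>
    rw [Function.iterate_succ_apply']
    have := brHF ((dF k)^[j] w)
    have h2 : dF k (((c - 2 * j : ℤ) : MvPolynomial (Fin 9) k) * (dF k)^[j] w) =
        ((c - 2 * j : ℤ) : MvPolynomial (Fin 9) k) * dF k ((dF k)^[j] w) := by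
      rw [Derivation.leibniz, derInt]; simp
    rw [ih, h2] at this
    push_cast at this ⊢
    linear_combination this

theorem E_iterF (w : MvPolynomial (Fin 9) k) (c : ℤ)
    (hw : dH k w = (c : MvPolynomial (Fin 9) k) * w) (j : ℕ) :
    dE k ((dF k)^[j+1] w) = (dF k)^[j+1] (dE k w) +
      (((j + 1) * (c - j) : ℤ) : MvPolynomial (Fin 9) k) * (dF k)^[j] w := by
  induction j with
  | zero =>
    have := brEF w
    rw [hw] at this
    simp only [zero_add, Function.iterate_one, Function.iterate_zero, id]
    push_cast
    linear_combination this
  | succ j ih =>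
    rw [Function.iterate_succ_apply']
    have h1 := brEF ((dF k)^[j+1] w)
    rw [H_iterF w c hw, ih, map_add] at h1
    have h2 : dF k ((((j + 1) * (c - j) : ℤ) : MvPolynomial (Fin 9) k) * (dF k)^[j] w) =
        (((j + 1) * (c - j) : ℤ) : MvPolynomial (Fin 9) k) * (dF k)^[j+1] w := by
      rw [Derivation.leibniz, derInt, Function.iterate_succ_apply']; simp
    rw [h2, ← Function.iterate_succ_apply' (dF k) (j+1) (dE k w)] at h1
    push_cast at h1 ⊢
    linear_combination h1

theorem F_of_E [CharZero k] (v : MvPolynomial (Fin 9) k) (hE : dE k v = 0) (hH : dH k v = 0) :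
    dF k v = 0 := by
  classical
  by_contra hne
  have hz : ∀ n, (dF k)^[n] (0 : MvPolynomial (Fin 9) k) = 0 := fun n =>
    Function.iterate_fixed (map_zero _) n
  have hex : ∃ n, (dF k)^[n+1] v = 0 := by
    obtain ⟨n, hn⟩ := nilF v
    exact ⟨n, hn _ (by omega)⟩
  have h1 := Nat.find_spec hex
  rcases hn : Nat.find hex with _ | n
  · rw [hn] at h1; exact hne h1
  · have h2 : (dF k)^[n+1] v ≠ 0 := Nat.find_min hex (by omega)
    rw [hn] at h1
    have h3 := E_iterF v 0 (by simpa using hH) (n+1)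
    rw [h1, hE, hz, map_zero, zero_add] at h3
    rcases mul_eq_zero.1 h3.symm with h4 | h4
    · have : ((n+1+1) * (0 - (n+1)) : ℤ) = 0 := by exact_mod_cast h4
      rcases mul_eq_zero.1 this with h | h <;> omega
    · exact h2 h4

def cf (k : Type*) [Field k] (j : ℕ) : k := (-1) ^ j / ((j.factorial : k) * ((j+1).factorial : k))

def proj (k : Type*) [Field k] (M : ℕ) (v : MvPolynomial (Fin 9) k) : MvPolynomial (Fin 9) k :=
  ∑ j ∈ Finset.range M, C (cf k j) * (dF k)^[j] ((dE k)^[j] v)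

theorem cf_succ [CharZero k] (j : ℕ) : cf k (j+1) * ((j+1) * (j+2)) = - cf k j := by
  unfold cf
  have h1 : ((j.factorial : ℕ) : k) ≠ 0 := Nat.cast_ne_zero.2 (Nat.factorial_ne_zero _)
  have h2 : (j : k) + 1 ≠ 0 := Nat.cast_add_one_ne_zero j
  have h3 : (j : k) + 2 ≠ 0 := by exact_mod_cast (by omega : j + 2 ≠ 0)
  rw [Nat.factorial_succ (j+1), Nat.factorial_succ j]
  push_cast
  have h3' : (j : k) + 1 + 1 ≠ 0 := by rw [add_assoc]; norm_num; exact h3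
  field_simp
  ring

theorem E_proj [CharZero k] (M : ℕ) (v : MvPolynomial (Fin 9) k) (hH : dH k v = 0) :
    dE k (proj k (M+1) v) = C (cf k M) * (dF k)^[M] ((dE k)^[M+1] v) := by
  unfold proj
  induction M with
  | zero => simp [Derivation.leibniz]
  | succ M ih =>
    rw [Finset.sum_range_succ, map_add, ih]
    have h := E_iterF ((dE k)^[M+1] v) (2 * (M + 1))
      (by rw [H_iterE v hH]; push_cast; ring) M
    rw [Derivation.leibniz, h, derivation_C, ← Function.iterate_succ_apply' (dE k)]
    have hc : (C (cf k (M+1)) : MvPolynomial (Fin 9) k) * (((M : MvPolynomial (Fin 9) k)+1) * ((M : MvPolynomial (Fin 9) k)+2)) = - C (cf k M) := by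
      rw [← C_neg, ← cf_succ M]
      simp only [map_mul, map_add, map_natCast, map_one, map_ofNat]
    push_cast
    simp only [smul_eq_mul]
    linear_combination ((dF k)^[M] ((dE k)^[M+1] v)) * hc

theorem H_proj (M : ℕ) (v : MvPolynomial (Fin 9) k) (hH : dH k v = 0) :
    dH k (proj k M v) = 0 := by
  unfold proj
  rw [map_sum]
  refine Finset.sum_eq_zero fun j _ => ?_
  rw [Derivation.leibniz, derivation_C, H_iterF _ (2 * j) (by rw [H_iterE v hH]; push_cast; ring)]
  simp

theorem iter_mul (D : Derivation k (MvPolynomial (Fin 9) k) (MvPolynomial (Fin 9) k))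
    (r s : MvPolynomial (Fin 9) k) (hr : D r = 0) (j : ℕ) : D^[j] (r * s) = r * D^[j] s := by
  induction j with
  | zero => rfl
  | succ j ih =>
    rw [Function.iterate_succ_apply', ih, Function.iterate_succ_apply', D.leibniz, hr]; simp

theorem proj_mul (M : ℕ) (r s : MvPolynomial (Fin 9) k) (hE : dE k r = 0) (hF : dF k r = 0) :
    proj k M (r * s) = r * proj k M s := by
  unfold proj
  rw [Finset.mul_sum]
  refine Finset.sum_congr rfl fun j _ => ?_
  rw [iter_mul _ _ _ hE, iter_mul _ _ _ hF]; ring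

theorem proj_one (M : ℕ) : proj k (M+1) (1 : MvPolynomial (Fin 9) k) = 1 := by
  unfold proj
  rw [Finset.sum_range_succ', Finset.sum_eq_zero]
  · simp [cf]
  · intro j _
    have hz : ∀ n, (dF k)^[n] (0 : MvPolynomial (Fin 9) k) = 0 := fun n =>
      Function.iterate_fixed (map_zero _) n
    have hz' : ∀ n, (dE k)^[n] (0 : MvPolynomial (Fin 9) k) = 0 := fun n =>
      Function.iterate_fixed (map_zero _) n
    rw [Function.iterate_succ_apply (dE k), Derivation.map_one_eq_zero, hz', hz, mul_zero]

/-- weight zero projection -/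
def w0 (k : Type*) [Field k] : MvPolynomial (Fin 9) k →ₗ[k] MvPolynomial (Fin 9) k :=
  weightedHomogeneousComponent wt 0

theorem dH_monomial (m : Fin 9 →₀ ℕ) (c : k) :
    dH k (monomial m c) = ((Finsupp.weight wt m : ℤ) : MvPolynomial (Fin 9) k) * monomial m c := by
  unfold dH
  rw [mkDerivation_monomial, Finsupp.weight_apply]
  simp only [Finsupp.sum, Finset.smul_sum, smul_eq_mul]
  push_cast
  rw [Finset.sum_mul]
  refine Finset.sum_congr rfl fun i hi => ?_
  have h1 : (monomial m c : MvPolynomial (Fin 9) k) =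
      X i * monomial (m - Finsupp.single i 1) c := by
    rw [X, monomial_mul, one_mul, add_tsub_cancel_of_le]
    exact Finsupp.single_le_iff.2 (Nat.one_le_iff_ne_zero.2 (Finsupp.mem_support_iff.1 hi))
  have h2 : (monomial (m - Finsupp.single i 1) ((m i : ℕ) : k) : MvPolynomial (Fin 9) k) =
     (m i : MvPolynomial (Fin 9) k) * monomial (m - Finsupp.single i 1) 1 := by
    rw [← map_natCast (C : k →+* MvPolynomial (Fin 9) k), C_mul_monomial, mul_one]
  have h3 : (monomial (m - Finsupp.single i 1) c : MvPolynomial (Fin 9) k) =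
     C c * monomial (m - Finsupp.single i 1) 1 := by
    rw [C_mul_monomial, mul_one]
  rw [h1, h2, h3, smul_eq_C_mul]
  simp
  ring

theorem coeff_dH (p : MvPolynomial (Fin 9) k) (m : Fin 9 →₀ ℕ) :
    coeff m (dH k p) = ((Finsupp.weight wt m : ℤ) : k) * coeff m p := by
  induction p using MvPolynomial.induction_on' with
  | monomial u a =>
    rw [dH_monomial, ← map_intCast (C : k →+* MvPolynomial (Fin 9) k), coeff_C_mul, coeff_monomial]
    split_ifs with h
    · rw [h]
    · simp
  | add p q hp hq => rw [map_add, coeff_add, hp, hq, coeff_add, mul_add]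

theorem isW_of_dH [CharZero k] (p : MvPolynomial (Fin 9) k) (h : dH k p = 0) :
    IsWeightedHomogeneous wt p (0 : ℤ) := by
  intro m hm
  have := coeff_dH p m
  rw [h, coeff_zero] at this
  rcases mul_eq_zero.1 this.symm with h | h
  · exact_mod_cast h
  · exact absurd h hm

theorem dH_w0 (p : MvPolynomial (Fin 9) k) : dH k (w0 k p) = 0 := by
  ext m
  rw [coeff_dH, w0, coeff_weightedHomogeneousComponent]
  split_ifs with h
  · rw [h]; simp
  · simp

theorem w0_mul [CharZero k] (r s : MvPolynomial (Fin 9) k) (hr : dH k r = 0) :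
    w0 k (r * s) = r * w0 k s := by
  have hr' := isW_of_dH r hr
  induction s using MvPolynomial.induction_on' with
  | monomial u a =>
    have h1 : IsWeightedHomogeneous wt (monomial u a : MvPolynomial (Fin 9) k)
      (Finsupp.weight wt u) := isWeightedHomogeneous_monomial _ _ _ rfl
    have h2 := hr'.mul h1
    rw [zero_add] at h2
    rw [w0, weightedHomogeneousComponent_of_mem h2, weightedHomogeneousComponent_of_mem h1]
    split_ifs <;> simp
  | add p q hp hq => rw [mul_add, map_add, hp, hq, map_add, mul_add]

theorem w0_one [CharZero k] : w0 k (1 : MvPolynomial (Fin 9) k) = 1 := by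
  rw [w0, weightedHomogeneousComponent_of_mem (isWeightedHomogeneous_one k wt), if_pos rfl]

theorem split [CharZero k] (G : Finset (MvPolynomial (Fin 9) k))
    (hG : ∀ g ∈ G, dE k g = 0 ∧ dF k g = 0)
    (x : MvPolynomial (Fin 9) k) (hx : dE k x = 0 ∧ dF k x = 0)
    (hxG : x ∈ Ideal.span (G : Set (MvPolynomial (Fin 9) k))) :
    ∃ c : MvPolynomial (Fin 9) k → MvPolynomial (Fin 9) k, (∀ g, dE k (c g) = 0 ∧ dF k (c g) = 0) ∧
        x = ∑ g ∈ G, c g * g := by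
  classical
  have hH : ∀ y : MvPolynomial (Fin 9) k, dE k y = 0 ∧ dF k y = 0 → dH k y = 0 := by
    rintro y ⟨h1, h2⟩
    rw [← brEF, h1, h2]; simp
  obtain ⟨s, hs⟩ := (Submodule.mem_span_finset.1 hxG)
  choose n hn using fun g => nilE (w0 k (s g))
  set M := ∑ g ∈ G, n g with hM
  have hnM : ∀ g ∈ G, n g ≤ M := fun g hg => Finset.single_le_sum (fun _ _ => Nat.zero_le _) hg
  refine ⟨fun g => if g ∈ G then proj k (M+1) (w0 k (s g)) else 0, ?_, ?_⟩
  · intro g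
    dsimp only
    split_ifs with hg
    · have hE : dE k (proj k (M+1) (w0 k (s g))) = 0 := by
        rw [E_proj M _ (dH_w0 _), hn g (M+1) (by have := hnM g hg; omega)]
        rw [Function.iterate_fixed (map_zero _), mul_zero]
      exact ⟨hE, F_of_E _ hE (H_proj _ _ (dH_w0 _))⟩
    · simp
  · have padd : ∀ (t : Finset (MvPolynomial (Fin 9) k))
        (f : MvPolynomial (Fin 9) k → MvPolynomial (Fin 9) k),
        proj k (M+1) (∑ g ∈ t, f g) = ∑ g ∈ t, proj k (M+1) (f g) := by
      intro t f
      unfold proj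
      rw [Finset.sum_comm]
      refine Finset.sum_congr rfl fun j _ => ?_
      rw [← Finset.mul_sum]
      congr 1
      have hs : ∀ (D : Derivation k (MvPolynomial (Fin 9) k) (MvPolynomial (Fin 9) k))
          (f : MvPolynomial (Fin 9) k → MvPolynomial (Fin 9) k) (j : ℕ),
          D^[j] (∑ g ∈ t, f g) = ∑ g ∈ t, D^[j] (f g) := by
        intro D f j
        induction j with
        | zero => rfl
        | succ j ih => simp only [Function.iterate_succ_apply', ih, map_sum]
      rw [hs, hs]
    have h1 : proj k (M+1) (w0 k x) = x := by
      conv_lhs => rw [← mul_one x]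
      rw [w0_mul _ _ (hH x hx), proj_mul _ _ _ hx.1 hx.2, w0_one, proj_one, mul_one]
    conv_lhs => rw [← h1, ← hs.2, map_sum, padd]
    refine Finset.sum_congr rfl fun g hg => ?_
    simp only [if_pos hg]
    rw [smul_eq_mul, mul_comm (s g), w0_mul _ _ (hH g (hG g hg)),
      proj_mul _ _ _ (hG g hg).1 (hG g hg).2, mul_comm]

end
end Oct

namespace Oct
def uT {R : Type*} [CommRing R] (t : R) (a : Fin 9 → R) : Fin 9 → R :=
  ![a 0 + t * a 1 + t ^ 2 * a 2 + t ^ 3 * a 3 + t ^ 4 * a 4 + t ^ 5 * a 5 + t ^ 6 * a 6 + t ^ 7 * a 7 + t ^ 8 * a 8,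
    a 1 + 2 * t * a 2 + 3 * t ^ 2 * a 3 + 4 * t ^ 3 * a 4 + 5 * t ^ 4 * a 5 + 6 * t ^ 5 * a 6 + 7 * t ^ 6 * a 7 + 8 * t ^ 7 * a 8,
    a 2 + 3 * t * a 3 + 6 * t ^ 2 * a 4 + 10 * t ^ 3 * a 5 + 15 * t ^ 4 * a 6 + 21 * t ^ 5 * a 7 + 28 * t ^ 6 * a 8,
    a 3 + 4 * t * a 4 + 10 * t ^ 2 * a 5 + 20 * t ^ 3 * a 6 + 35 * t ^ 4 * a 7 + 56 * t ^ 5 * a 8,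
    a 4 + 5 * t * a 5 + 15 * t ^ 2 * a 6 + 35 * t ^ 3 * a 7 + 70 * t ^ 4 * a 8,
    a 5 + 6 * t * a 6 + 21 * t ^ 2 * a 7 + 56 * t ^ 3 * a 8,
    a 6 + 7 * t * a 7 + 28 * t ^ 2 * a 8,
    a 7 + 8 * t * a 8,
    a 8]

def vT {R : Type*} [CommRing R] (t : R) (a : Fin 9 → R) : Fin 9 → R :=
  ![a 0,
    8 * t * a 0 + a 1,
    28 * t ^ 2 * a 0 + 7 * t * a 1 + a 2,
    56 * t ^ 3 * a 0 + 21 * t ^ 2 * a 1 + 6 * t * a 2 + a 3,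
    70 * t ^ 4 * a 0 + 35 * t ^ 3 * a 1 + 15 * t ^ 2 * a 2 + 5 * t * a 3 + a 4,
    56 * t ^ 5 * a 0 + 35 * t ^ 4 * a 1 + 20 * t ^ 3 * a 2 + 10 * t ^ 2 * a 3 + 4 * t * a 4 + a 5,
    28 * t ^ 6 * a 0 + 21 * t ^ 5 * a 1 + 15 * t ^ 4 * a 2 + 10 * t ^ 3 * a 3 + 6 * t ^ 2 * a 4 + 3 * t * a 5 + a 6,
    8 * t ^ 7 * a 0 + 7 * t ^ 6 * a 1 + 6 * t ^ 5 * a 2 + 5 * t ^ 4 * a 3 + 4 * t ^ 3 * a 4 + 3 * t ^ 2 * a 5 + 2 * t * a 6 + a 7,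
    t ^ 8 * a 0 + t ^ 7 * a 1 + t ^ 6 * a 2 + t ^ 5 * a 3 + t ^ 4 * a 4 + t ^ 3 * a 5 + t ^ 2 * a 6 + t * a 7 + a 8]

def wT {R : Type*} [CommRing R] (a : Fin 9 → R) : Fin 9 → R :=
  ![a 8,
    -a 7,
    a 6,
    -a 5,
    a 4,
    -a 3,
    a 2,
    -a 1,
    a 0]


section
variable {k : Type*} [Field k]

theorem formCoeff (p : Fin 9 → MvPolynomial (Fin 9) k) (j : Fin 9) :
    coeff (Finsupp.single (0 : Fin 2) (j : ℕ) + Finsupp.single (1 : Fin 2) (8 - (j : ℕ)))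
      (∑ i : Fin 9, C (p i) * X 0 ^ (i : ℕ) * X 1 ^ (8 - (i : ℕ)) :
        MvPolynomial (Fin 2) (MvPolynomial (Fin 9) k)) = p j := by
  classical
  have h : ∀ i : Fin 9, (C (p i) * X 0 ^ (i : ℕ) * X 1 ^ (8 - (i : ℕ)) :
        MvPolynomial (Fin 2) (MvPolynomial (Fin 9) k)) =
      monomial (Finsupp.single (0 : Fin 2) (i : ℕ) + Finsupp.single (1 : Fin 2) (8 - (i : ℕ))) (p i) := by
    intro i
    rw [X_pow_eq_monomial, X_pow_eq_monomial, C_mul_monomial, monomial_mul]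
    simp
  simp only [h, coeff_sum, coeff_monomial]
  rw [Finset.sum_eq_single j]
  · simp
  · intro b _ hb
    rw [if_neg]
    intro h2
    have := DFunLike.congr_fun h2 0
    simp at this
    exact hb (Fin.ext this)
  · simp

theorem formHom (p : MvPolynomial (Fin 2) (MvPolynomial (Fin 9) k)) (hp : p.IsHomogeneous 8) :
    p = ∑ i : Fin 9, C (coeff (Finsupp.single (0 : Fin 2) (i : ℕ) +
      Finsupp.single (1 : Fin 2) (8 - (i : ℕ))) p) * X 0 ^ (i : ℕ) * X 1 ^ (8 - (i : ℕ)) := by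
  classical
  set q : MvPolynomial (Fin 2) (MvPolynomial (Fin 9) k) := ∑ i : Fin 9, C (coeff (Finsupp.single (0 : Fin 2) (i : ℕ) +
      Finsupp.single (1 : Fin 2) (8 - (i : ℕ))) p) * X 0 ^ (i : ℕ) * X 1 ^ (8 - (i : ℕ)) with hq
  have hqh : q.IsHomogeneous 8 := by
    refine IsHomogeneous.sum _ _ _ fun i _ => ?_
    have := ((isHomogeneous_C (Fin 2) (coeff (Finsupp.single (0 : Fin 2) (i : ℕ) +
      Finsupp.single (1 : Fin 2) (8 - (i : ℕ))) p)).mul (isHomogeneous_X_pow (R := MvPolynomial (Fin 9) k) (0 : Fin 2) (i : ℕ))).mul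
      (isHomogeneous_X_pow (R := MvPolynomial (Fin 9) k) (1 : Fin 2) (8 - (i : ℕ)))
    have h8 : 0 + (i : ℕ) + (8 - (i : ℕ)) = 8 := by omega
    rwa [h8] at this
  ext1 m
  by_cases hm : m.degree = 8
  · have h2 : m 0 + m 1 = 8 := by
      rw [← hm, Finsupp.degree_eq_sum]; simp
    have hm' : m = Finsupp.single (0 : Fin 2) (m 0) + Finsupp.single (1 : Fin 2) (8 - m 0) := by
      ext i
      fin_cases i <;> simp <;> omega
    have := formCoeff (fun i : Fin 9 => coeff (Finsupp.single (0 : Fin 2) (i : ℕ) +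
      Finsupp.single (1 : Fin 2) (8 - (i : ℕ))) p) ⟨m 0, by omega⟩
    simp only [← hq, ← hm'] at this
    exact this.symm
  · rw [hp.coeff_eq_zero hm, hqh.coeff_eq_zero hm]

def linS (k : Type*) [Field k] (g : Matrix (Fin 2) (Fin 2) k) (i : Fin 2) :
    MvPolynomial (Fin 2) (MvPolynomial (Fin 9) k) :=
  C (C (g i 0)) * X 0 + C (C (g i 1)) * X 1

theorem linS_hom (g : Matrix (Fin 2) (Fin 2) k) (i : Fin 2) : (linS k g i).IsHomogeneous 1 := by
  have h := fun (c : k) (j : Fin 2) => (isHomogeneous_C (Fin 2) (C c : MvPolynomial (Fin 9) k)).mul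
    (isHomogeneous_X (MvPolynomial (Fin 9) k) j)
  simp only [zero_add] at h
  exact (h _ _).add (h _ _)

theorem substGen_eq (g : Matrix (Fin 2) (Fin 2) k) : substGen k 8 g =
    ∑ i : Fin 9, C (X i) * linS k g 0 ^ (i : ℕ) * linS k g 1 ^ (8 - (i : ℕ)) := by
  unfold substGen genForm
  simp only [map_sum, map_mul, map_pow, aeval_X, linS, ← algebraMap_eq, AlgHom.commutes]
  
theorem substGen_hom (g : Matrix (Fin 2) (Fin 2) k) : (substGen k 8 g).IsHomogeneous 8 := by
  rw [substGen_eq]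
  refine IsHomogeneous.sum _ _ _ fun i _ => ?_
  have := ((isHomogeneous_C (Fin 2) (X i : MvPolynomial (Fin 9) k)).mul
    ((linS_hom g 0).pow (i : ℕ))).mul ((linS_hom g 1).pow (8 - (i : ℕ)))
  have h8 : 0 + 1 * (i : ℕ) + 1 * (8 - (i : ℕ)) = 8 := by omega
  rwa [h8] at this

theorem substGen_act (g : Matrix (Fin 2) (Fin 2) k) : substGen k 8 g =
    ∑ i : Fin 9, C (actPoly k 8 g i) * X 0 ^ (i : ℕ) * X 1 ^ (8 - (i : ℕ)) :=
  formHom _ (substGen_hom g)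

theorem act_comp (h g : Matrix (Fin 2) (Fin 2) k) (i : Fin 9) :
    actHom k 8 h (actPoly k 8 g i) = actPoly k 8 (h * g) i := by
  have h1 : map (actHom k 8 h).toRingHom (substGen k 8 g) = substGen k 8 (h * g) := by
    rw [substGen_eq g]
    have e1 : ∀ j, map (actHom k 8 h).toRingHom (linS k g j) = linS k g j := by
      intro j
      simp [linS, actHom]
    simp only [map_sum, map_mul, map_pow, e1, map_C]
    have e2 : ∀ i, (actHom k 8 h).toRingHom (X i) = actPoly k 8 h i := by
      intro i; simp [actHom]
    simp only [e2]
    have e3 := congrArg (aeval (linS k g)) (substGen_act h)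
    rw [substGen_eq h] at e3
    simp only [map_sum, map_mul, map_pow, aeval_X, ← algebraMap_eq, AlgHom.commutes] at e3
    simp only [← algebraMap_eq]
    rw [← e3, substGen_eq]
    have e4 : ∀ j, aeval (linS k g) (linS k h j) = linS k (h * g) j := by
      intro j
      unfold linS
      simp only [map_add, map_mul, aeval_X, Matrix.mul_apply, Fin.sum_univ_two]
      simp only [← algebraMap_eq, AlgHom.commutes, map_add, map_mul]
      ring
    simp only [e4, ← algebraMap_eq]
  rw [substGen_act g, substGen_act (h * g)] at h1
  have h2 := congrArg (coeff (Finsupp.single (0 : Fin 2) (i : ℕ) + Finsupp.single (1 : Fin 2) (8 - (i : ℕ)))) h1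
  rw [formCoeff] at h2
  simp only [map_sum, map_mul, map_pow, map_X, map_C] at h2
  rw [formCoeff (fun i => (actHom k 8 h).toRingHom (actPoly k 8 g i))] at h2
  exact h2

theorem act_mul (h g : Matrix (Fin 2) (Fin 2) k) (I : MvPolynomial (Fin 9) k) :
    actHom k 8 h (actHom k 8 g I) = actHom k 8 (h * g) I := by
  have : (actHom k 8 h).comp (actHom k 8 g) = actHom k 8 (h * g) := by
    apply MvPolynomial.algHom_ext
    intro i
    have := act_comp h g i
    simpa [actHom] using this
  exact DFunLike.congr_fun this I

theorem act_u (t : k) : actPoly k 8 !![1, t; 0, 1] = uT (C t) X := by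
  funext j
  have : substGen k 8 !![1, t; 0, 1] = ∑ i : Fin 9, C (uT (C t) X i) * X 0 ^ (i : ℕ) * X 1 ^ (8 - (i : ℕ)) := by
    rw [substGen_eq]
    simp only [Fin.sum_univ_succ, linS]
    simp [uT]
    simp only [map_ofNat]
    ring
  unfold actPoly
  rw [this, formCoeff]

theorem act_v (t : k) : actPoly k 8 !![1, 0; t, 1] = vT (C t) X := by
  funext j
  have : substGen k 8 !![1, 0; t, 1] = ∑ i : Fin 9, C (vT (C t) X i) * X 0 ^ (i : ℕ) * X 1 ^ (8 - (i : ℕ)) := by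
    rw [substGen_eq]
    simp only [Fin.sum_univ_succ, linS]
    simp [vT]
    simp only [map_ofNat]
    ring
  unfold actPoly
  rw [this, formCoeff]

theorem act_w : actPoly k 8 !![0, 1; -1, 0] = wT X := by
  funext j
  have : substGen k 8 !![0, 1; -1, 0] = ∑ i : Fin 9, C (wT X i) * X 0 ^ (i : ℕ) * X 1 ^ (8 - (i : ℕ)) := by
    rw [substGen_eq]
    simp only [Fin.sum_univ_succ, linS]
    simp [wT]
    ring
  unfold actPoly
  rw [this, formCoeff]

theorem mem_inv (I : MvPolynomial (Fin 9) k) : I ∈ invariantRing k 8 ↔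
    ∀ g : Matrix.SpecialLinearGroup (Fin 2) k, actHom k 8 (g : Matrix (Fin 2) (Fin 2) k) I = I := by
  unfold invariantRing
  rw [Algebra.mem_iInf]
  rfl

end

end Oct

namespace Oct
section
variable {k : Type*} [Field k]

theorem der_comp (D : Derivation k (MvPolynomial (Fin 9) k) (MvPolynomial (Fin 9) k))
    (Φ : MvPolynomial (Fin 9) k →ₐ[k] Polynomial (MvPolynomial (Fin 9) k))
    (h : ∀ i, Polynomial.derivative (Φ (X i)) = Φ (D (X i))) (p : MvPolynomial (Fin 9) k) :
    Polynomial.derivative (Φ p) = Φ (D p) := by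
  induction p using MvPolynomial.induction_on with
  | C a =>
    rw [derivation_C, map_zero, ← algebraMap_eq, AlgHom.commutes,
      IsScalarTower.algebraMap_apply k (MvPolynomial (Fin 9) k), Polynomial.algebraMap_apply]
    simp
  | add p q hp hq => simp only [map_add, hp, hq]
  | mul_X p i hp =>
    rw [map_mul, Polynomial.derivative_mul, hp, h, D.leibniz]
    simp only [map_add, smul_eq_mul, map_mul]
    ring

theorem inv_iff [CharZero k] (D : Derivation k (MvPolynomial (Fin 9) k) (MvPolynomial (Fin 9) k))
    (Φ : MvPolynomial (Fin 9) k →ₐ[k] Polynomial (MvPolynomial (Fin 9) k))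
    (h : ∀ i, Polynomial.derivative (Φ (X i)) = Φ (D (X i)))
    (h0 : ∀ p, Polynomial.eval 0 (Φ p) = p)
    (I : MvPolynomial (Fin 9) k) :
    (∀ s : k, Polynomial.eval (C s) (Φ I) = I) ↔ D I = 0 := by
  constructor
  · intro hs
    have h1 : Φ I - Polynomial.C I = 0 := by
      apply Polynomial.eq_zero_of_infinite_isRoot
      refine Set.Infinite.mono ?_ (Set.infinite_range_of_injective (C_injective (Fin 9) k))
      rintro _ ⟨s, rfl⟩
      simp [Polynomial.IsRoot, hs]
    have h2 := der_comp D Φ h I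
    rw [sub_eq_zero.1 h1, Polynomial.derivative_C] at h2
    rw [← h0 (D I), ← h2, Polynomial.eval_zero]
  · intro hD s
    have h2 := der_comp D Φ h I
    rw [hD, map_zero] at h2
    have h3 := Polynomial.natDegree_eq_zero_of_derivative_eq_zero h2
    have h4 := Polynomial.eq_C_of_natDegree_eq_zero h3
    have h5 := h0 I
    rw [h4, Polynomial.eval_C] at h5
    rw [h4, Polynomial.eval_C, h5]

def PhU (k : Type*) [Field k] : MvPolynomial (Fin 9) k →ₐ[k] Polynomial (MvPolynomial (Fin 9) k) :=
  aeval (uT Polynomial.X (fun i => Polynomial.C (X i)))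

def PhV (k : Type*) [Field k] : MvPolynomial (Fin 9) k →ₐ[k] Polynomial (MvPolynomial (Fin 9) k) :=
  aeval (vT Polynomial.X (fun i => Polynomial.C (X i)))

theorem PhU_X (i : Fin 9) : PhU k (X i) = uT (R := Polynomial (MvPolynomial (Fin 9) k)) Polynomial.X (fun i => Polynomial.C (X i)) i := by
  simp [PhU]
theorem PhV_X (i : Fin 9) : PhV k (X i) = vT (R := Polynomial (MvPolynomial (Fin 9) k)) Polynomial.X (fun i => Polynomial.C (X i)) i := by
  simp [PhV]

theorem ev_comp (a : Fin 9 → Polynomial (MvPolynomial (Fin 9) k)) (b : Fin 9 → MvPolynomial (Fin 9) k)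
    (s : MvPolynomial (Fin 9) k)
    (h : ∀ i, Polynomial.eval s (a i) = b i) (p : MvPolynomial (Fin 9) k) :
    Polynomial.eval s (aeval a p) = aeval b p := by
  have : ((Polynomial.aeval (R := MvPolynomial (Fin 9) k) s).restrictScalars k).comp (aeval a) = aeval b := by
    apply MvPolynomial.algHom_ext
    intro i
    simpa [Polynomial.coe_aeval_eq_eval] using h i
  have h2 := DFunLike.congr_fun this p
  simpa [Polynomial.coe_aeval_eq_eval] using h2

theorem evU (s : MvPolynomial (Fin 9) k) (p : MvPolynomial (Fin 9) k) :
    Polynomial.eval s (PhU k p) = aeval (uT s X) p := by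
  apply ev_comp
  intro i
  fin_cases i <;> simp [uT] <;> ring

theorem evV (s : MvPolynomial (Fin 9) k) (p : MvPolynomial (Fin 9) k) :
    Polynomial.eval s (PhV k p) = aeval (vT s X) p := by
  apply ev_comp
  intro i
  fin_cases i <;> simp [vT] <;> ring

theorem uT0 : uT (0 : MvPolynomial (Fin 9) k) X = X := by
  funext i; fin_cases i <;> simp [uT]
theorem vT0 : vT (0 : MvPolynomial (Fin 9) k) X = X := by
  funext i; fin_cases i <;> simp [vT]

theorem inv_u [CharZero k] (I : MvPolynomial (Fin 9) k) :
    (∀ s : k, actHom k 8 !![1, s; 0, 1] I = I) ↔ dE k I = 0 := by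
  rw [← inv_iff (dE k) (PhU k) ?_ ?_]
  · simp only [evU, actHom, act_u]
  · intro i
    rw [PhU_X]
    fin_cases i <;>
    simp [uT, dE0, dE1, dE2, dE3, dE4, dE5, dE6, dE7, dE8, PhU_X, mul_assoc, map_ofNat] <;> (try simp only [map_ofNat]) <;> (try ring)
  · intro p
    rw [evU, uT0]; simp

theorem inv_v [CharZero k] (I : MvPolynomial (Fin 9) k) :
    (∀ s : k, actHom k 8 !![1, 0; s, 1] I = I) ↔ dF k I = 0 := by
  rw [← inv_iff (dF k) (PhV k) ?_ ?_]
  · simp only [evV, actHom, act_v]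
  · intro i
    rw [PhV_X]
    fin_cases i <;>
    simp [vT, dF0, dF1, dF2, dF3, dF4, dF5, dF6, dF7, dF8, PhV_X, mul_assoc, map_ofNat] <;> (try simp only [map_ofNat]) <;> (try ring)
  · intro p
    rw [evV, vT0]; simp

theorem mem_inv_iff [CharZero k] (I : MvPolynomial (Fin 9) k) :
    I ∈ invariantRing k 8 ↔ dE k I = 0 ∧ dF k I = 0 := by
  rw [mem_inv]
  constructor
  · intro h
    rw [← inv_u, ← inv_v]
    exact ⟨fun s => h ⟨!![1, s; 0, 1], by simp [Matrix.det_fin_two]⟩,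
      fun s => h ⟨!![1, 0; s, 1], by simp [Matrix.det_fin_two]⟩⟩
  · rintro ⟨hE, hF⟩
    rw [← inv_u] at hE
    rw [← inv_v] at hF
    have key : ∀ g : Matrix (Fin 2) (Fin 2) k, g.det = 1 → g 1 0 ≠ 0 → actHom k 8 g I = I := by
      intro g hg hc
      rw [Matrix.det_fin_two] at hg
      have : g = !![1, (g 0 0 - 1) / g 1 0; 0, 1] * (!![1, 0; g 1 0, 1] * !![1, (g 1 1 - 1) / g 1 0; 0, 1]) := by
        ext i j
        fin_cases i <;> fin_cases j <;> simp [Matrix.mul_apply, Fin.sum_univ_two] <;> field_simp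
        · ring
        · linear_combination -hg
        · ring
      rw [this, ← act_mul, ← act_mul, hE, hF, hE]
    rintro ⟨g, hg⟩
    by_cases hc : g 1 0 = 0
    · have h2 : g = !![1, 0; -1, 1] * (!![1, 0; 1, 1] * g) := by
        ext i j
        fin_cases i <;> fin_cases j <;> simp [Matrix.mul_apply, Fin.sum_univ_two, Matrix.vecMul, dotProduct]
      have h3 : actHom k 8 (!![1, 0; 1, 1] * g) I = I := by
        apply key
        · rw [Matrix.det_mul, hg]; simp [Matrix.det_fin_two]
        · simp [Matrix.mul_apply, Fin.sum_univ_two, hc]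
          rintro h
          rw [Matrix.det_fin_two, hc, h] at hg
          simp at hg
      show actHom k 8 g I = I
      rw [h2, ← act_mul, h3, hF]
    · exact key g hg hc

theorem ev_act (I : MvPolynomial (Fin 9) k) (a : Fin 9 → k) (b : Fin 9 → MvPolynomial (Fin 9) k) :
    eval a (aeval b I) = eval (fun i => eval a (b i)) I := by
  have : (aeval a : MvPolynomial (Fin 9) k →ₐ[k] k).comp (aeval b) = aeval (fun i => eval a (b i)) := by
    apply MvPolynomial.algHom_ext
    intro i
    simp [aeval_eq_eval]
  have h2 := DFunLike.congr_fun this I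
  simpa [aeval_eq_eval] using h2

theorem ev_u (I : MvPolynomial (Fin 9) k) (hI : I ∈ invariantRing k 8) (t : k) (a : Fin 9 → k) :
    eval (uT t a) I = eval a I := by
  have h := (mem_inv I).1 hI ⟨!![1, t; 0, 1], by simp [Matrix.det_fin_two]⟩
  have h2 := congrArg (eval a) h
  simp only [actHom] at h2
  rw [act_u, ev_act] at h2
  rw [← h2]
  congr 2
  funext i
  fin_cases i <;> simp [uT]

theorem ev_v (I : MvPolynomial (Fin 9) k) (hI : I ∈ invariantRing k 8) (t : k) (a : Fin 9 → k) :
    eval (vT t a) I = eval a I := by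
  have h := (mem_inv I).1 hI ⟨!![1, 0; t, 1], by simp [Matrix.det_fin_two]⟩
  have h2 := congrArg (eval a) h
  simp only [actHom] at h2
  rw [act_v, ev_act] at h2
  rw [← h2]
  congr 2
  funext i
  fin_cases i <;> simp [vT]

theorem ev_w (I : MvPolynomial (Fin 9) k) (hI : I ∈ invariantRing k 8) (a : Fin 9 → k) :
    eval (wT a) I = eval a I := by
  have h := (mem_inv I).1 hI ⟨!![0, 1; -1, 0], by simp [Matrix.det_fin_two]⟩
  have h2 := congrArg (eval a) h
  simp only [actHom] at h2
  rw [act_w, ev_act] at h2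
  rw [← h2]
  congr 2
  funext i
  fin_cases i <;> simp [wT]

theorem der_homog (D : Derivation k (MvPolynomial (Fin 9) k) (MvPolynomial (Fin 9) k))
    (h : ∀ i, (D (X i)).IsHomogeneous 1) (p : MvPolynomial (Fin 9) k) (n : ℕ)
    (hp : p.IsHomogeneous n) : (D p).IsHomogeneous n := by
  have hD : D = mkDerivation k (fun i => D (X i)) := by
    apply derivation_ext
    intro i
    rw [mkDerivation_X]
  rw [p.as_sum, map_sum]
  refine IsHomogeneous.sum _ _ _ fun m hm => ?_
  have hmn : m.degree = n := by
    by_contra hne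
    exact (mem_support_iff.1 hm) (hp.coeff_eq_zero hne)
  rw [hD, mkDerivation_monomial, Finsupp.sum, smul_eq_C_mul]
  have : (0 : ℕ) + n = n := zero_add n
  rw [← this]
  refine (isHomogeneous_C _ _).mul (IsHomogeneous.sum _ _ _ fun i hi => ?_)
  have h1 : (monomial (m - Finsupp.single i 1) ((m i : ℕ) : k)).IsHomogeneous (n - 1) := by
    apply isHomogeneous_monomial
    have h2 : m = (m - Finsupp.single i 1) + Finsupp.single i 1 := by
      rw [tsub_add_cancel_of_le]
      exact Finsupp.single_le_iff.2 (Nat.one_le_iff_ne_zero.2 (Finsupp.mem_support_iff.1 hi))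
    have h3 := congrArg Finsupp.degree h2
    rw [map_add, Finsupp.degree_single, hmn] at h3
    omega
  have h4 : n - 1 + 1 = n := by
    have := Finsupp.le_degree i m
    have := Finsupp.mem_support_iff.1 hi
    omega
  have h5 := h1.mul (h i)
  rwa [h4] at h5

theorem der_comm (D : Derivation k (MvPolynomial (Fin 9) k) (MvPolynomial (Fin 9) k))
    (h : ∀ i, (D (X i)).IsHomogeneous 1) (p : MvPolynomial (Fin 9) k) (n : ℕ) :
    D (homogeneousComponent n p) = homogeneousComponent n (D p) := by
  have h1 : ∀ i, homogeneousComponent n (D (homogeneousComponent i p)) =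
      if n = i then D (homogeneousComponent i p) else 0 := fun i =>
    homogeneousComponent_of_mem (der_homog D h _ i (homogeneousComponent_isHomogeneous i p))
  conv_rhs => rw [← sum_homogeneousComponent p, map_sum, map_sum]
  simp only [h1]
  rw [Finset.sum_ite_eq]
  split_ifs with h2
  · rfl
  · rw [homogeneousComponent_eq_zero _ _ (by simpa using h2), map_zero]

theorem numX (n : ℕ) (i : Fin 9) : ((n : MvPolynomial (Fin 9) k) * X i).IsHomogeneous 1 := by
  have := (isHomogeneous_C (Fin 9) (n : k)).mul (isHomogeneous_X k i)
  rwa [map_natCast, zero_add] at this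

theorem inv_comp [CharZero k] (x : MvPolynomial (Fin 9) k) (hx : x ∈ invariantRing k 8) (n : ℕ) :
    homogeneousComponent n x ∈ invariantRing k 8 := by
  rw [mem_inv_iff] at hx ⊢
  rw [der_comm, der_comm, hx.1, hx.2]
  · simp
  · intro i
    fin_cases i <;> simp [dF0, dF1, dF2, dF3, dF4, dF5, dF6, dF7, dF8, isHomogeneous_X, isHomogeneous_zero]
    · exact numX 8 0
    · exact numX 7 1
    · exact numX 6 2
    · exact numX 5 3
    · exact numX 4 4
    · exact numX 3 5
    · exact numX 2 6
  · intro i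
    fin_cases i <;> simp [dE0, dE1, dE2, dE3, dE4, dE5, dE6, dE7, dE8, isHomogeneous_X, isHomogeneous_zero]
    · exact numX 2 2
    · exact numX 3 3
    · exact numX 4 4
    · exact numX 5 5
    · exact numX 6 6
    · exact numX 7 7
    · exact numX 8 8

end

end Oct

namespace Oct
section
variable {R : Type*} [CommRing R]

def Kc (a : Fin 9 → R) : Fin 5 → R :=
  ![56 * a 0 * a 6 - 21 * a 1 * a 5 + 12 * a 2 * a 4 - 5 * a 3 ^ 2,
    392 * a 0 * a 7 - 70 * a 1 * a 6 + 18 * a 2 * a 5 - 4 * a 3 * a 4,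
    1568 * a 0 * a 8 - 49 * a 1 * a 7 - 16 * a 2 * a 6 + 17 * a 3 * a 5 - 8 * a 4 ^ 2,
    392 * a 1 * a 8 - 70 * a 2 * a 7 + 18 * a 3 * a 6 - 4 * a 4 * a 5,
    56 * a 2 * a 8 - 21 * a 3 * a 7 + 12 * a 4 * a 6 - 5 * a 5 ^ 2]

def Hc (c : Fin 5 → R) : Fin 5 → R :=
  ![8 * c 0 * c 2 - 3 * c 1 ^ 2, 24 * c 0 * c 3 - 4 * c 1 * c 2,
    48 * c 0 * c 4 + 6 * c 1 * c 3 - 4 * c 2 ^ 2, 24 * c 1 * c 4 - 4 * c 2 * c 3,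
    8 * c 2 * c 4 - 3 * c 3 ^ 2]

def Mc (a : Fin 9 → R) (c : Fin 5 → R) : Fin 5 → R :=
  ![280 * a 0 * c 4 - 35 * a 1 * c 3 + 10 * a 2 * c 2 - 5 * a 3 * c 1 + 4 * a 4 * c 0,
    140 * a 1 * c 4 - 40 * a 2 * c 3 + 20 * a 3 * c 2 - 16 * a 4 * c 1 + 20 * a 5 * c 0,
    60 * a 2 * c 4 - 30 * a 3 * c 3 + 24 * a 4 * c 2 - 30 * a 5 * c 1 + 60 * a 6 * c 0,
    20 * a 3 * c 4 - 16 * a 4 * c 3 + 20 * a 5 * c 2 - 40 * a 6 * c 1 + 140 * a 7 * c 0,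
    4 * a 4 * c 4 - 5 * a 5 * c 3 + 10 * a 6 * c 2 - 35 * a 7 * c 1 + 280 * a 8 * c 0]

def Pr (c d : Fin 5 → R) : R :=
  12 * c 0 * d 4 + 12 * c 4 * d 0 - 3 * c 1 * d 3 - 3 * c 3 * d 1 + 2 * c 2 * d 2

def P2 (a : Fin 9 → R) : R :=
  280 * a 0 * a 8 - 35 * a 1 * a 7 + 10 * a 2 * a 6 - 5 * a 3 * a 5 + 2 * a 4 ^ 2

def P3 (a : Fin 9 → R) : R :=
  3920 * a 0 * a 4 * a 8 - 2450 * a 0 * a 5 * a 7 + 1050 * a 0 * a 6 ^ 2 - 2450 * a 1 * a 3 * a 8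
  + 735 * a 1 * a 4 * a 7 - 175 * a 1 * a 5 * a 6 + 1050 * a 2 ^ 2 * a 8 - 175 * a 2 * a 3 * a 7
  - 110 * a 2 * a 4 * a 6 + 75 * a 2 * a 5 ^ 2 + 75 * a 3 ^ 2 * a 6 - 45 * a 3 * a 4 * a 5
  + 12 * a 4 ^ 3

def P4 (a : Fin 9 → R) : R := Pr (Kc a) (Kc a)
def P5 (a : Fin 9 → R) : R := Pr (Mc a (Kc a)) (Kc a)
def P6 (a : Fin 9 → R) : R := Pr (Kc a) (Hc (Kc a))
def P7 (a : Fin 9 → R) : R := Pr (Mc a (Kc a)) (Hc (Kc a))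

def ZZ (a : Fin 9 → R) : Prop := P2 a = 0 ∧ P3 a = 0 ∧ P4 a = 0 ∧ P5 a = 0 ∧ P6 a = 0 ∧ P7 a = 0

def u4 (t : R) (c : Fin 5 → R) : Fin 5 → R :=
  ![c 0 + t * c 1 + t ^ 2 * c 2 + t ^ 3 * c 3 + t ^ 4 * c 4,
    c 1 + 2 * t * c 2 + 3 * t ^ 2 * c 3 + 4 * t ^ 3 * c 4,
    c 2 + 3 * t * c 3 + 6 * t ^ 2 * c 4, c 3 + 4 * t * c 4, c 4]

def v4 (t : R) (c : Fin 5 → R) : Fin 5 → R :=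
  ![c 0, 4 * t * c 0 + c 1, 6 * t ^ 2 * c 0 + 3 * t * c 1 + c 2,
    4 * t ^ 3 * c 0 + 3 * t ^ 2 * c 1 + 2 * t * c 2 + c 3,
    t ^ 4 * c 0 + t ^ 3 * c 1 + t ^ 2 * c 2 + t * c 3 + c 4]

theorem K_u (t : R) (a : Fin 9 → R) : Kc (uT t a) = u4 t (Kc a) := by
  funext i
  fin_cases i <;> simp [Kc, uT, u4] <;> ring

theorem K_v (t : R) (a : Fin 9 → R) : Kc (vT t a) = v4 t (Kc a) := by
  funext i
  fin_cases i <;> simp [Kc, vT, v4] <;> ring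

theorem K_w (a : Fin 9 → R) : Kc (wT a) = ![Kc a 4, -Kc a 3, Kc a 2, -Kc a 1, Kc a 0] := by
  funext i
  fin_cases i <;> simp [Kc, wT] <;> ring

end

section
variable {k : Type*} [Field k] [CharZero k]

/-- the case where the quartic has an exactly triple root -/
theorem case3 (a : Fin 9 → k) (h2 : P2 a = 0) (h3 : P3 a = 0) (h5 : P5 a = 0) (h7 : P7 a = 0)
    (K0 : Kc a 0 = 0) (K1 : Kc a 1 = 0) (K2 : Kc a 2 = 0) (K4 : Kc a 4 = 0) : Kc a 3 = 0 := by
  by_contra K3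
  have M0 : Mc a (Kc a) 0 = 0 := by
    have : Pr (Mc a (Kc a)) (Hc (Kc a)) = 0 := h7
    simp [Pr, Hc, K0, K1, K2, K4, K3] at this
    exact this
  have a1 : a 1 = 0 := by
    simpa [Mc, K0, K1, K2, K4, K3] using M0
  have M1 : Mc a (Kc a) 1 = 0 := by
    have : Pr (Mc a (Kc a)) (Kc a) = 0 := h5
    simp [Pr, K0, K1, K2, K4, K3] at this
    exact this
  have a2 : a 2 = 0 := by
    simpa [Mc, K0, K1, K2, K4, K3, a1] using M1
  simp [Kc, a1, a2] at K0 K1 K2 K3 K4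
  simp [P2, a1, a2] at h2
  simp [P3, a1, a2] at h3
  have e1 : 75 * a 3 * a 5 = 32 * a 4 ^ 2 := by linear_combination (5/3) * K2 - (28/3) * h2
  by_cases a0 : a 0 = 0
  · have a3 : a 3 = 0 := by simpa [a0] using K0
    have a4 : a 4 = 0 := by simpa [a3] using e1
    exact K3 (by rw [a3, a4]; ring)
  by_cases a3 : a 3 = 0
  · have a4 : a 4 = 0 := by simpa [a3] using e1
    exact K3 (by rw [a3, a4]; ring)
  by_cases a4 : a 4 = 0
  · have a5 : a 5 = 0 := by simpa [a4, a3] using e1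
    simp [a4, a5] at h3
    have a6 : a 6 = 0 := by
      have h : a 6 * (1050 * (56 * a 0 * a 6) + 75 * 56 * a 3 ^ 2) = 0 := by
        linear_combination 56 * h3
      rcases mul_eq_zero.1 h with h | h
      · exact h
      · exfalso; apply a3
        have : a 3 ^ 2 = 0 := by linear_combination (1/9450) * (h - 1050 * K0)
        simpa using this
    exact K3 (by rw [a6, a4]; ring)
  · have e2 : 7 * 5625 * 6 * a 3 ^ 4 * a 4 = 49 * 5120 * a 0 * a 4 ^ 3 * a 4 := by
      linear_combination 275625 * (a 0 * a 3 ^ 2 * K4 + 21 / 392 * a 3 ^ 3 * K1 - 12 / 56 * a 4 * a 3 ^ 2 * K0 + 5 / 75 * a 0 * (a 3 * a 5 + 32 / 75 * a 4 ^ 2) * e1)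
    have e3 : 5625 * 6 * a 3 ^ 4 = 7 * 5120 * a 0 * a 4 ^ 3 := by
      have := mul_right_cancel₀ a4 e2
      linear_combination (1/7) * this
    apply K3
    have : a 0 * a 3 * (18 * a 3 * a 6 - 4 * a 4 * a 5) = 0 := by
      linear_combination 18 / 56 * a 3 ^ 2 * K0 - 4 / 75 * a 0 * a 4 * e1 + 90 / 56 / 33750 * e3
    simpa [a0, a3] using this

/-- abstract induction principle data: a property of octavics invariant under SL2 -/
structure Good (N : (Fin 9 → k) → Prop) : Prop where
  u : ∀ t a, N (uT t a) → N a
  v : ∀ t a, N (vT t a) → N a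
  w : ∀ a, N (wT a) → N a
  lo : ∀ a : Fin 9 → k, (∀ i : Fin 9, 4 ≤ (i : ℕ) → a i = 0) → N a
  hi : ∀ a : Fin 9 → k, (∀ i : Fin 9, (i : ℕ) ≤ 4 → a i = 0) → N a

theorem Good.lo' {N : (Fin 9 → k) → Prop} (g : Good N) (a : Fin 9 → k) (h4 : a 4 = 0) (h5 : a 5 = 0)
    (h6 : a 6 = 0) (h7 : a 7 = 0) (h8 : a 8 = 0) : N a := by
  apply g.lo
  intro i hi
  fin_cases i <;> simp at hi <;> assumption

theorem Good.hi' {N : (Fin 9 → k) → Prop} (g : Good N) (a : Fin 9 → k) (h4 : a 0 = 0) (h5 : a 1 = 0)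
    (h6 : a 2 = 0) (h7 : a 3 = 0) (h8 : a 4 = 0) : N a := by
  apply g.hi
  intro i hi
  fin_cases i <;> simp at hi <;> assumption

theorem caseB2 {N : (Fin 9 → k) → Prop} (g : Good N) (a : Fin 9 → k) (h2 : P2 a = 0) (h3 : P3 a = 0)
    (K0 : Kc a 0 = 0) (K1 : Kc a 1 = 0) (K2 : Kc a 2 = 0) (K3 : Kc a 3 = 0)
    (a0 : a 0 = 0) (a1 : a 1 = 0) (a3 : a 3 = 0) (a2 : a 2 ≠ 0) : N a := by
  simp [Kc, a0, a1, a3, a2] at K0 K1 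
  simp [Kc, a0, a1, a3, a2, K0, K1] at K2 K3
  have a8 : a 8 = 0 := by simpa [P3, a0, a1, a3, a2, K0, K1, K2, K3] using h3
  exact g.lo' a K0 K1 K2 K3 a8

theorem caseB1 {N : (Fin 9 → k) → Prop} (g : Good N) (a : Fin 9 → k) (h2 : P2 a = 0) (h3 : P3 a = 0)
    (K0 : Kc a 0 = 0) (K1 : Kc a 1 = 0) (K2 : Kc a 2 = 0) (K3 : Kc a 3 = 0)
    (a0 : a 0 = 0) (a2 : a 2 = 0) (a1 : a 1 ≠ 0) : N a := by
  simp [Kc, a0, a2] at K0 K1 K2 K3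
  simp [P2, a0, a2] at h2
  have e1 : 20 * a 3 * a 5 = 9 * a 4 ^ 2 := by linear_combination (5/6) * K2 - (7/6) * h2
  by_cases a3 : a 3 = 0
  · simp [a3, a1] at K0 K1 e1
    simp [a3, a1, K0, K1, e1] at K2 K3
    exact g.lo' a e1 K0 K1 K2 K3
  · obtain ⟨s, hs⟩ : ∃ s, s = 3 * a 4 / (10 * a 3) := ⟨_, rfl⟩
    have b4 : a 4 = 10 / 3 * s * a 3 := by rw [hs]; field_simp
    have c5 : a 5 = 5 * s ^ 2 * a 3 := by
      have : a 3 * (a 5 - 5 * s ^ 2 * a 3) = 0 := by rw [b4] at e1; linear_combination (1/20) * e1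
      rcases mul_eq_zero.1 this with h | h
      · exact absurd h a3
      · linear_combination h
    have b3 : a 3 = -21 * a 1 * s ^ 2 := by
      have : a 3 * (a 3 + 21 * a 1 * s ^ 2) = 0 := by rw [c5] at K0; linear_combination (-1/5) * K0
      rcases mul_eq_zero.1 this with h | h
      · exact absurd h a3
      · linear_combination h
    have key : ∀ x y : k, a 1 * (x - a 1 * y) = 0 → x = a 1 * y := by
      intro x y h
      rcases mul_eq_zero.1 h with h | h
      · exact absurd h a1
      · linear_combination h
    rw [b3] at b4 c5
    rw [b3, b4] at K1
    have b6 : a 6 = a 1 * (-84 * s ^ 5) := key _ _ (by linear_combination (-1/70) * K1)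
    rw [b3, b4, c5] at K2 K3
    have b7 : a 7 = a 1 * (-35 * s ^ 6) := key _ _ (by linear_combination (-1/49) * K2)
    rw [b6] at K3
    have b8 : a 8 = a 1 * (-6 * s ^ 7) := key _ _ (by linear_combination (1/392) * K3)
    apply g.v (-s)
    apply g.lo' <;> simp [vT, a0, a2, b3, b4, c5, b6, b7, b8] <;> ring

theorem caseB {N : (Fin 9 → k) → Prop} (g : Good N) (a : Fin 9 → k) 
    (hZv : ∀ a : Fin 9 → k, ∀ t, ZZ a → ZZ (vT t a)) (hZ : ZZ a)
    (K0 : Kc a 0 = 0) (K1 : Kc a 1 = 0) (K2 : Kc a 2 = 0) (K3 : Kc a 3 = 0)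
    (a0 : a 0 = 0) : N a := by
  have hK : ∀ t, Kc (vT t a) 0 = 0 ∧ Kc (vT t a) 1 = 0 ∧ Kc (vT t a) 2 = 0 ∧ Kc (vT t a) 3 = 0 := by
    intro t
    rw [K_v]; simp [v4, K0, K1, K2, K3]
  by_cases a1 : a 1 = 0
  · by_cases a2 : a 2 = 0
    · have a3 : a 3 = 0 := by simpa [Kc, a0, a1, a2] using K0
      have a4 : a 4 = 0 := by simpa [P2, a0, a1, a2, a3] using hZ.1
      exact g.hi' a a0 a1 a2 a3 a4
    · apply g.v (- a 3 / (6 * a 2))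
      obtain ⟨h0, h1, h2, h3⟩ := hK (- a 3 / (6 * a 2))
      obtain ⟨z2, z3, -⟩ := hZv a (- a 3 / (6 * a 2)) hZ
      refine caseB2 g _ z2 z3 h0 h1 h2 h3 ?_ ?_ ?_ ?_
      · simp [vT, a0]
      · simp [vT, a0, a1]
      · simp [vT, a0, a1]; field_simp; ring
      · simpa [vT, a0, a1] using a2
  · apply g.v (- a 2 / (7 * a 1))
    obtain ⟨h0, h1, h2, h3⟩ := hK (- a 2 / (7 * a 1))
    obtain ⟨z2, z3, -⟩ := hZv a (- a 2 / (7 * a 1)) hZ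
    refine caseB1 g _ z2 z3 h0 h1 h2 h3 ?_ ?_ ?_
    · simp [vT, a0]
    · simp [vT, a0]; field_simp; ring
    · simpa [vT, a0] using a1

theorem nullMain [IsAlgClosed k] {N : (Fin 9 → k) → Prop} (g : Good N)
    (hZu : ∀ a : Fin 9 → k, ∀ t, ZZ a → ZZ (uT t a))
    (hZv : ∀ a : Fin 9 → k, ∀ t, ZZ a → ZZ (vT t a))
    (hZw : ∀ a : Fin 9 → k, ZZ a → ZZ (wT a)) (a : Fin 9 → k) (hZ : ZZ a) : N a := by
  have rootEx : ∀ c : ℕ → k, ∀ n, 0 < n → c n ≠ 0 →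
      ∃ t, ∑ i ∈ Finset.range (n+1), c i * t ^ i = 0 := by
    intro c n hn hc
    have hd : (∑ i ∈ Finset.range (n+1), Polynomial.C (c i) * Polynomial.X ^ i).coeff n = c n := by
      simp [Polynomial.finset_sum_coeff, Polynomial.coeff_C_mul, Polynomial.coeff_X_pow]
    have hne := hc
    rw [← hd] at hne
    obtain ⟨t, ht⟩ := IsAlgClosed.exists_root
      (∑ i ∈ Finset.range (n+1), Polynomial.C (c i) * Polynomial.X ^ i) (by
        intro h0
        have := Polynomial.le_degree_of_ne_zero hne
        rw [h0] at this
        have h2 : n ≤ 0 := by exact_mod_cast this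
        omega)
    refine ⟨t, ?_⟩
    simpa [Polynomial.IsRoot, Polynomial.eval_finset_sum] using ht
  -- K0=K1=K2=K3=0
  have s4 : ∀ a : Fin 9 → k, ZZ a → Kc a 0 = 0 → Kc a 1 = 0 → Kc a 2 = 0 → Kc a 3 = 0 → N a := by
    intro a hZ K0 K1 K2 K3
    by_cases K4 : Kc a 4 = 0
    · by_cases a8 : a 8 = 0
      · apply g.w
        refine caseB g _ hZv (hZw a hZ) ?_ ?_ ?_ ?_ ?_
        iterate 4 rw [K_w]; simp [K0, K1, K2, K3, K4]
        simp [wT, a8]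
      · obtain ⟨t, ht⟩ := rootEx (fun i => if h : i < 9 then a ⟨i, h⟩ else 0) 8 (by norm_num) (by simpa using a8)
        apply g.u t
        refine caseB g _ hZv (hZu a t hZ) ?_ ?_ ?_ ?_ ?_
        iterate 4 rw [K_u]; simp [u4, K0, K1, K2, K3, K4]
        simp [Finset.sum_range_succ] at ht
        simp [uT]
        linear_combination ht
    · refine caseB g a hZv hZ K0 K1 K2 K3 ?_
      have : Pr (Mc a (Kc a)) (Kc a) = 0 := hZ.2.2.2.1
      simpa [Pr, Mc, K0, K1, K2, K3, K4] using this
  have s3 : ∀ a : Fin 9 → k, ZZ a → Kc a 0 = 0 → Kc a 1 = 0 → Kc a 2 = 0 → N a := by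
    intro a hZ K0 K1 K2
    by_cases K3 : Kc a 3 = 0
    · exact s4 a hZ K0 K1 K2 K3
    · exfalso
      obtain ⟨z2, z3, z4, z5, z6, z7⟩ := hZv a (- Kc a 4 / Kc a 3) hZ
      have := case3 _ z2 z3 z5 z7 (by rw [K_v]; simp [v4, K0]) (by rw [K_v]; simp [v4, K0, K1])
        (by rw [K_v]; simp [v4, K0, K1, K2]) (by rw [K_v]; simp [v4, K0, K1, K2]; field_simp; ring)
      rw [K_v] at this
      simp [v4, K0, K1, K2, K3] at this
  have s2 : ∀ a : Fin 9 → k, ZZ a → Kc a 0 = 0 → N a := by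
    intro a hZ K0
    by_cases K1 : Kc a 1 = 0
    · refine s3 a hZ K0 K1 ?_
      have : Pr (Kc a) (Kc a) = 0 := hZ.2.2.1
      simpa [Pr, K0, K1] using this
    · obtain ⟨t, ht⟩ : ∃ t, 3 * t * Kc a 1 + Kc a 2 = 0 := ⟨- Kc a 2 / (3 * Kc a 1), by field_simp; ring⟩
      apply g.v t
      have hZ' := hZv a t hZ
      have k0 : Kc (vT t a) 0 = 0 := by rw [K_v]; simp [v4, K0]
      have k1 : Kc (vT t a) 1 ≠ 0 := by rw [K_v]; simpa [v4, K0] using K1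
      have k2 : Kc (vT t a) 2 = 0 := by rw [K_v]; simpa [v4, K0] using ht
      generalize vT t a = b at *
      have k3 : Kc b 3 = 0 := by
        have : Pr (Kc b) (Kc b) = 0 := hZ'.2.2.1
        simp only [Pr, k0, k2] at this
        have h : Kc b 1 * Kc b 3 = 0 := by linear_combination (-1/6) * this
        simpa [k1] using h
      have k4 : Kc b 4 = 0 := by
        have : Pr (Kc b) (Hc (Kc b)) = 0 := hZ'.2.2.2.2.1
        simp [Pr, Hc, k0, k2, k3] at this
        have h : Kc b 1 ^ 2 * Kc b 4 = 0 := by linear_combination (-1/108) * this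
        simpa [k1] using h
      apply g.w
      refine s3 _ (hZw b hZ') ?_ ?_ ?_ <;> rw [K_w] <;> simp [k2, k3, k4]
  by_cases K4 : Kc a 4 = 0
  · apply g.w
    exact s2 _ (hZw a hZ) (by rw [K_w]; simpa using K4)
  · obtain ⟨t, ht⟩ := rootEx (fun i => if h : i < 5 then Kc a ⟨i, h⟩ else 0) 4 (by norm_num) (by simpa using K4)
    apply g.u t
    refine s2 _ (hZu a t hZ) ?_
    rw [K_u]
    simp [Finset.sum_range_succ] at ht
    simp [u4]
    linear_combination ht

end

end Oct

namespace Oct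
section
variable {A : Type*} [CommRing A]

def F8 (a : Fin 9 → A) : MvPolynomial (Fin 2) A :=
  ∑ i : Fin 9, C (a i) * X 0 ^ (i : ℕ) * X 1 ^ (8 - (i : ℕ))

def F4 (c : Fin 5 → A) : MvPolynomial (Fin 2) A :=
  ∑ i : Fin 5, C (c i) * X 0 ^ (i : ℕ) * X 1 ^ (4 - (i : ℕ))

def Gc (a : Fin 9 → A) : Fin 9 → A :=
  ![56 * a 0 * a 4 - 35 * a 1 * a 3 + 15 * a 2 * a 2,
    280 * a 0 * a 5 - 84 * a 1 * a 4 + 20 * a 2 * a 3,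
    840 * a 0 * a 6 - 70 * a 1 * a 5 - 44 * a 2 * a 4 + 30 * a 3 * a 3,
    1960 * a 0 * a 7 + 140 * a 1 * a 6 - 120 * a 2 * a 5 + 36 * a 3 * a 4,
    3920 * a 0 * a 8 + 735 * a 1 * a 7 - 110 * a 2 * a 6 - 45 * a 3 * a 5 + 36 * a 4 * a 4,
    1960 * a 1 * a 8 + 140 * a 2 * a 7 - 120 * a 3 * a 6 + 36 * a 4 * a 5,
    840 * a 2 * a 8 - 70 * a 3 * a 7 - 44 * a 4 * a 6 + 30 * a 5 * a 5,
    280 * a 3 * a 8 - 84 * a 4 * a 7 + 20 * a 5 * a 6,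
    56 * a 4 * a 8 - 35 * a 5 * a 7 + 15 * a 6 * a 6]

def P8 (a b : Fin 9 → A) : A :=
  280 * a 0 * b 8 - 35 * a 1 * b 7 + 10 * a 2 * b 6 - 5 * a 3 * b 5 + 4 * a 4 * b 4
  - 5 * a 5 * b 3 + 10 * a 6 * b 2 - 35 * a 7 * b 1 + 280 * a 8 * b 0

def tsum (r : ℕ) (f g : MvPolynomial (Fin 2) A) : MvPolynomial (Fin 2) A :=
  ∑ j ∈ Finset.range (r + 1),
      C ((-1 : A) ^ j * (r.choose j : A)) *
        ((fun p => pderiv (0 : Fin 2) p)^[r - j] ((fun p => pderiv (1 : Fin 2) p)^[j] f)) *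
        ((fun p => pderiv (0 : Fin 2) p)^[j] ((fun p => pderiv (1 : Fin 2) p)^[r - j] g))

theorem it1 (c : A) (i j q : ℕ) :
    (fun p => pderiv (1 : Fin 2) p)^[q] (C c * X 0 ^ i * X 1 ^ j : MvPolynomial (Fin 2) A) =
      C (((j.descFactorial q : ℕ) : A) * c) * X 0 ^ i * X 1 ^ (j - q) := by
  induction q with
  | zero => simp
  | succ q ih =>
    rw [Function.iterate_succ_apply', ih]
    simp only [Derivation.leibniz, Derivation.leibniz_pow, pderiv_C, smul_eq_mul, nsmul_eq_mul]
    rw [pderiv_X_self, pderiv_X_of_ne (by decide), Nat.descFactorial_succ, Nat.sub_sub]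
    simp
    ring

theorem it0 (c : A) (i j q : ℕ) :
    (fun p => pderiv (0 : Fin 2) p)^[q] (C c * X 0 ^ i * X 1 ^ j : MvPolynomial (Fin 2) A) =
      C (((i.descFactorial q : ℕ) : A) * c) * X 0 ^ (i - q) * X 1 ^ j := by
  induction q with
  | zero => simp
  | succ q ih =>
    rw [Function.iterate_succ_apply', ih]
    simp only [Derivation.leibniz, Derivation.leibniz_pow, pderiv_C, smul_eq_mul, nsmul_eq_mul]
    rw [pderiv_X_self, pderiv_X_of_ne (by decide), Nat.descFactorial_succ, Nat.sub_sub]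
    simp
    ring

theorem itsum (l : Fin 2) (q : ℕ) {ι : Type*} (s : Finset ι) (f : ι → MvPolynomial (Fin 2) A) :
    (fun p => pderiv l p)^[q] (∑ i ∈ s, f i) = ∑ i ∈ s, (fun p => pderiv l p)^[q] (f i) := by
  induction q with
  | zero => simp
  | succ q ih => simp only [Function.iterate_succ_apply', ih, map_sum]

theorem itC (l : Fin 2) (q : ℕ) (c : A) (f : MvPolynomial (Fin 2) A) :
    (fun p => pderiv l p)^[q] (C c * f) = C c * (fun p => pderiv l p)^[q] f := by
  induction q with
  | zero => simp
  | succ q ih => simp only [Function.iterate_succ_apply', ih, Derivation.leibniz, pderiv_C]; simp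

theorem tsumC (r : ℕ) (x y : A) (f g : MvPolynomial (Fin 2) A) :
    tsum r (C x * f) (C y * g) = C (x * y) * tsum r f g := by
  unfold tsum
  simp only [itC, Finset.mul_sum, map_mul]
  refine Finset.sum_congr rfl fun j _ => ?_
  ring

theorem itF8 (p q : ℕ) (a : Fin 9 → A) :
    (fun f => pderiv (0 : Fin 2) f)^[p] ((fun f => pderiv (1 : Fin 2) f)^[q] (F8 a)) =
    ∑ i : Fin 9, C (a i) * (((i : ℕ).descFactorial p * (8 - (i : ℕ)).descFactorial q : ℕ) : MvPolynomial (Fin 2) A)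
      * (X 0 ^ ((i : ℕ) - p) * X 1 ^ (8 - (i : ℕ) - q)) := by
  unfold F8
  rw [itsum, itsum]
  refine Finset.sum_congr rfl fun i _ => ?_
  rw [it1, it0]
  simp
  ring

theorem itF4 (p q : ℕ) (a : Fin 5 → A) :
    (fun f => pderiv (0 : Fin 2) f)^[p] ((fun f => pderiv (1 : Fin 2) f)^[q] (F4 a)) =
    ∑ i : Fin 5, C (a i) * (((i : ℕ).descFactorial p * (4 - (i : ℕ)).descFactorial q : ℕ) : MvPolynomial (Fin 2) A)
      * (X 0 ^ ((i : ℕ) - p) * X 1 ^ (4 - (i : ℕ) - q)) := by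
  unfold F4
  rw [itsum, itsum]
  refine Finset.sum_congr rfl fun i _ => ?_
  rw [it1, it0]
  simp
  ring

theorem tPr (c d : Fin 5 → A) : tsum 4 (F4 c) (F4 d) = 48 * C (Pr c d) := by
  unfold tsum
  simp only [itF4, Finset.sum_range_succ, Finset.sum_range_zero, Fin.sum_univ_succ]
  simp [Pr, Nat.descFactorial, Nat.choose]
  simp only [map_ofNat]
  ring

theorem tH (c : Fin 5 → A) : tsum 2 (F4 c) (F4 c) = 6 * F4 (Hc c) := by
  unfold tsum
  simp only [itF4, Finset.sum_range_succ, Finset.sum_range_zero, Fin.sum_univ_succ]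
  simp [Hc, F4, Nat.descFactorial, Nat.choose, Fin.sum_univ_succ]
  simp only [map_ofNat]
  ring

theorem tM (a : Fin 9 → A) (c : Fin 5 → A) : tsum 4 (F8 a) (F4 c) = 144 * F4 (Mc a c) := by
  unfold tsum
  simp only [itF4, itF8, Finset.sum_range_succ, Finset.sum_range_zero, Fin.sum_univ_succ]
  simp [Mc, F4, Nat.descFactorial, Nat.choose, Fin.sum_univ_succ]
  simp only [map_ofNat]
  ring

theorem tK (a : Fin 9 → A) : tsum 6 (F8 a) (F8 a) = 518400 * F4 (Kc a) := by
  unfold tsum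
  simp only [itF8, Finset.sum_range_succ, Finset.sum_range_zero, Fin.sum_univ_succ]
  simp [Kc, F4, Nat.descFactorial, Nat.choose, Fin.sum_univ_succ]
  simp only [map_ofNat]
  ring

theorem tG (a : Fin 9 → A) : tsum 4 (F8 a) (F8 a) = 1440 * F8 (Gc a) := by
  unfold tsum
  simp only [itF8, Finset.sum_range_succ, Finset.sum_range_zero, Fin.sum_univ_succ]
  simp [Gc, F8, Nat.descFactorial, Nat.choose, Fin.sum_univ_succ]
  simp only [map_ofNat]
  ring

theorem tP8 (a b : Fin 9 → A) : tsum 8 (F8 a) (F8 b) = 5806080 * C (P8 a b) := by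
  unfold tsum
  simp only [itF8, Finset.sum_range_succ, Finset.sum_range_zero, Fin.sum_univ_succ]
  simp [P8, Nat.descFactorial, Nat.choose]
  simp only [map_ofNat]
  ring

theorem P8_2 (a : Fin 9 → A) : P8 a a = 2 * P2 a := by unfold P8 P2; ring
theorem P8_3 (a : Fin 9 → A) : P8 a (Gc a) = 12 * P3 a := by simp [P8, P3, Gc]; ring

end

end Oct

namespace Oct
section
variable {k : Type*} [Field k] [CharZero k]

theorem tv_eq (n m r : ℕ) : ∃ q : k, q ≠ 0 ∧ ∀ f g : MvPolynomial (Fin 2) (MvPolynomial (Fin 9) k),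
    transvectantA k (MvPolynomial (Fin 9) k) n m r f g = C (C q) * tsum r f g := by
  refine ⟨_, ?_, fun f g => rfl⟩
  apply div_ne_zero <;> exact Nat.cast_ne_zero.2 (Nat.mul_ne_zero (Nat.factorial_ne_zero _) (Nat.factorial_ne_zero _))

theorem tv_form (n m r N : ℕ) (hN : N ≠ 0) (f g h : MvPolynomial (Fin 2) (MvPolynomial (Fin 9) k))
    (ht : tsum r f g = (N : MvPolynomial (Fin 2) (MvPolynomial (Fin 9) k)) * h) (x y : k) (hx : x ≠ 0) (hy : y ≠ 0) :
    ∃ q : k, q ≠ 0 ∧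
      transvectantA k (MvPolynomial (Fin 9) k) n m r (C (C x) * f) (C (C y) * g) = C (C q) * h := by
  obtain ⟨q, hq, hqe⟩ := tv_eq (k := k) n m r
  refine ⟨q * (x * y) * N, ?_, ?_⟩
  · exact mul_ne_zero (mul_ne_zero hq (mul_ne_zero hx hy)) (Nat.cast_ne_zero.2 hN)
  · rw [hqe, tsumC, ht]
    simp only [map_mul, map_natCast]
    ring

theorem genOct_eq : genOct k = (C (C (1:k)) * F8 (X : Fin 9 → MvPolynomial (Fin 9) k) :
    MvPolynomial (Fin 2) (MvPolynomial (Fin 9) k)) := by simp [genOct, F8]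

theorem covk_eq : ∃ q : k, q ≠ 0 ∧ covkP k = C (C q) * F4 (Kc X) := by
  unfold covkP
  rw [genOct_eq]
  exact tv_form 8 8 6 518400 (by norm_num) _ _ _ (by exact_mod_cast tK _) _ _ one_ne_zero one_ne_zero

theorem covg_eq : ∃ q : k, q ≠ 0 ∧ covgP k = C (C q) * F8 (Gc X) := by
  unfold covgP
  rw [genOct_eq]
  exact tv_form 8 8 4 1440 (by norm_num) _ _ _ (by exact_mod_cast tG _) _ _ one_ne_zero one_ne_zero

theorem covh_eq : ∃ q : k, q ≠ 0 ∧ covhP k = C (C q) * F4 (Hc (Kc X)) := by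
  obtain ⟨x, hx, hx'⟩ := covk_eq (k := k)
  unfold covhP
  rw [hx']
  exact tv_form 4 4 2 6 (by norm_num) _ _ _ (by exact_mod_cast tH _) _ _ hx hx

theorem covm_eq : ∃ q : k, q ≠ 0 ∧ covmP k = C (C q) * F4 (Mc X (Kc X)) := by
  obtain ⟨x, hx, hx'⟩ := covk_eq (k := k)
  unfold covmP
  rw [hx', genOct_eq]
  exact tv_form 8 4 4 144 (by norm_num) _ _ _ (by exact_mod_cast tM _ _) _ _ one_ne_zero hx

theorem num_C (N : ℕ) (hN : N ≠ 0) (P p : MvPolynomial (Fin 9) k)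
    (h : ∃ q : k, q ≠ 0 ∧ P = C q * p) : ∃ q : k, q ≠ 0 ∧ (N : MvPolynomial (Fin 9) k) * P = C q * p := by
  obtain ⟨q, hq, rfl⟩ := h
  refine ⟨N * q, mul_ne_zero (Nat.cast_ne_zero.2 hN) hq, ?_⟩
  simp only [map_mul, map_natCast]
  ring

theorem cc_form (Q : MvPolynomial (Fin 2) (MvPolynomial (Fin 9) k)) (p : MvPolynomial (Fin 9) k)
    (h : ∃ q : k, q ≠ 0 ∧ Q = C (C q) * C p) : ∃ q : k, q ≠ 0 ∧ constantCoeff Q = C q * p := by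
  obtain ⟨q, hq, rfl⟩ := h
  exact ⟨q, hq, by simp⟩

theorem JP2_eq : ∃ q : k, q ≠ 0 ∧ JP2 k = C q * P2 X := by
  have h := num_C 140 (by norm_num) _ _ (cc_form _ _ (tv_form (k := k) 8 8 8 (5806080 * 2) (by norm_num) (F8 X) (F8 X) (C (P2 X))
    (by rw [tP8, P8_2]; push_cast; simp only [map_mul, map_ofNat]; ring) 1 1 one_ne_zero one_ne_zero))
  rw [← genOct_eq] at h
  obtain ⟨q, hq, h⟩ := h
  exact ⟨q, hq, by rw [← h]; unfold JP2; push_cast; norm_num⟩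

theorem JP3_eq : ∃ q : k, q ≠ 0 ∧ JP3 k = C q * P3 X := by
  obtain ⟨x, hx, hx'⟩ := covg_eq (k := k)
  have h := (cc_form _ _ (tv_form (k := k) 8 8 8 (5806080 * 12) (by norm_num) (F8 X) (F8 (Gc X)) (C (P3 X))
    (by rw [tP8, P8_3]; push_cast; simp only [map_mul, map_ofNat]; ring) 1 x one_ne_zero hx))
  rw [← genOct_eq, ← hx'] at h
  obtain ⟨q, hq, h⟩ := h
  refine ⟨(2 ^ 4 * 5 ^ 2 * 7 ^ 3 : k) / 3 * q, ?_, ?_⟩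
  · refine mul_ne_zero (by norm_num) hq
  · unfold JP3
    rw [h]
    simp only [map_mul]
    ring

theorem JPr_eq (N : ℕ) (hN : N ≠ 0) (c d : Fin 5 → MvPolynomial (Fin 9) k)
    (f g : MvPolynomial (Fin 2) (MvPolynomial (Fin 9) k))
    (hf : ∃ q : k, q ≠ 0 ∧ f = C (C q) * F4 c) (hg : ∃ q : k, q ≠ 0 ∧ g = C (C q) * F4 d) :
    ∃ q : k, q ≠ 0 ∧ (N : MvPolynomial (Fin 9) k) *
      constantCoeff (transvectantA k (MvPolynomial (Fin 9) k) 4 4 4 f g) = C q * Pr c d := by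
  obtain ⟨x, hx, rfl⟩ := hf
  obtain ⟨y, hy, rfl⟩ := hg
  exact num_C N hN _ _ (cc_form _ _ (tv_form (k := k) 4 4 4 48 (by norm_num) _ _ _
    (by exact_mod_cast tPr _ _) x y hx hy))

theorem JP4_eq : ∃ q : k, q ≠ 0 ∧ JP4 k = C q * P4 X := by
  obtain ⟨q, hq, h⟩ := JPr_eq (2 ^ 9 * 3 * 7 ^ 4) (by norm_num) _ _ _ _ (covk_eq (k := k)) covk_eq
  exact ⟨q, hq, by unfold P4; rw [← h]; unfold JP4; push_cast; ring⟩
theorem JP5_eq : ∃ q : k, q ≠ 0 ∧ JP5 k = C q * P5 X := by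
  obtain ⟨q, hq, h⟩ := JPr_eq (2 ^ 9 * 5 * 7 ^ 5) (by norm_num) _ _ _ _ (covm_eq (k := k)) covk_eq
  exact ⟨q, hq, by unfold P5; rw [← h]; unfold JP5; push_cast; ring⟩
theorem JP6_eq : ∃ q : k, q ≠ 0 ∧ JP6 k = C q * P6 X := by
  obtain ⟨q, hq, h⟩ := JPr_eq (2 ^ 14 * 3 ^ 2 * 7 ^ 6) (by norm_num) _ _ _ _ (covk_eq (k := k)) covh_eq
  exact ⟨q, hq, by unfold P6; rw [← h]; unfold JP6; push_cast; ring⟩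
theorem JP7_eq : ∃ q : k, q ≠ 0 ∧ JP7 k = C q * P7 X := by
  obtain ⟨q, hq, h⟩ := JPr_eq (2 ^ 14 * 3 * 5 * 7 ^ 7) (by norm_num) _ _ _ _ (covm_eq (k := k)) covh_eq
  exact ⟨q, hq, by unfold P7; rw [← h]; unfold JP7; push_cast; ring⟩

end

section
variable {k : Type*} [Field k]

/-- covariant coefficient vectors of degree 4 -/
structure Ev (D : Derivation k (MvPolynomial (Fin 9) k) (MvPolynomial (Fin 9) k))
    (c : Fin 5 → MvPolynomial (Fin 9) k) : Prop where
  h0 : D (c 0) = c 1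
  h1 : D (c 1) = 2 * c 2
  h2 : D (c 2) = 3 * c 3
  h3 : D (c 3) = 4 * c 4
  h4 : D (c 4) = 0

structure Fv (D : Derivation k (MvPolynomial (Fin 9) k) (MvPolynomial (Fin 9) k))
    (c : Fin 5 → MvPolynomial (Fin 9) k) : Prop where
  h0 : D (c 0) = 0
  h1 : D (c 1) = 4 * c 0
  h2 : D (c 2) = 3 * c 1
  h3 : D (c 3) = 2 * c 2
  h4 : D (c 4) = c 3

structure Ew (D : Derivation k (MvPolynomial (Fin 9) k) (MvPolynomial (Fin 9) k))
    (a : Fin 9 → MvPolynomial (Fin 9) k) : Prop where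
  h0 : D (a 0) = a 1
  h1 : D (a 1) = 2 * a 2
  h2 : D (a 2) = 3 * a 3
  h3 : D (a 3) = 4 * a 4
  h4 : D (a 4) = 5 * a 5
  h5 : D (a 5) = 6 * a 6
  h6 : D (a 6) = 7 * a 7
  h7 : D (a 7) = 8 * a 8
  h8 : D (a 8) = 0

structure Fw (D : Derivation k (MvPolynomial (Fin 9) k) (MvPolynomial (Fin 9) k))
    (a : Fin 9 → MvPolynomial (Fin 9) k) : Prop where
  h0 : D (a 0) = 0
  h1 : D (a 1) = 8 * a 0
  h2 : D (a 2) = 7 * a 1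
  h3 : D (a 3) = 6 * a 2
  h4 : D (a 4) = 5 * a 3
  h5 : D (a 5) = 4 * a 4
  h6 : D (a 6) = 3 * a 5
  h7 : D (a 7) = 2 * a 6
  h8 : D (a 8) = a 7

variable {D : Derivation k (MvPolynomial (Fin 9) k) (MvPolynomial (Fin 9) k)}
  {a : Fin 9 → MvPolynomial (Fin 9) k} {c d : Fin 5 → MvPolynomial (Fin 9) k}

theorem Pr_E (hc : Ev D c) (hd : Ev D d) : D (Pr c d) = 0 := by
  unfold Pr
  simp only [map_add, map_sub, Derivation.leibniz, derNum, smul_eq_mul, hc.h0, hc.h1, hc.h2, hc.h3, hc.h4,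
    hd.h0, hd.h1, hd.h2, hd.h3, hd.h4]
  ring

theorem Pr_F (hc : Fv D c) (hd : Fv D d) : D (Pr c d) = 0 := by
  unfold Pr
  simp only [map_add, map_sub, Derivation.leibniz, derNum, smul_eq_mul, hc.h0, hc.h1, hc.h2, hc.h3, hc.h4,
    hd.h0, hd.h1, hd.h2, hd.h3, hd.h4]
  ring

theorem H_E (hc : Ev D c) : Ev D (Hc c) := by
  constructor <;> simp only [Hc, Matrix.cons_val] <;>
  simp only [map_add, map_sub, Derivation.leibniz, Derivation.leibniz_pow, derNum, smul_eq_mul, nsmul_eq_mul,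
    hc.h0, hc.h1, hc.h2, hc.h3, hc.h4] <;> (try push_cast) <;> ring

theorem H_F (hc : Fv D c) : Fv D (Hc c) := by
  constructor <;> simp only [Hc, Matrix.cons_val] <;>
  simp only [map_add, map_sub, Derivation.leibniz, Derivation.leibniz_pow, derNum, smul_eq_mul, nsmul_eq_mul,
    hc.h0, hc.h1, hc.h2, hc.h3, hc.h4] <;> (try push_cast) <;> ring

theorem M_E (ha : Ew D a) (hc : Ev D c) : Ev D (Mc a c) := by
  constructor <;> simp only [Mc, Matrix.cons_val] <;>
  simp only [map_add, map_sub, Derivation.leibniz, Derivation.leibniz_pow, derNum, smul_eq_mul, nsmul_eq_mul,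
    hc.h0, hc.h1, hc.h2, hc.h3, hc.h4, ha.h0, ha.h1, ha.h2, ha.h3, ha.h4, ha.h5, ha.h6, ha.h7, ha.h8] <;> (try push_cast) <;> ring

theorem M_F (ha : Fw D a) (hc : Fv D c) : Fv D (Mc a c) := by
  constructor <;> simp only [Mc, Matrix.cons_val] <;>
  simp only [map_add, map_sub, Derivation.leibniz, Derivation.leibniz_pow, derNum, smul_eq_mul, nsmul_eq_mul,
    hc.h0, hc.h1, hc.h2, hc.h3, hc.h4, ha.h0, ha.h1, ha.h2, ha.h3, ha.h4, ha.h5, ha.h6, ha.h7, ha.h8] <;> (try push_cast) <;> ring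

theorem K_E (ha : Ew D a) : Ev D (Kc a) := by
  constructor <;> simp only [Kc, Matrix.cons_val] <;>
  simp only [map_add, map_sub, Derivation.leibniz, Derivation.leibniz_pow, derNum, smul_eq_mul, nsmul_eq_mul,
    ha.h0, ha.h1, ha.h2, ha.h3, ha.h4, ha.h5, ha.h6, ha.h7, ha.h8] <;> (try push_cast) <;> ring

theorem K_F (ha : Fw D a) : Fv D (Kc a) := by
  constructor <;> simp only [Kc, Matrix.cons_val] <;>
  simp only [map_add, map_sub, Derivation.leibniz, Derivation.leibniz_pow, derNum, smul_eq_mul, nsmul_eq_mul,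
    ha.h0, ha.h1, ha.h2, ha.h3, ha.h4, ha.h5, ha.h6, ha.h7, ha.h8] <;> (try push_cast) <;> ring

theorem P23_E (ha : Ew D a) : D (P2 a) = 0 ∧ D (P3 a) = 0 := by
  constructor <;> simp only [P2, P3] <;>
  simp only [map_add, map_sub, Derivation.leibniz, Derivation.leibniz_pow, derNum, smul_eq_mul, nsmul_eq_mul,
    ha.h0, ha.h1, ha.h2, ha.h3, ha.h4, ha.h5, ha.h6, ha.h7, ha.h8] <;> (try push_cast) <;> ring

theorem P23_F (ha : Fw D a) : D (P2 a) = 0 ∧ D (P3 a) = 0 := by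
  constructor <;> simp only [P2, P3] <;>
  simp only [map_add, map_sub, Derivation.leibniz, Derivation.leibniz_pow, derNum, smul_eq_mul, nsmul_eq_mul,
    ha.h0, ha.h1, ha.h2, ha.h3, ha.h4, ha.h5, ha.h6, ha.h7, ha.h8] <;> (try push_cast) <;> ring

theorem XE : Ew (dE k) X := ⟨dE0, dE1, dE2, dE3, dE4, dE5, dE6, dE7, dE8⟩
theorem XF : Fw (dF k) X := ⟨dF0, dF1, dF2, dF3, dF4, dF5, dF6, dF7, dF8⟩

end

end Oct

namespace Oct
section
variable {k : Type*} [Field k]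

theorem numH (n : ℕ) [n.AtLeastTwo] : (ofNat(n) : MvPolynomial (Fin 9) k).IsHomogeneous 0 := by
  have h : (ofNat(n) : MvPolynomial (Fin 9) k) = C (ofNat(n) : k) := (map_ofNat C n).symm
  rw [h]
  exact isHomogeneous_C _ _

theorem hm2 (N : ℕ) [N.AtLeastTwo] {p q : MvPolynomial (Fin 9) k} {m n : ℕ} (hp : p.IsHomogeneous m)
    (hq : q.IsHomogeneous n) : (ofNat(N) * p * q).IsHomogeneous (m + n) := by
  have h := ((numH (k := k) N).mul hp).mul hq
  rwa [zero_add] at h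

theorem hms (N : ℕ) [N.AtLeastTwo] {p : MvPolynomial (Fin 9) k} {m : ℕ} (hp : p.IsHomogeneous m) :
    (ofNat(N) * p ^ 2).IsHomogeneous (m + m) := by
  rw [pow_two, ← mul_assoc]
  exact hm2 N hp hp

theorem hadd {p q : MvPolynomial (Fin 9) k} {n : ℕ} (hp : p.IsHomogeneous n)
    (hq : q.IsHomogeneous n) : (p + q).IsHomogeneous n := hp.add hq

theorem hsub {p q : MvPolynomial (Fin 9) k} {n : ℕ} (hp : p.IsHomogeneous n)
    (hq : q.IsHomogeneous n) : (p - q).IsHomogeneous n := hp.sub hq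

theorem all5 {p : Fin 5 → Prop} (h0 : p 0) (h1 : p 1) (h2 : p 2) (h3 : p 3) (h4 : p 4) (j : Fin 5) : p j := by
  fin_cases j <;> assumption

theorem Kc_hom (j : Fin 5) : (Kc (X : Fin 9 → MvPolynomial (Fin 9) k) j).IsHomogeneous (1 + 1) := by
  refine all5 (p := fun j => (Kc (X : Fin 9 → MvPolynomial (Fin 9) k) j).IsHomogeneous _) ?_ ?_ ?_ ?_ ?_ j <;> simp only [Kc, Matrix.cons_val] <;>
  · repeat' first
      | with_reducible refine hadd ?_ ?_
      | with_reducible refine hsub ?_ ?_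
      | with_reducible exact hm2 _ (isHomogeneous_X _ _) (isHomogeneous_X _ _)
      | with_reducible exact hms _ (isHomogeneous_X _ _)

theorem Hc_hom (c : Fin 5 → MvPolynomial (Fin 9) k) (n : ℕ) (hc : ∀ j, (c j).IsHomogeneous n) (j : Fin 5) :
    (Hc c j).IsHomogeneous (n + n) := by
  refine all5 (p := fun j => (Hc c j).IsHomogeneous _) ?_ ?_ ?_ ?_ ?_ j <;> simp only [Hc, Matrix.cons_val] <;>
  · repeat' first
      | with_reducible refine hadd ?_ ?_
      | with_reducible refine hsub ?_ ?_
      | with_reducible exact hm2 _ (hc _) (hc _)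
      | with_reducible exact hms _ (hc _)

theorem Mc_hom (c : Fin 5 → MvPolynomial (Fin 9) k) (n : ℕ) (hc : ∀ j, (c j).IsHomogeneous n) (j : Fin 5) :
    (Mc X c j).IsHomogeneous (1 + n) := by
  refine all5 (p := fun j => (Mc X c j).IsHomogeneous _) ?_ ?_ ?_ ?_ ?_ j <;> simp only [Mc, Matrix.cons_val] <;>
  · repeat' first
      | with_reducible refine hadd ?_ ?_
      | with_reducible refine hsub ?_ ?_
      | with_reducible exact hm2 _ (isHomogeneous_X _ _) (hc _)

theorem Pr_hom (c d : Fin 5 → MvPolynomial (Fin 9) k) (m n : ℕ) (hc : ∀ j, (c j).IsHomogeneous m)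
    (hd : ∀ j, (d j).IsHomogeneous n) : (Pr c d).IsHomogeneous (m + n) := by
  unfold Pr
  repeat' first
      | with_reducible refine hadd ?_ ?_
      | with_reducible refine hsub ?_ ?_
      | with_reducible exact hm2 _ (hc _) (hd _)

theorem P2_hom : (P2 (X : Fin 9 → MvPolynomial (Fin 9) k)).IsHomogeneous (1 + 1) := by
  unfold P2
  repeat' first
      | with_reducible refine hadd ?_ ?_
      | with_reducible refine hsub ?_ ?_
      | with_reducible exact hm2 _ (isHomogeneous_X _ _) (isHomogeneous_X _ _)
      | with_reducible exact hms _ (isHomogeneous_X _ _)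

theorem P3_hom : (P3 (X : Fin 9 → MvPolynomial (Fin 9) k)).IsHomogeneous (1 + 1 + 1) := by
  have h : P3 (X : Fin 9 → MvPolynomial (Fin 9) k) =
    3920 * X 0 * X 4 * X 8 - 2450 * X 0 * X 5 * X 7 + 1050 * X 0 * X 6 * X 6 - 2450 * X 1 * X 3 * X 8
  + 735 * X 1 * X 4 * X 7 - 175 * X 1 * X 5 * X 6 + 1050 * X 2 * X 2 * X 8 - 175 * X 2 * X 3 * X 7
  - 110 * X 2 * X 4 * X 6 + 75 * X 2 * X 5 * X 5 + 75 * X 3 * X 3 * X 6 - 45 * X 3 * X 4 * X 5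
  + 12 * X 4 * X 4 * X 4 := by unfold P3; ring
  rw [h]
  repeat' first
      | with_reducible refine hadd ?_ ?_
      | with_reducible refine hsub ?_ ?_
      | with_reducible exact (hm2 _ (isHomogeneous_X _ _) (isHomogeneous_X _ _)).mul (isHomogeneous_X _ _)

theorem P4_hom : (P4 (X : Fin 9 → MvPolynomial (Fin 9) k)).IsHomogeneous 4 :=
  Pr_hom _ _ _ _ Kc_hom Kc_hom
theorem P5_hom : (P5 (X : Fin 9 → MvPolynomial (Fin 9) k)).IsHomogeneous 5 :=
  Pr_hom _ _ _ _ (Mc_hom _ _ Kc_hom) Kc_hom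
theorem P6_hom : (P6 (X : Fin 9 → MvPolynomial (Fin 9) k)).IsHomogeneous 6 :=
  Pr_hom _ _ _ _ Kc_hom (Hc_hom _ _ Kc_hom)
theorem P7_hom : (P7 (X : Fin 9 → MvPolynomial (Fin 9) k)).IsHomogeneous 7 :=
  Pr_hom _ _ _ _ (Mc_hom _ _ Kc_hom) (Hc_hom _ _ Kc_hom)

theorem ev_Kc (a : Fin 9 → k) : (fun j => eval a (Kc X j)) = Kc a := by
  funext j
  fin_cases j <;> simp [Kc]

theorem ev_Hc (a : Fin 9 → k) (c : Fin 5 → MvPolynomial (Fin 9) k) :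
    (fun j => eval a (Hc c j)) = Hc (fun j => eval a (c j)) := by
  funext j
  fin_cases j <;> simp [Hc]

theorem ev_Mc (a : Fin 9 → k) (c : Fin 5 → MvPolynomial (Fin 9) k) :
    (fun j => eval a (Mc X c j)) = Mc a (fun j => eval a (c j)) := by
  funext j
  fin_cases j <;> simp [Mc]

theorem ev_Pr (a : Fin 9 → k) (c d : Fin 5 → MvPolynomial (Fin 9) k) :
    eval a (Pr c d) = Pr (fun j => eval a (c j)) (fun j => eval a (d j)) := by
  simp [Pr]

theorem ev_P2 (a : Fin 9 → k) : eval a (P2 X) = P2 a := by simp [P2]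
theorem ev_P3 (a : Fin 9 → k) : eval a (P3 X) = P3 a := by simp [P3]
theorem ev_P4 (a : Fin 9 → k) : eval a (P4 X) = P4 a := by
  unfold P4; rw [ev_Pr, ev_Kc]
theorem ev_P5 (a : Fin 9 → k) : eval a (P5 X) = P5 a := by
  unfold P5; rw [ev_Pr, ev_Mc, ev_Kc]
theorem ev_P6 (a : Fin 9 → k) : eval a (P6 X) = P6 a := by
  unfold P6; rw [ev_Pr, ev_Hc, ev_Kc]
theorem ev_P7 (a : Fin 9 → k) : eval a (P7 X) = P7 a := by
  unfold P7; rw [ev_Pr, ev_Mc, ev_Hc, ev_Kc]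

variable [CharZero k]

theorem P2_mem : P2 X ∈ invariantRing k 8 := (mem_inv_iff _).2 ⟨(P23_E XE).1, (P23_F XF).1⟩
theorem P3_mem : P3 X ∈ invariantRing k 8 := (mem_inv_iff _).2 ⟨(P23_E XE).2, (P23_F XF).2⟩
theorem P4_mem : P4 X ∈ invariantRing k 8 :=
  (mem_inv_iff _).2 ⟨Pr_E (K_E XE) (K_E XE), Pr_F (K_F XF) (K_F XF)⟩
theorem P5_mem : P5 X ∈ invariantRing k 8 :=
  (mem_inv_iff _).2 ⟨Pr_E (M_E XE (K_E XE)) (K_E XE), Pr_F (M_F XF (K_F XF)) (K_F XF)⟩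
theorem P6_mem : P6 X ∈ invariantRing k 8 :=
  (mem_inv_iff _).2 ⟨Pr_E (K_E XE) (H_E (K_E XE)), Pr_F (K_F XF) (H_F (K_F XF))⟩
theorem P7_mem : P7 X ∈ invariantRing k 8 :=
  (mem_inv_iff _).2 ⟨Pr_E (M_E XE (K_E XE)) (H_E (K_E XE)), Pr_F (M_F XF (K_F XF)) (H_F (K_F XF))⟩

theorem ZZ_congr (a b : Fin 9 → k) (h : ∀ I ∈ invariantRing k 8, eval b I = eval a I) (hZ : ZZ a) : ZZ b := by
  obtain ⟨h2, h3, h4, h5, h6, h7⟩ := hZ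
  refine ⟨?_, ?_, ?_, ?_, ?_, ?_⟩
  · rw [← ev_P2, h _ P2_mem, ev_P2, h2]
  · rw [← ev_P3, h _ P3_mem, ev_P3, h3]
  · rw [← ev_P4, h _ P4_mem, ev_P4, h4]
  · rw [← ev_P5, h _ P5_mem, ev_P5, h5]
  · rw [← ev_P6, h _ P6_mem, ev_P6, h6]
  · rw [← ev_P7, h _ P7_mem, ev_P7, h7]

theorem wt_zero (I : MvPolynomial (Fin 9) k) (hI : I ∈ invariantRing k 8) (m : Fin 9 →₀ ℕ)
    (hm : coeff m I ≠ 0) : ∑ i, (m i : ℤ) * wt i = 0 := by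
  obtain ⟨hE, hF⟩ := (mem_inv_iff I).1 hI
  have hH : dH k I = 0 := by rw [← brEF, hE, hF, map_zero, map_zero, sub_zero]
  have h := isW_of_dH I hH hm
  rw [Finsupp.weight_apply, Finsupp.sum_fintype _ _ (by simp)] at h
  simpa using h

theorem ev_zero (I : MvPolynomial (Fin 9) k) (hI : I ∈ invariantRing k 8) (n : ℕ) (hn : 0 < n)
    (hh : I.IsHomogeneous n) (a : Fin 9 → k)
    (ha : ∀ m : Fin 9 →₀ ℕ, ∑ i, (m i : ℤ) * wt i = 0 → 0 < ∑ i, m i → ∃ i, m i ≠ 0 ∧ a i = 0) :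
    eval a I = 0 := by
  rw [eval_eq']
  refine Finset.sum_eq_zero fun m hm => ?_
  have hc := mem_support_iff.1 hm
  have hd := hh hc
  rw [Finsupp.weight_apply, Finsupp.sum_fintype _ _ (by simp)] at hd
  simp only [Pi.one_apply, smul_eq_mul, mul_one] at hd
  obtain ⟨i, h1, h2⟩ := ha m (wt_zero I hI m hc) (by omega)
  rw [Finset.prod_eq_zero (Finset.mem_univ i) (by rw [h2, zero_pow h1]), mul_zero]

def NN (k : Type*) [Field k] (a : Fin 9 → k) : Prop :=
  ∀ I ∈ invariantRing k 8, ∀ n : ℕ, 0 < n → I.IsHomogeneous n → eval a I = 0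

theorem goodNN : Good (NN k) where
  u := fun t a h I hI n hn hh => by rw [← ev_u I hI t a]; exact h I hI n hn hh
  v := fun t a h I hI n hn hh => by rw [← ev_v I hI t a]; exact h I hI n hn hh
  w := fun a h I hI n hn hh => by rw [← ev_w I hI a]; exact h I hI n hn hh
  lo := fun a h I hI n hn hh => by
    refine ev_zero I hI n hn hh a fun m h0 h1 => ?_
    by_contra hcon
    push Not at hcon
    have hz : ∀ i : Fin 9, 4 ≤ (i : ℕ) → m i = 0 := fun i hi => by
      by_contra hx
      exact hcon i hx (h i hi)
    have z4 := hz 4 (by decide)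
    have z5 := hz 5 (by decide)
    have z6 := hz 6 (by decide)
    have z7 := hz 7 (by decide)
    have z8 := hz 8 (by decide)
    simp [Fin.sum_univ_succ, wt] at h0 h1
    omega
  hi := fun a h I hI n hn hh => by
    refine ev_zero I hI n hn hh a fun m h0 h1 => ?_
    by_contra hcon
    push Not at hcon
    have hz : ∀ i : Fin 9, (i : ℕ) ≤ 4 → m i = 0 := fun i hi => by
      by_contra hx
      exact hcon i hx (h i hi)
    have z4 := hz 4 (by decide)
    have z5 := hz 0 (by decide)
    have z6 := hz 1 (by decide)
    have z7 := hz 2 (by decide)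
    have z8 := hz 3 (by decide)
    simp [Fin.sum_univ_succ, wt] at h0 h1
    omega

theorem nullF [IsAlgClosed k] (a : Fin 9 → k) (hZ : ZZ a) : NN k a :=
  nullMain goodNN (fun a t => ZZ_congr _ _ fun I hI => ev_u I hI t a)
    (fun a t => ZZ_congr _ _ fun I hI => ev_v I hI t a)
    (fun a => ZZ_congr _ _ fun I hI => ev_w I hI a) a hZ

theorem J_pack (J P : MvPolynomial (Fin 9) k) (h : ∃ q : k, q ≠ 0 ∧ J = C q * P) (hP : P ∈ invariantRing k 8)
    (n : ℕ) (hn : 0 < n) (hh : P.IsHomogeneous n) :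
    J ∈ invariantRing k 8 ∧ (∃ n, 0 < n ∧ J.IsHomogeneous n) ∧ ∀ a, eval a J = 0 → eval a P = 0 := by
  obtain ⟨q, hq, rfl⟩ := h
  refine ⟨Subalgebra.mul_mem _ (Subalgebra.algebraMap_mem _ q) hP, ⟨n, hn, ?_⟩, fun a h => ?_⟩
  · have := (isHomogeneous_C (Fin 9) q).mul hh
    rwa [zero_add] at this
  · rw [map_mul, eval_C] at h
    exact (mul_eq_zero.1 h).resolve_left hq

theorem final [IsAlgClosed k] :
    ∃ T : Finset (MvPolynomial (Fin 9) k),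
      (T : Set (MvPolynomial (Fin 9) k)) ⊆
          (invariantRing k 8 : Set (MvPolynomial (Fin 9) k)) ∧
      ∀ x ∈ invariantRing k 8,
        x ∈ Submodule.span
          (Algebra.adjoin k {JP2 k, JP3 k, JP4 k, JP5 k, JP6 k, JP7 k})
          (T : Set (MvPolynomial (Fin 9) k)) := by
  classical
  obtain ⟨m2, d2, e2⟩ := J_pack (JP2 k) _ JP2_eq P2_mem _ (by norm_num) P2_hom
  obtain ⟨m3, d3, e3⟩ := J_pack (JP3 k) _ JP3_eq P3_mem _ (by norm_num) P3_hom
  obtain ⟨m4, d4, e4⟩ := J_pack (JP4 k) _ JP4_eq P4_mem _ (by norm_num) P4_hom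
  obtain ⟨m5, d5, e5⟩ := J_pack (JP5 k) _ JP5_eq P5_mem _ (by norm_num) P5_hom
  obtain ⟨m6, d6, e6⟩ := J_pack (JP6 k) _ JP6_eq P6_mem _ (by norm_num) P6_hom
  obtain ⟨m7, d7, e7⟩ := J_pack (JP7 k) _ JP7_eq P7_mem _ (by norm_num) P7_hom
  have key := partA (invariantRing k 8) (fun x hx n => inv_comp x hx n)
    (fun G hG x hx hxG => by
      obtain ⟨c, hc, h⟩ := split G (fun g hg => (mem_inv_iff g).1 (hG g hg)) x ((mem_inv_iff x).1 hx) hxG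
      exact ⟨c, fun g => (mem_inv_iff _).2 (hc g), h⟩)
    {JP2 k, JP3 k, JP4 k, JP5 k, JP6 k, JP7 k}
    (by
      intro j hj
      simp only [Finset.mem_insert, Finset.mem_singleton] at hj
      rcases hj with rfl | rfl | rfl | rfl | rfl | rfl
      · exact m2
      · exact m3
      · exact m4
      · exact m5
      · exact m6
      · exact m7)
    (by
      intro j hj
      simp only [Finset.mem_insert, Finset.mem_singleton] at hj
      rcases hj with rfl | rfl | rfl | rfl | rfl | rfl
      · exact d2
      · exact d3
      · exact d4
      · exact d5
      · exact d6
      · exact d7)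
    (by
      intro a ha
      refine nullF a ⟨?_, ?_, ?_, ?_, ?_, ?_⟩
      · rw [← ev_P2]; exact e2 a (ha _ (by simp))
      · rw [← ev_P3]; exact e3 a (ha _ (by simp))
      · rw [← ev_P4]; exact e4 a (ha _ (by simp))
      · rw [← ev_P5]; exact e5 a (ha _ (by simp))
      · rw [← ev_P6]; exact e6 a (ha _ (by simp))
      · rw [← ev_P7]; exact e7 a (ha _ (by simp)))
  have gen : ∀ S : Set (MvPolynomial (Fin 9) k),
      (({JP2 k, JP3 k, JP4 k, JP5 k, JP6 k, JP7 k} : Finset (MvPolynomial (Fin 9) k)) : Set _) = S →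
      ∃ T : Finset (MvPolynomial (Fin 9) k),
        (T : Set (MvPolynomial (Fin 9) k)) ⊆ (invariantRing k 8 : Set (MvPolynomial (Fin 9) k)) ∧
        ∀ x ∈ invariantRing k 8,
          x ∈ Submodule.span (Algebra.adjoin k S) (T : Set (MvPolynomial (Fin 9) k)) := by
    rintro _ rfl
    exact key
  exact gen _ (by simp only [Finset.coe_insert, Finset.coe_singleton])

end

end Oct

/-- The ring `R_8` of `SL₂(k)`-invariants of binary octavics is finitely generated as a
module over its subalgebra `k[J_2, J_3, J_4, J_5, J_6, J_7]`. -/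
theorem invariantRing_octavics_module_fg (k : Type*) [Field k] [IsAlgClosed k] [CharZero k] :
    ∃ T : Finset (MvPolynomial (Fin 9) k),
      (T : Set (MvPolynomial (Fin 9) k)) ⊆
          (invariantRing k 8 : Set (MvPolynomial (Fin 9) k)) ∧
      ∀ x ∈ invariantRing k 8,
        x ∈ Submodule.span
          (Algebra.adjoin k {JP2 k, JP3 k, JP4 k, JP5 k, JP6 k, JP7 k})
          (T : Set (MvPolynomial (Fin 9) k)) := by
  exact Oct.final
end
end
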